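/- Let G be a finitely generated co-Hopfian virtually free group with Out(G) finite. Then G is strongly co-Hopfian: there exists a finite subset F of G \ {1} such that every group endomorphism φ of G with φ(f) ≠ 1 for all f ∈ F is an automorphism of G (bijective). -/

import Mathlib

open FirstOrder Language

/-- Function symbols of the first-order language of groups:
a binary multiplication, a unary inverse and a constant for the identity. -/
inductive GroupFunc : ℕ → Type
  | mul : GroupFunc 2
  | inv : GroupFunc 1
  | one : GroupFunc 0

/-- The first-order language of groups. -/
def groupLang : FirstOrder.Language :=
  { Functions := GroupFunc
    Relations := fun _ => Empty }

/-- Every group is a structure for the language of groups in the natural way. -/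
instance groupLangStructure (G : Type*) [Group G] : groupLang.Structure G where
  funMap {n} f v :=
    match f with
    | .mul => v 0 * v 1
    | .inv => (v 0)⁻¹
    | .one => 1
  RelMap {n} r _ := r.elim

/-- Existential formulas: iterated existential quantifications of a
quantifier-free formula. -/
inductive IsExistentialQF {α : Type*} : ∀ {n : ℕ}, groupLang.BoundedFormula α n → Prop
  | of_isQF {n : ℕ} {φ : groupLang.BoundedFormula α n} (h : φ.IsQF) : IsExistentialQF φ
  | ex {n : ℕ} {φ : groupLang.BoundedFormula α (n + 1)} (h : IsExistentialQF φ) :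
      IsExistentialQF φ.ex

/-- Universal formulas: iterated universal quantifications of a
quantifier-free formula. -/
inductive IsUniversalQF {α : Type*} : ∀ {n : ℕ}, groupLang.BoundedFormula α n → Prop
  | of_isQF {n : ℕ} {φ : groupLang.BoundedFormula α n} (h : φ.IsQF) : IsUniversalQF φ
  | all {n : ℕ} {φ : groupLang.BoundedFormula α (n + 1)} (h : IsUniversalQF φ) :
      IsUniversalQF φ.all

/-- ∀∃-formulas: iterated universal quantifications of an existential formula. -/
inductive IsAE {α : Type*} : ∀ {n : ℕ}, groupLang.BoundedFormula α n → Prop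
  | of_existential {n : ℕ} {φ : groupLang.BoundedFormula α n} (h : IsExistentialQF φ) : IsAE φ
  | all {n : ℕ} {φ : groupLang.BoundedFormula α (n + 1)} (h : IsAE φ) : IsAE φ.all

/-- A group is virtually free if it has a free subgroup of finite index. -/
def VirtuallyFree (G : Type*) [Group G] : Prop :=
  ∃ H : Subgroup G, H.FiniteIndex ∧ Nonempty (IsFreeGroup H)

/-- A group is co-Hopfian if every injective endomorphism is surjective. -/
def CoHopfian (G : Type*) [Group G] : Prop :=
  ∀ φ : G →* G, Function.Injective φ → Function.Surjective φ

/-- Two homomorphisms `φ, φ' : G → G'` are equivalent if they coincide up to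
conjugation on every finite subgroup of `G`. -/
def HomEquiv {G G' : Type*} [Group G] [Group G'] (φ φ' : G →* G') : Prop :=
  ∀ H : Subgroup G, (H : Set G).Finite →
    ∃ g' : G', ∀ h ∈ H, φ' h = g' * φ h * g'⁻¹

/-- Two groups are ∀∃-equivalent if they satisfy the same ∀∃-sentences. -/
def AEEquivalent (G : Type*) (G' : Type*) [Group G] [Group G'] : Prop :=
  ∀ φ : groupLang.Sentence, IsAE φ → (G ⊨ φ ↔ G' ⊨ φ)

/-- Two groups are ∃-equivalent if they satisfy the same existential sentences. -/
def ExistentiallyEquivalent (G : Type*) (G' : Type*) [Group G] [Group G'] : Prop :=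
  ∀ φ : groupLang.Sentence, IsExistentialQF φ → (G ⊨ φ ↔ G' ⊨ φ)

/-- An endomorphism is rigid-testing: `G` is rigid if every endomorphism
equivalent to the identity is an automorphism. -/
def Rigid (G : Type*) [Group G] : Prop :=
  ∀ φ : G →* G, HomEquiv φ (MonoidHom.id G) → Function.Bijective φ

/-- `Out G` is finite, expressed as: the inner automorphisms form a finite index
subgroup of `Aut G`. -/
def OutFinite (G : Type*) [Group G] : Prop :=
  (MulAut.conj : G →* MulAut G).range.FiniteIndex

/-- Iterated composition of an endomorphism. -/
def homPow {G : Type*} [Group G] (φ : G →* G) : ℕ → (G →* G)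
  | 0 => MonoidHom.id G
  | n + 1 => φ.comp (homPow φ n)

/-- An endomorphism `φ` of `G` is class-permuting if some positive power of `φ`
is equivalent to the identity of `G`. -/
def ClassPermuting {G : Type*} [Group G] (φ : G →* G) : Prop :=
  ∃ n : ℕ, 1 ≤ n ∧ HomEquiv (homPow φ n) (MonoidHom.id G)

/-- A maximal finite subgroup: a finite subgroup maximal with respect to
inclusion among finite subgroups. -/
def MaximalFiniteSubgroup {G : Type*} [Group G] (A : Subgroup G) : Prop :=
  (A : Set G).Finite ∧ ∀ B : Subgroup G, (B : Set G).Finite → A ≤ B → A = B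

/-- Two subgroups are conjugate. -/
def SubgroupConj {G : Type*} [Group G] (A B : Subgroup G) : Prop :=
  ∃ g : G, B = A.map (MulAut.conj g).toMonoidHom

/-- A group is strongly co-Hopfian if there is a finite subset `F` of
`G \ {1}` such that every endomorphism whose kernel misses `F` is an
automorphism. -/
def StronglyCoHopfian (G : Type*) [Group G] : Prop :=
  ∃ F : Finset G, (1 : G) ∉ F ∧
    ∀ φ : G →* G, (∀ f ∈ F, φ f ≠ 1) → Function.Bijective φ

/-- A group is finitely presented. -/
def GroupFinitelyPresented (G : Type*) [Group G] : Prop :=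
  ∃ (n : ℕ) (rels : Finset (FreeGroup (Fin n))),
    Nonempty (PresentedGroup (rels : Set (FreeGroup (Fin n))) ≃* G)

/-! ### Part 1 -/

namespace VF
open Set

theorem exists_min {α : Type*} (s : Set α) (hs : s.Nonempty) (f : α → ℕ) :
    ∃ a ∈ s, ∀ b ∈ s, f a ≤ f b := by
  obtain ⟨a, ha, h⟩ := (measure f).wf.has_min s hs
  exact ⟨a, ha, fun b hb => not_lt.1 (h b hb)⟩

section Cuts
variable {X : Type*} (E : Set (X × X))

/-- Edge boundary of a set of vertices. -/
def bd (A : Set X) : Set (X × X) := {p | p ∈ E ∧ p.1 ∈ A ∧ p.2 ∉ A}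

/-- Weight of a cut. -/
noncomputable def wt (A : Set X) : ℕ := (bd E A).ncard

variable {E}

theorem bd_compl (hs : ∀ p ∈ E, p.swap ∈ E) (A : Set X) :
    bd E Aᶜ = Prod.swap '' bd E A := by
  ext ⟨x, y⟩
  simp only [bd, mem_compl_iff, not_not, mem_ofPred_eq, mem_image, Prod.exists, Prod.swap_prod_mk,
    Prod.mk.injEq]
  constructor
  · rintro ⟨h1, h2, h3⟩
    exact ⟨y, x, ⟨hs _ h1, h3, h2⟩, rfl, rfl⟩
  · rintro ⟨a, b, ⟨h1, h2, h3⟩, rfl, rfl⟩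
    exact ⟨hs _ h1, h3, h2⟩

theorem bd_compl_finite (hs : ∀ p ∈ E, p.swap ∈ E) {A : Set X} (h : (bd E A).Finite) :
    (bd E Aᶜ).Finite := by
  rw [bd_compl hs]; exact h.image _

theorem wt_compl (hs : ∀ p ∈ E, p.swap ∈ E) (A : Set X) : wt E Aᶜ = wt E A := by
  rw [wt, wt, bd_compl hs]
  exact Set.ncard_image_of_injective _ Prod.swap_injective

theorem bd_inter_union_sub (A B : Set X) : bd E (A ∩ B) ∪ bd E (A ∪ B) ⊆ bd E A ∪ bd E B := by
  rintro ⟨x, y⟩; simp only [bd, mem_union, mem_ofPred_eq, mem_inter_iff]; tauto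

theorem bd_inter_finite {A B : Set X} (hA : (bd E A).Finite) (hB : (bd E B).Finite) :
    (bd E (A ∩ B)).Finite :=
  (hA.union hB).subset (subset_union_left.trans (bd_inter_union_sub A B))

theorem submod {A B : Set X} (hA : (bd E A).Finite) (hB : (bd E B).Finite) :
    wt E (A ∩ B) + wt E (A ∪ B) ≤ wt E A + wt E B := by
  have h1 := bd_inter_union_sub (E := E) A B
  have h2 : bd E (A ∩ B) ∩ bd E (A ∪ B) ⊆ bd E A ∩ bd E B := by
    rintro ⟨x, y⟩; simp only [bd, mem_union, mem_ofPred_eq, mem_inter_iff]; tauto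
  have f := (hA.union hB).subset h1
  unfold wt
  rw [← Set.ncard_union_add_ncard_inter _ _ (f.subset subset_union_left)
    (f.subset subset_union_right), ← Set.ncard_union_add_ncard_inter _ _ hA hB]
  exact Nat.add_le_add (Set.ncard_le_ncard h1 (hA.union hB))
    (Set.ncard_le_ncard h2 (hA.inter_of_left _))

/-- `A` separates the pair of ultrafilters. -/
def sep (A : Set X) (p : Ultrafilter X × Ultrafilter X) : Prop := ¬ (A ∈ p.1 ↔ A ∈ p.2)

theorem sep_compl {A : Set X} {p : Ultrafilter X × Ultrafilter X} : sep Aᶜ p ↔ sep A p := by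
  simp only [sep, Ultrafilter.compl_mem_iff_notMem]; tauto

theorem um_inter {A B : Set X} {p : Ultrafilter X} : A ∩ B ∈ p ↔ A ∈ p ∧ B ∈ p :=
  Filter.inter_mem_iff

variable (E) in
/-- `A` is a cut of minimal weight separating `p`. -/
def Cmin (p : Ultrafilter X × Ultrafilter X) (A : Set X) : Prop :=
  (bd E A).Finite ∧ sep A p ∧ ∀ B, (bd E B).Finite → sep B p → wt E A ≤ wt E B

theorem Cmin.compl (hs : ∀ p ∈ E, p.swap ∈ E) {p} {A : Set X} (h : Cmin E p A) :
    Cmin E p Aᶜ :=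
  ⟨bd_compl_finite hs h.1, sep_compl.2 h.2.1, by rw [wt_compl hs]; exact h.2.2⟩

variable (E) in
/-- Connectedness of a vertex set. -/
def Conn (A : Set X) : Prop :=
  ∀ A1 ⊆ A, A1.Nonempty → A1 ≠ A → ∃ e ∈ E, e.1 ∈ A1 ∧ e.2 ∈ A ∧ e.2 ∉ A1

theorem Cmin.conn (hs : ∀ p ∈ E, p.swap ∈ E) (hc : ∀ A, bd E A = ∅ → A = ∅ ∨ A = univ)
    {p} {A : Set X} (h : Cmin E p A) : Conn E A := by
  intro A1 hA1 hne hneq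
  by_contra hcon
  push Not at hcon
  have hu : ∀ B : Set X, B.Nonempty → B ⊆ A → B ≠ A → (bd E B).Nonempty := by
    intro B hB hBA hBne
    by_contra h0
    rcases hc B (not_nonempty_iff_eq_empty.1 h0) with h1 | h1
    · exact hB.ne_empty h1
    · exact hBne (subset_antisymm hBA (h1 ▸ subset_univ A))
  have hn1 := hu A1 hne hA1 hneq
  have hn2 := hu (A \ A1) (by
    rw [sdiff_nonempty]; exact fun h => hneq (subset_antisymm hA1 h)) sdiff_subset (by
    intro h
    obtain ⟨x, hx⟩ := hne
    have : x ∈ A \ A1 := by rw [h]; exact hA1 hx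
    exact this.2 hx)
  have hun : bd E A1 ∪ bd E (A \ A1) = bd E A := by
    ext ⟨x, y⟩
    simp only [bd, mem_union, mem_ofPred_eq, mem_sdiff]
    have a1 := hcon (x, y)
    have a2 := hcon (y, x)
    have a3 := hs (x, y)
    have a4 := @hA1 x
    have a5 := @hA1 y
    simp only [Prod.swap_prod_mk] at a1 a2 a3
    tauto
  have hdis : Disjoint (bd E A1) (bd E (A \ A1)) := by
    rw [Set.disjoint_left]
    rintro ⟨x, y⟩
    simp only [bd, mem_ofPred_eq, mem_sdiff]; tauto
  have f1 := h.1.subset (hun ▸ subset_union_left)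
  have f2 := h.1.subset (hun ▸ subset_union_right)
  have hw : wt E A1 + wt E (A \ A1) = wt E A := by
    unfold wt; rw [← hun, Set.ncard_union_eq hdis f1 f2]
  have p1 : 0 < wt E A1 := (Set.ncard_pos f1).2 hn1
  have p2 : 0 < wt E (A \ A1) := (Set.ncard_pos f2).2 hn2
  have k1 := h.2.2 A1 f1
  have k2 := h.2.2 _ f2
  have hAu : A = A1 ∪ (A \ A1) := (union_sdiff_cancel hA1).symm
  have hm : ∀ q : Ultrafilter X, A ∈ q ↔ (A1 ∈ q ∨ A \ A1 ∈ q) := by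
    intro q
    rw [← Ultrafilter.union_mem_iff, ← hAu]
  have hm2 : ∀ q : Ultrafilter X, ¬ (A1 ∈ q ∧ A \ A1 ∈ q) := by
    intro q hq
    have := um_inter.2 hq
    rw [inter_sdiff_self] at this
    exact Ultrafilter.empty_notMem this
  have hsep := h.2.1
  have s1 : ¬ sep A1 p := fun h => by have := k1 h; omega
  have s2 : ¬ sep (A \ A1) p := fun h => by have := k2 h; omega
  simp only [sep, hm] at hsep s1 s2
  tauto

theorem cuts_finite (u v : X) (k : ℕ) :
    {A : Set X | (bd E A).Finite ∧ wt E A ≤ k ∧ Conn E A ∧ Conn E Aᶜ ∧ u ∈ A ∧ v ∉ A}.Finite := by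
  by_contra hinf
  set s := {A : Set X | (bd E A).Finite ∧ wt E A ≤ k ∧ Conn E A ∧ Conn E Aᶜ ∧ u ∈ A ∧ v ∉ A}
    with hsdef
  have hi : s.Infinite := hinf
  haveI := hi.to_subtype
  let U : Ultrafilter s := Filter.hyperfilter s
  let a : Set X := {x | ∀ᶠ A : s in (U : Filter s), x ∈ (A : Set X)}
  have agree : ∀ x, ∀ᶠ A : s in (U : Filter s), (x ∈ (A : Set X) ↔ x ∈ a) := by
    intro x
    by_cases hx : x ∈ a
    · have : ∀ᶠ A : s in (U : Filter s), x ∈ (A : Set X) := hx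
      filter_upwards [this] with A hA
      simp [hA, hx]
    · have : ∀ᶠ A : s in (U : Filter s), x ∉ (A : Set X) := Ultrafilter.eventually_not.2 hx
      filter_upwards [this] with A hA
      simp [hA, hx]
  have agreeT : ∀ T : Set (X × X), T.Finite → ∀ᶠ A : s in (U : Filter s), ∀ e ∈ T,
      (e.1 ∈ (A : Set X) ↔ e.1 ∈ a) ∧ (e.2 ∈ (A : Set X) ↔ e.2 ∈ a) := by
    intro T hT
    rw [Filter.eventually_all_finite hT]
    intro e _
    exact (agree e.1).and (agree e.2)
  have hbd : (bd E a).Finite := by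
    by_contra hbi
    obtain ⟨T, hT, hTc⟩ := Set.Infinite.exists_subset_card_eq (s := bd E a) hbi (k + 1)
    obtain ⟨A, hA⟩ := (agreeT T T.finite_toSet).exists
    have hAs : (A : Set X) ∈ s := A.2
    have : (T : Set (X × X)) ⊆ bd E (A : Set X) := by
      intro e he
      have h1 := hT he
      have h2 := hA e he
      exact ⟨h1.1, h2.1.2 h1.2.1, fun h => h1.2.2 (h2.2.1 h)⟩
    have := Set.ncard_le_ncard this hAs.1
    rw [Set.ncard_coe_finset] at this
    have := hAs.2.1
    unfold wt at this
    omega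
  have hua : u ∈ a := Filter.Eventually.of_forall (fun A => A.2.2.2.2.2.1)
  have hva : v ∉ a := by
    intro h
    have h : ∀ᶠ A : s in (U : Filter s), v ∈ (A : Set X) := h
    obtain ⟨A, hA⟩ := h.exists
    exact A.2.2.2.2.2.2 hA
  have heq : ∀ᶠ A : s in (U : Filter s), (A : Set X) = a := by
    filter_upwards [agreeT _ hbd, agreeT _ (hbd.image Prod.swap)] with A hA hA'
    obtain ⟨-, -, c1, c2, uA, vA⟩ := A.2
    apply subset_antisymm
    · by_contra hnot
      obtain ⟨e, he, h1, h2, h3⟩ := c1 ((A : Set X) ∩ a) inter_subset_left ⟨u, uA, hua⟩ (by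
        intro h; exact hnot (inter_eq_left.1 h))
      have h3' : e.2 ∉ a := fun h => h3 ⟨h2, h⟩
      exact h3' ((hA e ⟨he, h1.2, h3'⟩).2.1 h2)
    · by_contra hnot
      obtain ⟨e, he, h1, h2, h3⟩ := c2 ((A : Set X)ᶜ ∩ a) inter_subset_left (by
        obtain ⟨x, hx, hx'⟩ := not_subset.1 hnot
        exact ⟨x, hx', hx⟩) (by
        intro h
        have h4 := inter_eq_left.1 h
        exact hva (h4 vA))
      have h3' : e.2 ∉ a := fun h => h3 ⟨h2, h⟩
      exact h1.1 ((hA e ⟨he, h1.2, h3'⟩).1.2 h1.2)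
  obtain ⟨A0, hA0⟩ := heq.exists
  have : ∀ᶠ A : s in (U : Filter s), A = A0 := by
    filter_upwards [heq] with A hA
    exact Subtype.ext (hA.trans hA0.symm)
  exact Filter.notMem_hyperfilter_of_finite (Set.finite_singleton A0) this

/-- Two sets are nested. -/
def Nested (A D : Set X) : Prop := A ⊆ D ∨ A ⊆ Dᶜ ∨ Aᶜ ⊆ D ∨ Aᶜ ⊆ Dᶜ

theorem nested_comm {A D : Set X} (h : Nested A D) : Nested D A := by
  rcases h with h | h | h | h
  · exact Or.inr (Or.inr (Or.inr (compl_subset_compl.2 h)))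
  · exact Or.inr (Or.inl (subset_compl_comm.1 h))
  · exact Or.inr (Or.inr (Or.inl (compl_subset_comm.1 h)))
  · exact Or.inl (compl_subset_compl.1 h)

theorem nested_compl {A D : Set X} : Nested A Dᶜ ↔ Nested A D := by
  simp only [Nested, _root_.compl_compl]; tauto

theorem nested_compl_left {A D : Set X} : Nested Aᶜ D ↔ Nested A D := by
  simp only [Nested, _root_.compl_compl]; tauto

variable (Q : Set (Ultrafilter X × Ultrafilter X))

variable (E) in
/-- All minimal cuts. -/
def MC : Set (Set X) := {D | ∃ p ∈ Q, Cmin E p D}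

variable (E) in
/-- Minimal cuts not nested with `A`. -/
def NN (A : Set X) : Set (Set X) := {D | D ∈ MC E Q ∧ ¬ Nested A D}

variable {Q}

theorem NN_finite (hs : ∀ p ∈ E, p.swap ∈ E) (hc : ∀ A, bd E A = ∅ → A = ∅ ∨ A = univ)
    (k : ℕ) (hk : ∀ D ∈ MC E Q, wt E D ≤ k) {A : Set X} (hA : (bd E A).Finite) :
    (NN E Q A).Finite := by
  have : NN E Q A ⊆ ⋃ e ∈ bd E A, ⋃ e' ∈ bd E A, {B : Set X | (bd E B).Finite ∧ wt E B ≤ k ∧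
      Conn E B ∧ Conn E Bᶜ ∧ e.1 ∈ B ∧ e'.1 ∉ B} := by
    rintro D ⟨⟨p, hp, hD⟩, hn⟩
    simp only [Nested, not_or, not_subset] at hn
    obtain ⟨⟨x1, h1, h1'⟩, ⟨x2, h2, h2'⟩, ⟨x3, h3, h3'⟩, ⟨x4, h4, h4'⟩⟩ := hn
    simp only [mem_compl_iff, not_not] at h2' h3 h4 h4'
    have cD := hD.conn hs hc
    have cD' := (hD.compl hs).conn hs hc
    obtain ⟨e, he, e1, e2, e3⟩ := cD (D ∩ A) inter_subset_left ⟨x2, h2', h2⟩ (by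
      intro h; exact h4 (inter_eq_left.1 h h4'))
    obtain ⟨f, hf, f1, f2, f3⟩ := cD' (Dᶜ ∩ A) inter_subset_left ⟨x1, h1', h1⟩ (by
      intro h; exact h3 (inter_eq_left.1 h h3'))
    simp only [mem_iUnion]
    exact ⟨e, ⟨he, e1.2, fun h => e3 ⟨e2, h⟩⟩, f, ⟨hf, f1.2, fun h => f3 ⟨f2, h⟩⟩, hD.1,
      hk D ⟨p, hp, hD⟩, cD, cD', e1.1, f1.1⟩
  refine Set.Finite.subset ?_ this
  refine hA.biUnion fun e _ => hA.biUnion fun e' _ => cuts_finite _ _ _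

variable (E Q) in
/-- Optimal cuts. -/
def Opt (p : Ultrafilter X × Ultrafilter X) (A : Set X) : Prop :=
  Cmin E p A ∧ ∀ B, Cmin E p B → (NN E Q A).ncard ≤ (NN E Q B).ncard

theorem NN_compl (A : Set X) : NN E Q Aᶜ = NN E Q A := by
  ext D; simp only [NN, mem_ofPred_eq, nested_compl_left]

theorem Opt.compl (hs : ∀ p ∈ E, p.swap ∈ E) {p} {A : Set X} (h : Opt E Q p A) :
    Opt E Q p Aᶜ :=
  ⟨h.1.compl hs, by rw [NN_compl]; exact h.2⟩

theorem exists_opt {p} (h : ∃ A, (bd E A).Finite ∧ sep A p) : ∃ A, Opt E Q p A := by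
  obtain ⟨A, hA, hm⟩ := exists_min {A | (bd E A).Finite ∧ sep A p} h (wt E)
  obtain ⟨B, hB, hm'⟩ := exists_min {A | Cmin E p A}
    ⟨A, hA.1, hA.2, fun B h1 h2 => hm B ⟨h1, h2⟩⟩ (fun A => (NN E Q A).ncard)
  exact ⟨B, hB, hm'⟩

theorem corner_lt (hs : ∀ p ∈ E, p.swap ∈ E) (hc : ∀ A, bd E A = ∅ → A = ∅ ∨ A = univ)
    (k : ℕ) (hk : ∀ D ∈ MC E Q, wt E D ≤ k) {C D : Set X} (hC : (bd E C).Finite)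
    (hD : (bd E D).Finite) (hCm : C ∈ MC E Q) (hn : ¬ Nested C D) :
    (NN E Q (C ∩ D)).ncard + (NN E Q (Cᶜ ∩ Dᶜ)).ncard < (NN E Q C).ncard + (NN E Q D).ncard := by
  have fC := NN_finite hs hc k hk hC
  have fD := NN_finite hs hc k hk hD
  have fE := NN_finite hs hc k hk (bd_inter_finite hC hD)
  have fE' := NN_finite hs hc k hk (bd_inter_finite (bd_compl_finite hs hC) (bd_compl_finite hs hD))
  have both : ∀ H, Nested C H → Nested D H → Nested (C ∩ D) H ∧ Nested (Cᶜ ∩ Dᶜ) H := by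
    intro H h1 h2
    simp only [Nested, subset_def, mem_compl_iff, mem_inter_iff] at *
    grind
  have one : ∀ H, Nested C H → Nested (C ∩ D) H ∨ Nested (Cᶜ ∩ Dᶜ) H := by
    intro H h1
    rcases h1 with h | h | h | h
    · exact Or.inl (Or.inl (inter_subset_left.trans h))
    · exact Or.inl (Or.inr (Or.inl (inter_subset_left.trans h)))
    · exact Or.inr (Or.inl (inter_subset_left.trans h))
    · exact Or.inr (Or.inr (Or.inl (inter_subset_left.trans h)))
  have one' : ∀ H, Nested D H → Nested (C ∩ D) H ∨ Nested (Cᶜ ∩ Dᶜ) H := by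
    intro H h1
    rcases h1 with h | h | h | h
    · exact Or.inl (Or.inl (inter_subset_right.trans h))
    · exact Or.inl (Or.inr (Or.inl (inter_subset_right.trans h)))
    · exact Or.inr (Or.inl (inter_subset_right.trans h))
    · exact Or.inr (Or.inr (Or.inl (inter_subset_right.trans h)))
  have h1 : NN E Q (C ∩ D) ∪ NN E Q (Cᶜ ∩ Dᶜ) ⊂ NN E Q C ∪ NN E Q D := by
    rw [ssubset_iff_of_subset]
    · refine ⟨C, Or.inr ⟨hCm, fun h => hn (nested_comm h)⟩, ?_⟩
      rintro (h | h)
      · exact h.2 (Or.inl inter_subset_left)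
      · exact h.2 (Or.inr (Or.inl inter_subset_left))
    · rintro H (h | h)
      · by_contra h0
        have h0 : ¬ (H ∈ NN E Q C) ∧ ¬ (H ∈ NN E Q D) := by simpa [not_or] using h0
        have a1 : Nested C H := by by_contra h'; exact h0.1 ⟨h.1, h'⟩
        have a2 : Nested D H := by by_contra h'; exact h0.2 ⟨h.1, h'⟩
        exact h.2 (both H a1 a2).1
      · by_contra h0
        have h0 : ¬ (H ∈ NN E Q C) ∧ ¬ (H ∈ NN E Q D) := by simpa [not_or] using h0
        have a1 : Nested C H := by by_contra h'; exact h0.1 ⟨h.1, h'⟩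
        have a2 : Nested D H := by by_contra h'; exact h0.2 ⟨h.1, h'⟩
        exact h.2 (both H a1 a2).2
  have h2 : NN E Q (C ∩ D) ∩ NN E Q (Cᶜ ∩ Dᶜ) ⊆ NN E Q C ∩ NN E Q D := by
    rintro H ⟨h, h'⟩
    refine ⟨⟨h.1, fun hh => ?_⟩, ⟨h.1, fun hh => ?_⟩⟩
    · rcases one H hh with a | a
      · exact h.2 a
      · exact h'.2 a
    · rcases one' H hh with a | a
      · exact h.2 a
      · exact h'.2 a
  rw [← Set.ncard_union_add_ncard_inter _ _ fE fE', ← Set.ncard_union_add_ncard_inter _ _ fC fD]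
  exact Nat.add_lt_add_of_lt_of_le (Set.ncard_lt_ncard h1 (fC.union fD))
    (Set.ncard_le_ncard h2 (fC.inter_of_left _))

theorem opt_key (hs : ∀ p ∈ E, p.swap ∈ E) (hc : ∀ A, bd E A = ∅ → A = ∅ ∨ A = univ)
    (k : ℕ) (hk : ∀ D ∈ MC E Q, wt E D ≤ k) {p q} (hp : p ∈ Q) {C D : Set X}
    (hC : Opt E Q p C) (hD : Opt E Q q D) (hn : ¬ Nested C D) (h1 : sep (C ∩ D) p)
    (h2 : sep (Cᶜ ∩ Dᶜ) q) : False := by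
  have fE := bd_inter_finite hC.1.1 hD.1.1
  have fE' := bd_inter_finite (bd_compl_finite hs hC.1.1) (bd_compl_finite hs hD.1.1)
  have sm := submod hC.1.1 hD.1.1
  have e1 : wt E (Cᶜ ∩ Dᶜ) = wt E (C ∪ D) := by rw [← compl_union, wt_compl hs]
  have w1 := hC.1.2.2 _ fE h1
  have w2 := hD.1.2.2 _ fE' h2
  have c1 : Cmin E p (C ∩ D) := ⟨fE, h1, fun B hB hB' => by
    have := hC.1.2.2 B hB hB'; omega⟩
  have c2 : Cmin E q (Cᶜ ∩ Dᶜ) := ⟨fE', h2, fun B hB hB' => by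
    have := hD.1.2.2 B hB hB'; omega⟩
  have := corner_lt hs hc k hk hC.1.1 hD.1.1 ⟨p, hp, hC.1⟩ hn
  have m1 := hC.2 _ c1
  have m2 := hD.2 _ c2
  omega

set_option synthInstance.maxSize 2000 in
set_option synthInstance.maxHeartbeats 400000 in
set_option maxRecDepth 10000 in
theorem opt_bool (c1 c2 c3 c4 d1 d2 d3 d4 : Prop)
    (g1 : ¬ (¬ (c1 ∧ d1 ↔ c2 ∧ d2) ∧ ¬ (¬ c3 ∧ ¬ d3 ↔ ¬ c4 ∧ ¬ d4)) ∧
      ¬ (¬ (c1 ∧ ¬ d1 ↔ c2 ∧ ¬ d2) ∧ ¬ (¬ c3 ∧ d3 ↔ ¬ c4 ∧ d4)) ∧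
      ¬ (¬ (¬ c1 ∧ d1 ↔ ¬ c2 ∧ d2) ∧ ¬ (c3 ∧ ¬ d3 ↔ c4 ∧ ¬ d4)) ∧
      ¬ (¬ (¬ c1 ∧ ¬ d1 ↔ ¬ c2 ∧ ¬ d2) ∧ ¬ (c3 ∧ d3 ↔ c4 ∧ d4)))
    (g3 : ¬ (d1 ↔ d2) → ¬ (c3 ↔ c4) → ¬ (¬ (c1 ∧ d1 ↔ c2 ∧ d2) ∧ ¬ (¬ c1 ∧ ¬ d1 ↔ ¬ c2 ∧ ¬ d2)) ∧
      ¬ (¬ (c1 ∧ ¬ d1 ↔ c2 ∧ ¬ d2) ∧ ¬ (¬ c1 ∧ d1 ↔ ¬ c2 ∧ d2)) ∧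
      ¬ (¬ (¬ c1 ∧ d1 ↔ ¬ c2 ∧ d2) ∧ ¬ (c1 ∧ ¬ d1 ↔ c2 ∧ ¬ d2)) ∧
      ¬ (¬ (¬ c1 ∧ ¬ d1 ↔ ¬ c2 ∧ ¬ d2) ∧ ¬ (c1 ∧ d1 ↔ c2 ∧ d2)))
    (s1 : ¬ (c1 ↔ c2)) (s2 : ¬ (d3 ↔ d4)) : False := by
  have hb : ∀ c : Prop, ∃ b : Bool, c = (b = true) := fun c => by
    by_cases hc : c
    · exact ⟨true, by simp [hc]⟩
    · exact ⟨false, by simp [hc]⟩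
  obtain ⟨c1, rfl⟩ := hb c1
  obtain ⟨c2, rfl⟩ := hb c2
  obtain ⟨c3, rfl⟩ := hb c3
  obtain ⟨c4, rfl⟩ := hb c4
  obtain ⟨d1, rfl⟩ := hb d1
  obtain ⟨d2, rfl⟩ := hb d2
  obtain ⟨d3, rfl⟩ := hb d3
  obtain ⟨d4, rfl⟩ := hb d4
  clear hb
  revert c1 c2 c3 c4 d1 d2 d3 d4
  decide

theorem opt_nested (hs : ∀ p ∈ E, p.swap ∈ E) (hc : ∀ A, bd E A = ∅ → A = ∅ ∨ A = univ)
    (k : ℕ) (hk : ∀ D ∈ MC E Q, wt E D ≤ k) {p q} (hp : p ∈ Q) {C D : Set X}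
    (hC : Opt E Q p C) (hD : Opt E Q q D) : Nested C D := by
  by_contra hn
  have n2 : ¬ Nested C Dᶜ := by rwa [nested_compl]
  have n3 : ¬ Nested Cᶜ D := by rwa [nested_compl_left]
  have n4 : ¬ Nested Cᶜ Dᶜ := by rwa [nested_compl_left, nested_compl]
  have hC' := hC.compl hs
  have gen : ∀ q, Opt E Q q D → ¬ (sep (C ∩ D) p ∧ sep (Cᶜ ∩ Dᶜ) q) ∧
      ¬ (sep (C ∩ Dᶜ) p ∧ sep (Cᶜ ∩ D) q) ∧ ¬ (sep (Cᶜ ∩ D) p ∧ sep (C ∩ Dᶜ) q) ∧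
      ¬ (sep (Cᶜ ∩ Dᶜ) p ∧ sep (C ∩ D) q) := by
    intro q hD
    have hD' := hD.compl hs
    have a1 := opt_key hs hc k hk hp hC hD hn
    have a2 := opt_key hs hc k hk hp hC hD' n2
    have a3 := opt_key hs hc k hk hp hC' hD n3
    have a4 := opt_key hs hc k hk hp hC' hD' n4
    simp only [_root_.compl_compl] at a1 a2 a3 a4
    exact ⟨fun h => a1 h.1 h.2, fun h => a2 h.1 h.2, fun h => a3 h.1 h.2, fun h => a4 h.1 h.2⟩
  have g1 := gen q hD
  have g2 : sep D p → sep C q → Opt E Q p D := by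
    intro h1 h2
    have w1 := hC.1.2.2 D hD.1.1 h1
    have w2 := hD.1.2.2 C hC.1.1 h2
    have cD : Cmin E p D := ⟨hD.1.1, h1, fun B hB hB' => by
      have := hC.1.2.2 B hB hB'; omega⟩
    have cC : Cmin E q C := ⟨hC.1.1, h2, fun B hB hB' => by
      have := hD.1.2.2 B hB hB'; omega⟩
    have m1 := hC.2 _ cD
    have m2 := hD.2 _ cC
    exact ⟨cD, fun B hB => by have := hC.2 B hB; omega⟩
  have g3 := fun h1 h2 => gen p (g2 h1 h2)
  have s1 := hC.1.2.1
  have s2 := hD.1.2.1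
  clear gen g2 hk
  simp only [sep, um_inter, Ultrafilter.compl_mem_iff_notMem] at g1 g3 s1 s2
  exact opt_bool _ _ _ _ _ _ _ _ g1 g3 s1 s2

end Cuts
end VF

/-! ### Part 2 -/

namespace VF
open Set

section FreeW
variable {α : Type*} [DecidableEq α]

/-- Elements of the free group whose first letter is the inverse of `l`. -/
def Wl (l : α × Bool) : Set (FreeGroup α) := {w | (w⁻¹).toWord.getLast? = some l}

theorem Wl_letter (l x : α × Bool) : {w ∈ Wl l | w * FreeGroup.mk [x] ∉ Wl l}.Finite := by
  apply Set.Finite.subset (Set.finite_singleton (FreeGroup.mk [l])⁻¹)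
  rintro w ⟨h1, h2⟩
  simp only [Wl, mem_ofPred_eq, mul_inv_rev] at h1 h2
  set L := (w⁻¹).toWord with hL
  have hw : w = (FreeGroup.mk L)⁻¹ := by rw [hL, FreeGroup.mk_toWord, inv_inv]
  have hred : FreeGroup.reduce L = L := FreeGroup.reduce_toWord _
  have h3 : ((FreeGroup.mk [x])⁻¹ * w⁻¹).toWord = FreeGroup.reduce ((x.1, !x.2) :: L) := by
    rw [hw, inv_inv, FreeGroup.inv_mk, FreeGroup.mul_mk, FreeGroup.toWord_mk]
    simp [FreeGroup.invRev]
  rw [h3, FreeGroup.reduce.cons, hred] at h2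
  rw [mem_singleton_iff, hw]
  rcases hLL : L with _ | ⟨a, t⟩
  · rw [hLL] at h1; simp at h1
  · rw [hLL] at h1 h2
    dsimp only at h2
    split_ifs at h2 with hif
    · rcases t with _ | ⟨b, t⟩
      · simp at h1; rw [h1]
      · simp at h1 h2; exact absurd h1 h2
    · simp at h1 h2; exact absurd h1 h2

theorem ai_mul {M : Type*} [Group M] {A : Set M} {g h : M} (hg : {x ∈ A | x * g ∉ A}.Finite)
    (hh : {x ∈ A | x * h ∉ A}.Finite) : {x ∈ A | x * (g * h) ∉ A}.Finite := by
  refine (hg.union (hh.preimage (f := fun x => x * g) (mul_left_injective g).injOn)).subset ?_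
  rintro x ⟨h1, h2⟩
  by_cases hx : x * g ∈ A
  · right; exact ⟨hx, by rwa [mul_assoc]⟩
  · left; exact ⟨h1, hx⟩

theorem Wl_ai (l : α × Bool) (h : FreeGroup α) : {w ∈ Wl l | w * h ∉ Wl l}.Finite := by
  induction h using FreeGroup.induction_on with
  | C1 => simp
  | of x => exact Wl_letter l (x, true)
  | inv_of x _ => exact Wl_letter l (x, false)
  | mul x y hx hy => exact ai_mul hx hy

theorem getLast_flat {β : Type*} (L : List β) (n : ℕ) :
    (List.replicate (n + 1) L).flatten.getLast? = L.getLast? := by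
  induction n with
  | zero => simp
  | succ n ih =>
    rw [List.replicate_succ, List.flatten_cons, List.getLast?_append, ih]
    cases L.getLast? <;> rfl

theorem head_flat {β : Type*} (L : List β) (hL : L ≠ []) (n : ℕ) :
    (List.replicate (n + 1) L).flatten.head? = L.head? := by
  rw [List.replicate_succ, List.flatten_cons]
  cases L with
  | nil => exact absurd rfl hL
  | cons a t => rfl

theorem Wl_pow (y : FreeGroup α) (hy : y ≠ 1) : ∃ c v : FreeGroup α, ∃ l : α × Bool,
    y = c * v * c⁻¹ ∧ ∀ n : ℕ, v ^ (n + 1) ∈ Wl l ∧ (v⁻¹) ^ (n + 1) ∉ Wl l := by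
  classical
  let L := FreeGroup.reduceCyclically (y⁻¹).toWord
  have hcr : FreeGroup.IsCyclicallyReduced L :=
    FreeGroup.reduceCyclically.isCyclicallyReduced FreeGroup.isReduced_toWord
  let c := FreeGroup.mk (FreeGroup.reduceCyclically.conjugator (y⁻¹).toWord)
  have hdec : y⁻¹ = c * FreeGroup.mk L * c⁻¹ := by
    rw [FreeGroup.inv_mk, FreeGroup.mul_mk, FreeGroup.mul_mk,
      FreeGroup.reduceCyclically.conj_conjugator_reduceCyclically, FreeGroup.mk_toWord]
  have hLne : L ≠ [] := by
    intro h
    rw [h, ← FreeGroup.one_eq_mk] at hdec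
    simp at hdec
    exact hy hdec
  obtain ⟨l, hl⟩ : ∃ l, L.getLast? = some l := ⟨_, List.getLast?_eq_some_getLast hLne⟩
  obtain ⟨b, hb⟩ : ∃ l, L.head? = some l := ⟨_, List.head?_eq_some_head hLne⟩
  have hpow : ∀ n : ℕ, (FreeGroup.mk L ^ (n + 1)).toWord = (List.replicate (n + 1) L).flatten := by
    intro n
    rw [FreeGroup.toWord_pow, FreeGroup.toWord_mk, hcr.isReduced.reduce_eq,
      (hcr.flatten_replicate _).isReduced.reduce_eq]
  refine ⟨c, (FreeGroup.mk L)⁻¹, l, ?_, fun n => ⟨?_, ?_⟩⟩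
  · rw [← inv_inv y, hdec]; group
  · simp only [Wl, mem_ofPred_eq]
    rw [inv_pow, inv_inv, hpow, getLast_flat, hl]
  · simp only [Wl, mem_ofPred_eq]
    rw [inv_inv, FreeGroup.toWord_inv, hpow, FreeGroup.invRev, List.getLast?_reverse,
      List.head?_map, head_flat _ hLne, hb]
    intro h
    have h2 := hcr.2 l hl b hb
    simp only [Option.map_some, Option.some.injEq] at h
    rw [← h] at h2
    simp at h2

theorem freeGroup_fg_finite (h : Group.FG (FreeGroup α)) : Finite α := by
  obtain ⟨T, hT⟩ := Group.fg_def.1 h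
  have key : ∀ x : FreeGroup α, ∃ s : Set α, s.Finite ∧
      x ∈ Subgroup.closure (FreeGroup.of '' s) := by
    intro x
    induction x using FreeGroup.induction_on with
    | C1 => exact ⟨∅, finite_empty, one_mem _⟩
    | of a => exact ⟨{a}, finite_singleton a, Subgroup.subset_closure ⟨a, rfl, rfl⟩⟩
    | inv_of a _ => exact ⟨{a}, finite_singleton a,
        inv_mem (Subgroup.subset_closure ⟨a, rfl, rfl⟩)⟩
    | mul x y hx hy =>
      obtain ⟨s, hs, h1⟩ := hx
      obtain ⟨t, ht, h2⟩ := hy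
      exact ⟨s ∪ t, hs.union ht, mul_mem
        (Subgroup.closure_mono (image_mono subset_union_left) h1)
        (Subgroup.closure_mono (image_mono subset_union_right) h2)⟩
  choose s hs hx using key
  have hU : (⋃ x ∈ T, s x).Finite := T.finite_toSet.biUnion fun x _ => hs x
  rw [← Set.finite_univ_iff]
  refine hU.subset fun a _ => ?_
  by_contra ha
  let φ : FreeGroup α →* Multiplicative ℤ :=
    FreeGroup.lift fun b => if b = a then Multiplicative.ofAdd 1 else 1
  have h1 : (⊤ : Subgroup (FreeGroup α)) ≤ φ.ker := by
    rw [← hT, Subgroup.closure_le]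
    intro x hxT
    have : Subgroup.closure (FreeGroup.of '' s x) ≤ φ.ker := by
      rw [Subgroup.closure_le]
      rintro _ ⟨b, hb, rfl⟩
      have hne : b ≠ a := by
        rintro rfl
        exact ha (mem_biUnion hxT hb)
      simp [φ, MonoidHom.mem_ker, hne]
    exact this (hx x)
  have h2 : φ (FreeGroup.of a) = 1 := h1 (Subgroup.mem_top _)
  simp [φ] at h2

end FreeW
end VF

/-! ### Part 3 -/

namespace VF
open Set
open scoped Pointwise

section GCuts
variable {G : Type*} [Group G]

/-- Edges of the Cayley graph. -/
def Ed (S : Set G) : Set (G × G) := {p | p.1⁻¹ * p.2 ∈ S}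

theorem mem_gsmul {g x : G} {A : Set G} : x ∈ g • A ↔ g⁻¹ * x ∈ A := by
  rw [Set.mem_smul_set_iff_inv_smul_mem, smul_eq_mul]

theorem gsmul_compl (g : G) (A : Set G) : g • Aᶜ = (g • A)ᶜ := Set.smul_set_compl

theorem Ed_symm {S : Set G} (hS : ∀ s ∈ S, s⁻¹ ∈ S) : ∀ p ∈ Ed S, p.swap ∈ Ed S := by
  rintro ⟨x, y⟩ h
  have := hS _ h
  simpa [Ed] using this

theorem Ed_conn {S : Set G} (hS : Submonoid.closure S = ⊤) (A : Set G)
    (h : bd (Ed S) A = ∅) : A = ∅ ∨ A = univ := by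
  rcases A.eq_empty_or_nonempty with h0 | ⟨a, ha⟩
  · exact Or.inl h0
  right
  have key : ∀ g : G, ∀ x ∈ A, x * g ∈ A := by
    intro g
    have hg : g ∈ Submonoid.closure S := hS ▸ Submonoid.mem_top g
    induction hg using Submonoid.closure_induction with
    | mem s hs =>
      intro x hx
      by_contra hn
      have : (x, x * s) ∈ bd (Ed S) A := ⟨by simpa [Ed] using hs, hx, hn⟩
      rw [h] at this; exact this
    | one => simp
    | mul g h _ _ ih1 ih2 =>
      intro x hx
      rw [← mul_assoc]; exact ih2 _ (ih1 _ hx)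
  ext x
  simpa using key (a⁻¹ * x) a ha

theorem bd_ai {S : Set G} (hS : Submonoid.closure S = ⊤) {A : Set G}
    (hA : (bd (Ed S) A).Finite) (h : G) : {x ∈ A | x * h ∉ A}.Finite := by
  have hg : h ∈ Submonoid.closure S := hS ▸ Submonoid.mem_top h
  induction hg using Submonoid.closure_induction with
  | mem s hs =>
    refine (hA.image Prod.fst).subset ?_
    rintro x ⟨h1, h2⟩
    exact ⟨(x, x * s), ⟨by simpa [Ed] using hs, h1, h2⟩, rfl⟩
  | one => simp
  | mul g h _ _ ih1 ih2 => exact ai_mul ih1 ih2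

theorem ai_bd {S : Set G} (hS : S.Finite) {A : Set G}
    (h : ∀ s ∈ S, {x ∈ A | x * s ∉ A}.Finite) : (bd (Ed S) A).Finite := by
  refine (hS.biUnion (t := fun s => (fun x => (x, x * s)) '' {x ∈ A | x * s ∉ A})
    fun s hs => (h s hs).image _).subset ?_
  rintro ⟨x, y⟩ ⟨h1, h2, h3⟩
  simp only [mem_iUnion]
  exact ⟨x⁻¹ * y, h1, x, ⟨h2, by simpa using h3⟩, by simp⟩

/-- Limit ultrafilter of a sequence. -/
noncomputable def lim (s : ℕ → G) : Ultrafilter G := (Filter.hyperfilter ℕ).map s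

theorem mem_lim {s : ℕ → G} {A : Set G} :
    A ∈ lim s ↔ ∀ᶠ n in (Filter.hyperfilter ℕ : Filter ℕ), s n ∈ A := Iff.rfl

/-- The pair of ends of the sequence `g f^n`. -/
noncomputable def pt (g f : G) : Ultrafilter G × Ultrafilter G :=
  (lim fun n => g * f ^ n, lim fun n => g * (f⁻¹) ^ n)

/-- Almost right invariance. -/
def AI (A : Set G) : Prop := ∀ h, {x ∈ A | x * h ∉ A}.Finite ∧ {x | x ∉ A ∧ x * h ∈ A}.Finite

theorem AI.ev {A : Set G} (hA : AI A) {s : ℕ → G} (hs : Function.Injective s) (u : G) :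
    ∀ᶠ n in (Filter.hyperfilter ℕ : Filter ℕ), (s n * u ∈ A ↔ s n ∈ A) := by
  have h1 := ((hA u).1.preimage hs.injOn)
  have h2 := ((hA u).2.preimage hs.injOn)
  have := (h1.union h2).compl_mem_hyperfilter
  filter_upwards [this] with n hn
  simp only [mem_compl_iff, mem_union, mem_preimage, mem_ofPred_eq] at hn
  tauto

theorem AI.lim {A : Set G} (hA : AI A) {s : ℕ → G} (hs : Function.Injective s) (u : G) :
    A ∈ lim (fun n => s n * u) ↔ A ∈ lim s := by
  rw [mem_lim, mem_lim]
  exact Filter.eventually_congr (hA.ev hs u)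

theorem pow_inj {f : G} (hf : ¬ IsOfFinOrder f) (g : G) : Function.Injective fun n : ℕ => g * f ^ n :=
  fun _ _ h => injective_pow_iff_not_isOfFinOrder.2 hf (mul_left_cancel h)

theorem AI_of_bd {S : Set G} (hs : ∀ s ∈ S, s⁻¹ ∈ S) (hS : Submonoid.closure S = ⊤) {A : Set G}
    (hA : (bd (Ed S) A).Finite) : AI A := by
  intro h
  refine ⟨bd_ai hS hA h, ?_⟩
  have := bd_ai hS (bd_compl_finite (Ed_symm hs) hA) h
  simpa using this

theorem bd_smul (S : Set G) (g : G) (B : Set G) : bd (Ed S) (g • B) =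
  (fun p : G × G => (g * p.1, g * p.2)) '' bd (Ed S) B := by
  ext ⟨x, y⟩
  simp only [bd, Ed, mem_ofPred_eq, mem_image, Prod.exists, Prod.mk.injEq, mem_gsmul]
  constructor
  · rintro ⟨h1, h2, h3⟩
    exact ⟨g⁻¹ * x, g⁻¹ * y, ⟨by convert h1 using 1; group, h2, h3⟩, by group, by group⟩
  · rintro ⟨a, b, ⟨h1, h2, h3⟩, rfl, rfl⟩
    exact ⟨by convert h1 using 1; group, by simpa using h2, by simpa using h3⟩

theorem wt_smul (S : Set G) (g : G) (B : Set G) : wt (Ed S) (g • B) = wt (Ed S) B := by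
  rw [wt, bd_smul, Set.ncard_image_of_injective]
  · rfl
  · rintro ⟨a, b⟩ ⟨a', b'⟩ h
    simpa using h

theorem exists_sep {α : Type*} {S : Set G} (hs : ∀ s ∈ S, s⁻¹ ∈ S)
    (hS : Submonoid.closure S = ⊤) (hSf : S.Finite) (F : Subgroup G) [F.FiniteIndex]
    (e : F ≃* FreeGroup α) [Finite α] (tf : ∀ f ∈ F, f ≠ 1 → ¬ IsOfFinOrder f) :
    ∃ k, ∀ g f : G, f ∈ F → f ≠ 1 → ∃ A, (bd (Ed S) A).Finite ∧ wt (Ed S) A ≤ k ∧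
      sep A (pt g f) := by
  classical
  let r : G → G := fun x => ((x⁻¹ : G) : G ⧸ F).out
  have hr : ∀ x, x * r x ∈ F := by
    intro x
    have : ((x⁻¹ : G) : G ⧸ F) = (r x : G ⧸ F) := (QuotientGroup.out_eq' _).symm
    simpa using QuotientGroup.eq.1 this
  have hrf : (range r).Finite := by
    have : range r ⊆ range (fun q : G ⧸ F => q.out) := by
      rintro _ ⟨x, rfl⟩; exact ⟨_, rfl⟩
    exact (Set.finite_range _).subset this
  let W : α × Bool → Set G := fun l => (fun w => ((e.symm w : F) : G)) '' Wl l
  have hinj : Function.Injective (fun w => ((e.symm w : F) : G)) :=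
    Subtype.val_injective.comp e.symm.injective
  have hW : ∀ l, ∀ h ∈ F, {x ∈ W l | x * h ∉ W l}.Finite := by
    intro l h hh
    refine ((Wl_ai l (e ⟨h, hh⟩)).image (fun w => ((e.symm w : F) : G))).subset ?_
    rintro _ ⟨⟨w, hw, rfl⟩, h2⟩
    refine ⟨w, ⟨hw, fun h3 => h2 ⟨_, h3, by simp⟩⟩, rfl⟩
  let A : α × Bool → Set G := fun l => {x | x * r x ∈ W l}
  have hA : ∀ l, (bd (Ed S) (A l)).Finite := by
    intro l
    apply ai_bd hSf
    intro s _
    have : {x ∈ A l | x * s ∉ A l} ⊆ ⋃ a ∈ range r, ⋃ b ∈ range r,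
        (fun w => w * a⁻¹) '' {w ∈ W l | a⁻¹ * s * b ∈ F ∧ w * (a⁻¹ * s * b) ∉ W l} := by
      rintro x ⟨h1, h2⟩
      simp only [mem_iUnion]
      refine ⟨r x, ⟨x, rfl⟩, r (x * s), ⟨_, rfl⟩, x * r x, ⟨h1, ?_, ?_⟩, by simp⟩
      · have := F.mul_mem (F.inv_mem (hr x)) (hr (x * s))
        convert this using 1; group
      · intro h3; apply h2
        change x * s * r (x * s) ∈ W l
        convert h3 using 1; group
    refine Set.Finite.subset ?_ this
    refine hrf.biUnion fun a _ => hrf.biUnion fun b _ => Set.Finite.image _ ?_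
    by_cases hab : a⁻¹ * s * b ∈ F
    · exact (hW l _ hab).subset fun w hw => ⟨hw.1, hw.2.2⟩
    · convert Set.finite_empty
      ext w; simp [hab]
  obtain ⟨k, hk⟩ := (Set.finite_range fun l => wt (Ed S) (A l)).bddAbove
  refine ⟨k, fun g f hf hf1 => ?_⟩
  obtain ⟨c, v, l, hy, hv⟩ := Wl_pow (e ⟨f, hf⟩) (by
    intro h
    have := (map_eq_one_iff e e.injective).1 h
    exact hf1 (congrArg Subtype.val this))
  let C : G := ((e.symm c : F) : G)
  let V : G := ((e.symm v : F) : G)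
  have hfC : f = C * V * C⁻¹ := by
    have := congrArg (fun w => ((e.symm w : F) : G)) hy
    simpa using this
  have hVF : V ∈ F := (e.symm v).2
  have hV1 : V ≠ 1 := by
    intro h; apply hf1; rw [hfC, h]; simp
  have hVo := tf V hVF hV1
  have hVo' : ¬ IsOfFinOrder V⁻¹ := by rwa [isOfFinOrder_inv_iff]
  have hAI := AI_of_bd hs hS (hA l)
  have r1 : r 1 ∈ F := by simpa using hr 1
  have hrF : ∀ x ∈ F, r x = r 1 := by
    intro x hx
    have : ((x⁻¹ : G) : G ⧸ F) = ((1⁻¹ : G) : G ⧸ F) := by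
      rw [QuotientGroup.eq]; simpa using hx
    simp only [r]; rw [this]
  have hmemA : ∀ x ∈ F, (x * (r 1)⁻¹ ∈ A l ↔ x ∈ W l) := by
    intro x hx
    change x * (r 1)⁻¹ * r _ ∈ W l ↔ _
    rw [hrF _ (F.mul_mem hx (F.inv_mem r1))]
    simp
  refine ⟨(g * C) • A l, ?_, ?_, ?_⟩
  · rw [bd_smul]; exact (hA l).image _
  · rw [wt_smul]; exact hk ⟨l, rfl⟩
  · have g1 : (g * C) • A l ∈ (pt g f).1 ↔ A l ∈ lim (fun n => 1 * V ^ n) := by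
      rw [← hAI.lim (pow_inj hVo 1) C⁻¹]
      change (g * C) • A l ∈ lim (fun n => g * f ^ n) ↔ _
      rw [mem_lim, mem_lim]
      apply Filter.eventually_congr
      refine Filter.Eventually.of_forall fun n => ?_
      rw [mem_gsmul, hfC, conj_pow]
      have : (g * C)⁻¹ * (g * (C * V ^ n * C⁻¹)) = 1 * V ^ n * C⁻¹ := by group
      rw [this]
    have g2 : (g * C) • A l ∈ (pt g f).2 ↔ A l ∈ lim (fun n => 1 * V⁻¹ ^ n) := by
      rw [← hAI.lim (pow_inj hVo' 1) C⁻¹]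
      change (g * C) • A l ∈ lim (fun n => g * f⁻¹ ^ n) ↔ _
      rw [mem_lim, mem_lim]
      apply Filter.eventually_congr
      refine Filter.Eventually.of_forall fun n => ?_
      have hfC' : f⁻¹ = C * V⁻¹ * C⁻¹ := by rw [hfC]; group
      rw [mem_gsmul, hfC', conj_pow]
      have : (g * C)⁻¹ * (g * (C * V⁻¹ ^ n * C⁻¹)) = 1 * V⁻¹ ^ n * C⁻¹ := by group
      rw [this]
    have hlarge : ∀ᶠ n in (Filter.hyperfilter ℕ : Filter ℕ), n ≠ 0 := by
      have := (Set.finite_singleton (0 : ℕ)).compl_mem_hyperfilter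
      filter_upwards [this] with n hn
      exact hn
    have g3 : A l ∈ lim (fun n => 1 * V ^ n) := by
      rw [← hAI.lim (pow_inj hVo 1) (r 1)⁻¹, mem_lim]
      filter_upwards [hlarge] with n hn
      rw [one_mul, hmemA _ (F.pow_mem hVF n)]
      obtain ⟨m, rfl⟩ := Nat.exists_eq_succ_of_ne_zero hn
      exact ⟨v ^ (m + 1), (hv m).1, by simp [V]⟩
    have g4 : A l ∉ lim (fun n => 1 * V⁻¹ ^ n) := by
      rw [← hAI.lim (pow_inj hVo' 1) (r 1)⁻¹, mem_lim, ← Ultrafilter.eventually_not]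
      filter_upwards [hlarge] with n hn
      rw [one_mul, hmemA _ (F.pow_mem (F.inv_mem hVF) n)]
      obtain ⟨m, rfl⟩ := Nat.exists_eq_succ_of_ne_zero hn
      rintro ⟨w, hw, hw'⟩
      have : w = v⁻¹ ^ (m + 1) := by
        apply hinj
        refine hw'.trans ?_
        simp [V]
      exact (hv m).2 (this ▸ hw)
    unfold sep
    rw [g1, g2]
    tauto

end GCuts
end VF

/-! ### Part 4 -/

namespace VF
open Set
open scoped Pointwise

section NFsec
variable {G : Type*} [Group G]

/-- The nested family of cuts used to build the tree. -/
structure NF (F : Subgroup G) (𝓔 : Set (Set G)) : Prop where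
  smul : ∀ A ∈ 𝓔, ∀ g : G, g • A ∈ 𝓔
  compl : ∀ A ∈ 𝓔, Aᶜ ∈ 𝓔
  nested : ∀ A ∈ 𝓔, ∀ B ∈ 𝓔, Nested A B
  interval : ∀ x y : G, {A ∈ 𝓔 | x ∈ A ∧ y ∉ A}.Finite
  nonempty : ∀ A ∈ 𝓔, A.Nonempty
  ai : ∀ A ∈ 𝓔, AI A
  stab : ∀ A ∈ 𝓔, {g : G | g • A = A}.Finite
  orbits : ∃ R : Set (Set G), R.Finite ∧ ∀ A ∈ 𝓔, ∃ a ∈ R, ∃ g : G, A = g • a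
  sep : ∀ g f : G, f ∈ F → f ≠ 1 → ∃ A ∈ 𝓔, sep A (pt g f)
  minl : ∀ A ∈ 𝓔, ∃ g f : G, f ∈ F ∧ f ≠ 1 ∧
    ∀ D ∈ 𝓔, VF.sep D (pt g f) → ∃ h : G, D = h • A ∨ D = (h • A)ᶜ

/-- translate of a pair of ultrafilters -/
noncomputable def gp (g : G) (p : Ultrafilter G × Ultrafilter G) : Ultrafilter G × Ultrafilter G :=
  (p.1.map (fun x => g * x), p.2.map (fun x => g * x))

theorem gp_pt (g h f : G) : gp g (pt h f) = pt (g * h) f := by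
  simp only [gp, pt, lim, Ultrafilter.map_map]
  have e1 : ∀ f : G, ((fun x => g * x) ∘ fun n : ℕ => h * f ^ n) = fun n => g * h * f ^ n :=
    fun f => by funext n; simp [mul_assoc]
  rw [e1, e1]

theorem mem_map_smul (g : G) (A : Set G) (p : Ultrafilter G) :
    g • A ∈ p.map (fun x => g * x) ↔ A ∈ p := by
  rw [Ultrafilter.mem_map]
  have : (fun x => g * x) ⁻¹' (g • A) = A := by
    ext x; simp [mem_gsmul]
  rw [this]

theorem sep_smul (g : G) (A : Set G) (p) : sep (g • A) (gp g p) ↔ sep A p := by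
  simp only [sep, gp, mem_map_smul]

theorem gp_inv (g : G) (p) : gp g (gp g⁻¹ p) = p := by
  simp only [gp, Ultrafilter.map_map]
  have : (fun x => g * x) ∘ (fun x => g⁻¹ * x) = (id : G → G) := by funext x; simp
  rw [this]; simp

theorem Cmin_smul {S : Set G} (g : G) {A : Set G} {p} (h : Cmin (Ed S) p A) :
    Cmin (Ed S) (gp g p) (g • A) := by
  refine ⟨by rw [bd_smul]; exact h.1.image _, (sep_smul g A p).2 h.2.1, fun B hB hs => ?_⟩
  rw [wt_smul]
  have h1 : B = g • (g⁻¹ • B) := by simp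
  rw [← wt_smul S g⁻¹ B]
  refine h.2.2 _ (by rw [bd_smul]; exact hB.image _) ?_
  rw [h1, sep_smul] at hs
  exact hs

theorem nested_smul (g : G) {A B : Set G} : Nested (g • A) (g • B) ↔ Nested A B := by
  simp only [Nested, ← gsmul_compl, Set.smul_set_subset_smul_set_iff]

variable {Q : Set (Ultrafilter G × Ultrafilter G)}

theorem NN_smul {S : Set G} (hQ : ∀ g, ∀ p ∈ Q, gp g p ∈ Q) (g : G) (A : Set G) :
    NN (Ed S) Q (g • A) = (fun D => g • D) '' NN (Ed S) Q A := by
  ext D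
  constructor
  · rintro ⟨⟨p, hp, hD⟩, hn⟩
    refine ⟨g⁻¹ • D, ⟨⟨gp g⁻¹ p, hQ _ _ hp, Cmin_smul _ hD⟩, ?_⟩, by simp⟩
    rw [← nested_smul g]; simpa using hn
  · rintro ⟨D, ⟨⟨p, hp, hD⟩, hn⟩, rfl⟩
    exact ⟨⟨gp g p, hQ _ _ hp, Cmin_smul _ hD⟩, by rwa [nested_smul]⟩

theorem Opt_smul {S : Set G} (hQ : ∀ g, ∀ p ∈ Q, gp g p ∈ Q) (g : G) {A : Set G} {p}
    (h : Opt (Ed S) Q p A) : Opt (Ed S) Q (gp g p) (g • A) := by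
  refine ⟨Cmin_smul g h.1, fun B hB => ?_⟩
  have e : ∀ A, (NN (Ed S) Q (g • A)).ncard = (NN (Ed S) Q A).ncard := fun A => by
    rw [NN_smul hQ, Set.ncard_image_of_injective _ (MulAction.injective g)]
  have h2 := Cmin_smul g⁻¹ hB
  have h1 : gp g⁻¹ (gp g p) = p := by simpa using gp_inv g⁻¹ p
  rw [h1] at h2
  have := h.2 _ h2
  rw [e]
  have e' := e (g⁻¹ • B)
  rw [smul_inv_smul] at e'
  omega

/-- The family generated by a set of cuts. -/
def gen (R : Set (Set G)) : Set (Set G) := {A | ∃ a ∈ R, ∃ g : G, A = g • a ∨ A = (g • a)ᶜ}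

theorem exists_NF {α : Type*} [Group.FG G] (F : Subgroup G) [F.FiniteIndex]
    (e : F ≃* FreeGroup α) (tf : ∀ f ∈ F, f ≠ 1 → ¬ IsOfFinOrder f) : ∃ 𝓔, NF F 𝓔 := by
  classical
  have hfg : Group.FG (FreeGroup α) := by
    have : Group.FG F := inferInstance
    exact Group.fg_of_surjective (f := e.toMonoidHom) e.surjective
  have hα := freeGroup_fg_finite hfg
  obtain ⟨S, hs, hS, hSf⟩ : ∃ S : Set G, (∀ s ∈ S, s⁻¹ ∈ S) ∧ Submonoid.closure S = ⊤ ∧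
      S.Finite := by
    obtain ⟨T, hT, hTf⟩ := Monoid.fg_iff.1 (inferInstance : Monoid.FG G)
    refine ⟨T ∪ T⁻¹, ?_, ?_, hTf.union hTf.inv⟩
    · rintro s (h | h)
      · right; simpa using h
      · left; simpa using h
    · rw [eq_top_iff, ← hT]; exact Submonoid.closure_mono subset_union_left
  let E := Ed S
  have hsy : ∀ p ∈ E, p.swap ∈ E := Ed_symm hs
  have hc : ∀ A, bd E A = ∅ → A = ∅ ∨ A = univ := Ed_conn hS
  obtain ⟨k, hk⟩ := exists_sep hs hS hSf F e tf
  let Q : Set (Ultrafilter G × Ultrafilter G) := {p | ∃ g f, f ∈ F ∧ f ≠ 1 ∧ p = pt g f}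
  have hQ : ∀ g, ∀ p ∈ Q, gp g p ∈ Q := by
    rintro g _ ⟨h, f, hf, hf1, rfl⟩
    exact ⟨g * h, f, hf, hf1, gp_pt g h f⟩
  have hMC : ∀ D ∈ MC E Q, wt E D ≤ k := by
    rintro D ⟨_, ⟨g, f, hf, hf1, rfl⟩, hD⟩
    obtain ⟨A, h1, h2, h3⟩ := hk g f hf hf1
    exact (hD.2.2 A h1 h3).trans h2
  let C : Set (Set G) := {A | ∃ p ∈ Q, Opt E Q p A}
  have hCc : ∀ A ∈ C, Aᶜ ∈ C := by
    rintro A ⟨p, hp, hA⟩; exact ⟨p, hp, hA.compl hsy⟩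
  have hCs : ∀ A ∈ C, ∀ g : G, g • A ∈ C := by
    rintro A ⟨p, hp, hA⟩ g; exact ⟨_, hQ g p hp, Opt_smul hQ g hA⟩
  have hCcut : ∀ A ∈ C, (bd E A).Finite ∧ wt E A ≤ k ∧ Conn E A ∧ Conn E Aᶜ := by
    rintro A ⟨p, hp, hA⟩
    exact ⟨hA.1.1, hMC A ⟨p, hp, hA.1⟩, hA.1.conn hsy hc, (hA.1.compl hsy).conn hsy hc⟩
  have hCint : ∀ x y : G, {A ∈ C | x ∈ A ∧ y ∉ A}.Finite := by
    intro x y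
    refine (cuts_finite (E := E) x y k).subset ?_
    rintro A ⟨hA, h1, h2⟩
    obtain ⟨a, b, c, d⟩ := hCcut A hA
    exact ⟨a, b, c, d, h1, h2⟩
  have hCne : ∀ A ∈ C, A.Nonempty := by
    rintro A ⟨p, hp, hA⟩
    by_contra h
    rw [not_nonempty_iff_eq_empty] at h
    have := hA.1.2.1
    rw [h] at this
    simp [sep] at this
  have hCbd : ∀ A ∈ C, (bd E A).Nonempty := by
    intro A hA
    by_contra h
    rw [not_nonempty_iff_eq_empty] at h
    rcases hc A h with h | h
    · exact (hCne A hA).ne_empty h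
    · exact (hCne _ (hCc A hA)).ne_empty (by rw [h, compl_univ])
  let R0 : Set (Set G) := ⋃ s ∈ S, {A ∈ C | (1 : G) ∈ A ∧ s ∉ A}
  have hR0f : R0.Finite := hSf.biUnion fun s _ => hCint 1 s
  have hR0 : ∀ A ∈ C, ∃ a ∈ R0, ∃ g : G, A = g • a := by
    intro A hA
    obtain ⟨⟨x, y⟩, h1, h2, h3⟩ := hCbd A hA
    refine ⟨x⁻¹ • A, ?_, x, by simp⟩
    simp only [R0, mem_iUnion]
    refine ⟨x⁻¹ * y, h1, hCs A hA _, ?_, ?_⟩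
    · rw [mem_gsmul]; simpa using h2
    · rw [mem_gsmul]; simpa using h3
  have hR0C : R0 ⊆ C := by
    intro A hA
    simp only [R0, mem_iUnion] at hA
    obtain ⟨s, hs, h⟩ := hA
    exact h.1
  obtain ⟨R, ⟨hRC, hRf, hRsep⟩, hRmin⟩ := exists_min
    {R : Set (Set G) | R ⊆ C ∧ R.Finite ∧ ∀ p ∈ Q, ∃ A ∈ gen R, sep A p}
    ⟨R0, hR0C, hR0f, by
      rintro p ⟨g, f, hf, hf1, rfl⟩
      obtain ⟨A, h1, h2, h3⟩ := hk g f hf hf1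
      obtain ⟨B, hB⟩ := exists_opt (Q := Q) ⟨A, h1, h3⟩
      obtain ⟨a, ha, x, hx⟩ := hR0 B ⟨_, ⟨g, f, hf, hf1, rfl⟩, hB⟩
      exact ⟨B, ⟨a, ha, x, Or.inl hx⟩, hB.1.2.1⟩⟩ Set.ncard
  have hgC : gen R ⊆ C := by
    rintro A ⟨a, ha, g, rfl | rfl⟩
    · exact hCs _ (hRC ha) _
    · exact hCc _ (hCs _ (hRC ha) _)
  refine ⟨gen R, ?_, ?_, ?_, ?_, ?_, ?_, ?_, ?_, ?_, ?_⟩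
  · rintro A ⟨a, ha, g, rfl | rfl⟩ h
    · exact ⟨a, ha, h * g, Or.inl (by rw [mul_smul])⟩
    · exact ⟨a, ha, h * g, Or.inr (by rw [mul_smul, gsmul_compl])⟩
  · rintro A ⟨a, ha, g, rfl | rfl⟩
    · exact ⟨a, ha, g, Or.inr rfl⟩
    · exact ⟨a, ha, g, Or.inl (by rw [_root_.compl_compl])⟩
  · intro A hA B hB
    obtain ⟨p, hp, hA'⟩ := hgC hA
    obtain ⟨q, hq, hB'⟩ := hgC hB
    exact opt_nested hsy hc k hMC hp hA' hB'
  · intro x y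
    exact (hCint x y).subset fun A hA => ⟨hgC hA.1, hA.2⟩
  · exact fun A hA => hCne A (hgC hA)
  · intro A hA
    exact AI_of_bd hs hS (hCcut A (hgC hA)).1
  · intro A hA
    obtain ⟨⟨x, y⟩, h⟩ := hCbd A (hgC hA)
    have hf := (hCcut A (hgC hA)).1
    refine Set.Finite.of_injOn (f := fun g : G => (g * x, g * y)) (t := bd E A) ?_ ?_ hf
    · intro g hg
      have : bd E (g • A) = bd E A := by rw [hg]
      rw [← this, bd_smul]
      exact ⟨_, h, rfl⟩
    · intro g _ g' _ h
      simpa using congrArg Prod.fst h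
  · refine ⟨R0, hR0f, fun A hA => hR0 A (hgC hA)⟩
  · intro g f hf hf1
    exact hRsep _ ⟨g, f, hf, hf1, rfl⟩
  · rintro A ⟨a, ha, g, hA⟩
    have hlt : (R \ {a}).ncard < R.ncard := Set.ncard_sdiff_singleton_lt_of_mem ha hRf
    have : ¬ ∀ p ∈ Q, ∃ A ∈ gen (R \ {a}), sep A p := by
      intro h
      have := hRmin (R \ {a}) ⟨sdiff_subset.trans hRC, hRf.subset sdiff_subset, h⟩
      omega
    push Not at this
    obtain ⟨p, ⟨x, f, hf, hf1, rfl⟩, hp⟩ := this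
    refine ⟨x, f, hf, hf1, ?_⟩
    rintro D ⟨b, hb, y, hD⟩ hDs
    have hba : b = a := by
      by_contra hne
      exact hp D ⟨b, ⟨hb, hne⟩, y, hD⟩ hDs
    subst hba
    refine ⟨y * g⁻¹, ?_⟩
    rcases hA with rfl | rfl <;> rcases hD with rfl | rfl <;>
      simp [gsmul_compl, mul_smul]

end NFsec
end VF

/-! ### Part 5 -/

namespace VF
open Set
open scoped Pointwise

section Tree
variable {G : Type*} [Group G] {F : Subgroup G} {𝓔 : Set (Set G)}

/-- The head vertex of the oriented edge `A`. -/
def tv (𝓔 : Set (Set G)) (A : Set G) : Set (Set G) := {B | B ∈ 𝓔 ∧ (A ⊆ B ∨ Aᶜ ⊂ B)}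

/-- Vertices of the tree. -/
def IsV (𝓔 : Set (Set G)) (o : Set (Set G)) : Prop := ∃ A ∈ 𝓔, o = tv 𝓔 A

/-- Minimal element of a vertex. -/
def Mn (o : Set (Set G)) (A : Set G) : Prop := A ∈ o ∧ ∀ B ∈ o, B ⊆ A → B = A

theorem isV_tv {A : Set G} (hA : A ∈ 𝓔) : IsV 𝓔 (tv 𝓔 A) := ⟨A, hA, rfl⟩

theorem isV_sub {o} (h : IsV 𝓔 o) : o ⊆ 𝓔 := by
  obtain ⟨A, hA, rfl⟩ := h; exact fun B hB => hB.1

theorem tv_up {A B C : Set G} (hB : B ∈ tv 𝓔 A) (hC : C ∈ 𝓔) (h : B ⊆ C) : C ∈ tv 𝓔 A := by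
  rcases hB.2 with h1 | h1
  · exact ⟨hC, Or.inl (h1.trans h)⟩
  · exact ⟨hC, Or.inr (h1.trans_subset h)⟩

theorem isV_up {o} (ho : IsV 𝓔 o) {B C : Set G} (hB : B ∈ o) (hC : C ∈ 𝓔) (h : B ⊆ C) : C ∈ o := by
  obtain ⟨A, hA, rfl⟩ := ho; exact tv_up hB hC h

theorem not_sub_both (hE : NF F 𝓔) {A B : Set G} (hA : A ∈ 𝓔) (h1 : A ⊆ B) (h2 : A ⊆ Bᶜ) : False := by
  obtain ⟨x, hx⟩ := hE.nonempty A hA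
  exact h2 hx (h1 hx)

theorem tv_compl (hE : NF F 𝓔) {A B : Set G} (hA : A ∈ 𝓔) (hB : B ∈ 𝓔) :
    B ∈ tv 𝓔 A ↔ Bᶜ ∉ tv 𝓔 A := by
  have hA' := hE.compl A hA
  have hB' := hE.compl B hB
  constructor
  · rintro ⟨-, h1 | h1⟩ ⟨-, h2 | h2⟩
    · exact not_sub_both hE hA h1 h2
    · exact (h2.not_subset) (compl_subset_compl.2 h1)
    · have := subset_compl_comm.1 h2
      exact h1.not_subset (subset_compl_comm.1 h2)
    · exact not_sub_both hE hA' h1.subset h2.subset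
  · intro h
    rcases hE.nested A hA B hB with h1 | h1 | h1 | h1
    · exact ⟨hB, Or.inl h1⟩
    · exact absurd ⟨hB', Or.inl h1⟩ h
    · by_cases he : Aᶜ = B
      · exact absurd ⟨hB', Or.inl (by rw [← he, _root_.compl_compl])⟩ h
      · exact ⟨hB, Or.inr (h1.ssubset_of_ne he)⟩
    · by_cases he : Aᶜ = Bᶜ
      · exact ⟨hB, Or.inl (compl_injective he).subset⟩
      · exact absurd ⟨hB', Or.inr (h1.ssubset_of_ne he)⟩ h

theorem isV_compl (hE : NF F 𝓔) {o} (ho : IsV 𝓔 o) {B : Set G} (hB : B ∈ 𝓔) :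
    B ∈ o ↔ Bᶜ ∉ o := by
  obtain ⟨A, hA, rfl⟩ := ho; exact tv_compl hE hA hB

theorem mn_tv (hE : NF F 𝓔) {A : Set G} (hA : A ∈ 𝓔) : Mn (tv 𝓔 A) A := by
  refine ⟨⟨hA, Or.inl subset_rfl⟩, ?_⟩
  rintro B ⟨hB, h | h⟩ h2
  · exact subset_antisymm h2 h
  · exact (not_sub_both hE (hE.compl A hA) (h.subset.trans h2) subset_rfl).elim

theorem isV_ext (hE : NF F 𝓔) {o o'} (ho : IsV 𝓔 o) (ho' : IsV 𝓔 o') (h : o ⊆ o') : o = o' := by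
  apply subset_antisymm h
  intro B hB
  have hBE := isV_sub ho' hB
  by_contra hn
  have h1 : Bᶜ ∈ o := by
    by_contra h2
    exact hn ((isV_compl hE ho hBE).2 h2)
  exact (isV_compl hE ho' hBE).1 hB (h h1)

theorem eq_tv (hE : NF F 𝓔) {o} (ho : IsV 𝓔 o) {A : Set G} (hA : Mn o A) : o = tv 𝓔 A := by
  have hAE := isV_sub ho hA.1
  refine isV_ext hE ho ⟨A, hAE, rfl⟩ ?_
  intro B hB
  have hBE := isV_sub ho hB
  refine ⟨hBE, ?_⟩
  rcases hE.nested A hAE B hBE with h1 | h1 | h1 | h1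
  · exact Or.inl h1
  · exact absurd (isV_up ho hA.1 (hE.compl B hBE) h1) ((isV_compl hE ho hBE).1 hB)
  · right
    refine h1.ssubset_of_ne fun he => ?_
    rw [← he] at hB
    exact (isV_compl hE ho hAE).1 hA.1 hB
  · left
    exact (hA.2 B hB (compl_subset_compl.1 h1)).symm.subset

theorem mn_two (hE : NF F 𝓔) {o} (ho : IsV 𝓔 o) {A D : Set G} (hA : Mn o A) (hD : Mn o D)
    (hne : A ≠ D) : Aᶜ ⊂ D := by
  have := hD.1
  rw [eq_tv hE ho hA] at this
  rcases this.2 with h | h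
  · exact absurd (hD.2 A hA.1 h) hne
  · exact h

theorem exists_mn (hE : NF F 𝓔) {o} (ho : IsV 𝓔 o) {B : Set G} (hB : B ∈ o) :
    ∃ D, Mn o D ∧ D ⊆ B := by
  obtain ⟨A, hA, rfl⟩ := ho
  by_cases hAB : A ⊆ B
  · exact ⟨A, mn_tv hE hA, hAB⟩
  obtain ⟨x, hx⟩ := hE.nonempty _ (hE.compl A hA)
  obtain ⟨y, hy⟩ := hE.nonempty _ (hE.compl B hB.1)
  have hsub : ∀ C ∈ tv 𝓔 A, C ⊆ B → x ∈ C ∧ y ∉ C := by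
    rintro C ⟨hC, h | h⟩ h2
    · exact absurd (h.trans h2) hAB
    · exact ⟨h.subset hx, fun h3 => hy (h2 h3)⟩
  have hfin : {C | C ∈ tv 𝓔 A ∧ C ⊆ B}.Finite :=
    (hE.interval x y).subset fun C hC => ⟨hC.1.1, hsub C hC.1 hC.2⟩
  obtain ⟨D, hDm⟩ := hfin.exists_minimal ⟨B, hB, subset_rfl⟩
  refine ⟨D, ⟨hDm.prop.1, fun C hC hCD => ?_⟩, hDm.prop.2⟩
  exact subset_antisymm hCD (hDm.le_of_le ⟨hC, hCD.trans hDm.prop.2⟩ hCD)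

theorem diff_finite (hE : NF F 𝓔) {o o'} (ho : IsV 𝓔 o) (ho' : IsV 𝓔 o') : (o \ o').Finite := by
  obtain ⟨A, hA, rfl⟩ := ho
  obtain ⟨A', hA', rfl⟩ := ho'
  obtain ⟨x, hx⟩ := hE.nonempty A hA
  obtain ⟨x', hx'⟩ := hE.nonempty _ (hE.compl A hA)
  obtain ⟨y, hy⟩ := hE.nonempty A' hA'
  obtain ⟨y', hy'⟩ := hE.nonempty _ (hE.compl A' hA')
  refine ((hE.interval x y).union ((hE.interval x y').union ((hE.interval x' y).union
    (hE.interval x' y')))).subset ?_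
  rintro B ⟨⟨hB, h1⟩, h2⟩
  have h3 : Bᶜ ∈ tv 𝓔 A' := by
    by_contra h; exact h2 ((tv_compl hE hA' hB).2 h)
  rcases h1 with h1 | h1 <;> rcases h3.2 with h3 | h3
  · exact Or.inl ⟨hB, h1 hx, h3 hy⟩
  · exact Or.inr (Or.inl ⟨hB, h1 hx, h3.subset hy'⟩)
  · exact Or.inr (Or.inr (Or.inl ⟨hB, h1.subset hx', h3 hy⟩))
  · exact Or.inr (Or.inr (Or.inr ⟨hB, h1.subset hx', h3.subset hy'⟩))

theorem exists_first (hE : NF F 𝓔) {o o'} (ho : IsV 𝓔 o) (ho' : IsV 𝓔 o') (hne : o ≠ o') :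
    ∃ D, Mn o D ∧ D ∉ o' := by
  have : ¬ o ⊆ o' := fun h => hne (isV_ext hE ho ho' h)
  obtain ⟨B, hB, hB'⟩ := not_subset.1 this
  obtain ⟨D, hD, hDB⟩ := exists_mn hE ho hB
  exact ⟨D, hD, fun h => hB' (isV_up ho' h (isV_sub ho hB) hDB)⟩

theorem first_unique (hE : NF F 𝓔) {o o'} (ho : IsV 𝓔 o) (ho' : IsV 𝓔 o') {D D' : Set G}
    (h1 : Mn o D) (h2 : D ∉ o') (h3 : Mn o D') (h4 : D' ∉ o') : D = D' := by
  by_contra hne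
  have h := mn_two hE ho h1 h3 hne
  have hD := isV_sub ho h1.1
  have : Dᶜ ∈ o' := by
    by_contra h; exact h2 ((isV_compl hE ho' hD).2 h)
  exact h4 (isV_up ho' this (isV_sub ho h3.1) h.subset)

theorem flip_diff (hE : NF F 𝓔) {D : Set G} (hD : D ∈ 𝓔) {r} (hr : IsV 𝓔 r) (hDr : D ∉ r) :
    tv 𝓔 Dᶜ \ r = (tv 𝓔 D \ r) \ {D} := by
  have hDc : Dᶜ ∈ r := by
    by_contra h; exact hDr ((isV_compl hE hr hD).2 h)
  ext B
  simp only [mem_sdiff, mem_singleton_iff]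
  constructor
  · rintro ⟨⟨hB, h⟩, hBr⟩
    have hne : B ≠ D := by
      rintro rfl
      exact (tv_compl hE (hE.compl _ hD) hB).1 ⟨hB, h⟩ (mn_tv hE (hE.compl _ hD)).1
    refine ⟨⟨⟨hB, ?_⟩, hBr⟩, hne⟩
    rw [_root_.compl_compl] at h
    rcases h with h | h
    · right
      refine h.ssubset_of_ne ?_
      rintro rfl; exact hBr hDc
    · exact Or.inl h.subset
  · rintro ⟨⟨⟨hB, h⟩, hBr⟩, hne⟩
    refine ⟨⟨hB, ?_⟩, hBr⟩
    rw [_root_.compl_compl]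
    rcases h with h | h
    · exact Or.inr (h.ssubset_of_ne (Ne.symm hne))
    · exact Or.inl h.subset

theorem flip_ncard (hE : NF F 𝓔) {D : Set G} (hD : D ∈ 𝓔) {r} (hr : IsV 𝓔 r) (hDr : D ∉ r) :
    (tv 𝓔 D \ r).ncard = (tv 𝓔 Dᶜ \ r).ncard + 1 := by
  rw [flip_diff hE hD hr hDr]
  have hm : D ∈ tv 𝓔 D \ r := ⟨(mn_tv hE hD).1, hDr⟩
  exact (Set.ncard_sdiff_singleton_add_one hm (diff_finite hE (isV_tv hD) hr)).symm

theorem vconn (hE : NF F 𝓔) {r} (hr : IsV 𝓔 r) (P : Set (Set G) → Prop) (h0 : P r)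
    (hs : ∀ A ∈ 𝓔, P (tv 𝓔 Aᶜ) → P (tv 𝓔 A)) : ∀ o, IsV 𝓔 o → P o := by
  have : ∀ n : ℕ, ∀ o, IsV 𝓔 o → (o \ r).ncard = n → P o := by
    intro n
    induction n with
    | zero =>
      intro o ho hn
      rw [Set.ncard_eq_zero (diff_finite hE ho hr)] at hn
      rw [isV_ext hE ho hr (sdiff_eq_empty.1 hn)]; exact h0
    | succ n ih =>
      intro o ho hn
      have hne : o ≠ r := by
        rintro rfl; simp at hn
      obtain ⟨D, hD, hDr⟩ := exists_first hE ho hr hne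
      have hDE := isV_sub ho hD.1
      have e := eq_tv hE ho hD
      rw [e] at hn ⊢
      apply hs D hDE
      apply ih _ (isV_tv (hE.compl D hDE))
      have := flip_ncard hE hDE hr hDr
      omega
  exact fun o ho => this _ o ho rfl

/-- A potential for the edge labelling `τ`. -/
def IsPot {K : Type*} [Group K] (𝓔 : Set (Set G)) (τ : Set G → K) (p : Set (Set G) → K) : Prop :=
  ∀ A ∈ 𝓔, p (tv 𝓔 A) = τ Aᶜ * p (tv 𝓔 Aᶜ)

open Classical in
/-- Auxiliary recursion for potentials. -/
noncomputable def potAux {K : Type*} [Group K] (𝓔 : Set (Set G)) (τ : Set G → K)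
    (r : Set (Set G)) : ℕ → Set (Set G) → K
  | 0, _ => 1
  | n + 1, o => if h : ∃ D, Mn o D ∧ D ∉ r then
      τ (h.choose)ᶜ * potAux 𝓔 τ r n (tv 𝓔 (h.choose)ᶜ) else 1

theorem exists_pot {K : Type*} [Group K] (hE : NF F 𝓔) {τ : Set G → K}
    (hτ : ∀ A ∈ 𝓔, τ Aᶜ = (τ A)⁻¹) : ∃ p, IsPot 𝓔 τ p := by
  by_cases hne : 𝓔.Nonempty
  swap
  · exact ⟨fun _ => 1, fun A hA => absurd ⟨A, hA⟩ hne⟩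
  obtain ⟨A0, hA0⟩ := hne
  let r := tv 𝓔 A0
  have hr : IsV 𝓔 r := isV_tv hA0
  let p : Set (Set G) → K := fun o => potAux 𝓔 τ r (o \ r).ncard o
  have key : ∀ A ∈ 𝓔, A ∉ r → p (tv 𝓔 A) = τ Aᶜ * p (tv 𝓔 Aᶜ) := by
    intro A hA hAr
    have h : ∃ D, Mn (tv 𝓔 A) D ∧ D ∉ r := ⟨A, mn_tv hE hA, hAr⟩
    have hc : h.choose = A :=
      first_unique hE (isV_tv hA) hr h.choose_spec.1 h.choose_spec.2 (mn_tv hE hA) hAr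
    simp only [p]
    rw [flip_ncard hE hA hr hAr]
    simp only [potAux]
    rw [dif_pos h, hc]
  refine ⟨p, fun A hA => ?_⟩
  by_cases hAr : A ∈ r
  · have h1 := key Aᶜ (hE.compl A hA) ((isV_compl hE hr hA).1 hAr)
    rw [_root_.compl_compl] at h1
    rw [h1, hτ A hA]; simp
  · exact key A hA hAr

theorem pot_unique {K : Type*} [Group K] (hE : NF F 𝓔) {τ : Set G → K} {p p' : Set (Set G) → K}
    (hp : IsPot 𝓔 τ p) (hp' : IsPot 𝓔 τ p') {o o'} (ho : IsV 𝓔 o) (ho' : IsV 𝓔 o') :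
    p o * (p o')⁻¹ = p' o * (p' o')⁻¹ := by
  have := vconn hE ho' (fun o => (p' o)⁻¹ * p o = (p' o')⁻¹ * p o') rfl (by
    intro A hA h
    rw [hp A hA, hp' A hA, ← h]; group) o ho
  have h2 : p o = p' o * ((p' o')⁻¹ * p o') := by rw [← this]; group
  rw [h2]; group

theorem smul_tv (hE : NF F 𝓔) (g : G) (A : Set G) : g • tv 𝓔 A = tv 𝓔 (g • A) := by
  ext B
  rw [Set.mem_smul_set_iff_inv_smul_mem]
  have h1 : g⁻¹ • B ∈ 𝓔 ↔ B ∈ 𝓔 := ⟨fun h => by simpa using hE.smul _ h g, fun h => hE.smul _ h _⟩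
  have h2 : ∀ C : Set G, C ⊆ g⁻¹ • B ↔ g • C ⊆ B := fun C => by
    rw [Set.subset_smul_set_iff, inv_inv]
  have h3 : ∀ C : Set G, C ⊂ g⁻¹ • B ↔ g • C ⊂ B := fun C => by
    rw [ssubset_iff_subset_not_subset, ssubset_iff_subset_not_subset, h2]
    have h4 : g⁻¹ • B ⊆ C ↔ B ⊆ g • C := by
      rw [Set.smul_set_subset_iff_subset_inv_smul_set, inv_inv]
    rw [h4]
  simp only [tv, mem_ofPred_eq, h1, h2, h3, gsmul_compl]

theorem isV_smul (hE : NF F 𝓔) {o} (ho : IsV 𝓔 o) (g : G) : IsV 𝓔 (g • o) := by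
  obtain ⟨A, hA, rfl⟩ := ho
  exact ⟨g • A, hE.smul A hA g, smul_tv hE g A⟩

theorem mn_smul {o : Set (Set G)} {A : Set G} (h : Mn o A) (g : G) : Mn (g • o) (g • A) := by
  refine ⟨Set.smul_mem_smul_set h.1, fun B hB hBA => ?_⟩
  rw [Set.mem_smul_set_iff_inv_smul_mem] at hB
  have := h.2 _ hB (by rw [Set.smul_set_subset_iff_subset_inv_smul_set, inv_inv]; exact hBA)
  rw [← this]; simp

theorem pot_equiv {K : Type*} [Group K] (hE : NF F 𝓔) {τ : Set G → K} {p : Set (Set G) → K}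
    (hp : IsPot 𝓔 τ p) {φ : G →* K}
    (hφ : ∀ A ∈ 𝓔, ∀ g, τ (g • A) = φ g * τ A * (φ g)⁻¹) {o o'} (ho : IsV 𝓔 o) (ho' : IsV 𝓔 o')
    (g : G) : p (g • o) * (p (g • o'))⁻¹ = φ g * (p o * (p o')⁻¹) * (φ g)⁻¹ := by
  have hp' : IsPot 𝓔 τ (fun o => (φ g)⁻¹ * p (g • o)) := by
    intro A hA
    dsimp only
    rw [smul_tv hE, smul_tv hE, hp _ (hE.smul A hA g), ← gsmul_compl, hφ _ (hE.compl A hA)]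
    group
  rw [pot_unique hE hp hp' ho ho']
  group

theorem exists_twist {K : Type*} [Group K] (hE : NF F 𝓔) {τ : Set G → K}
    (hτ : ∀ A ∈ 𝓔, τ Aᶜ = (τ A)⁻¹) (φ : G →* K)
    (hφ : ∀ A ∈ 𝓔, ∀ g, τ (g • A) = φ g * τ A * (φ g)⁻¹) {v} (hv : IsV 𝓔 v)
    (N : Subgroup K) (hN : N.Normal) (hτN : ∀ A ∈ 𝓔, τ A ∈ N) :
    ∃ (p : Set (Set G) → K) (ψ : G →* K), IsPot 𝓔 τ p ∧
      (∀ g, ψ g = p v * (p (g • v))⁻¹ * φ g) ∧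
      (∀ w, IsV 𝓔 w → ∀ g, g • w = w →
        ψ g = (p v * (p w)⁻¹) * φ g * (p v * (p w)⁻¹)⁻¹) ∧
      (∀ g, ψ g * (φ g)⁻¹ ∈ N) := by
  obtain ⟨p, hp⟩ := exists_pot hE hτ
  have eqv := fun g w (hw : IsV 𝓔 w) => pot_equiv hE hp hφ hv hw g
  refine ⟨p, MonoidHom.mk' (fun g => p v * (p (g • v))⁻¹ * φ g) ?_, hp, fun g => rfl, ?_, ?_⟩
  · intro g h
    have e := eqv g (h • v) (isV_smul hE hv h)
    rw [mul_smul, map_mul]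
    have e2 : (p (g • h • v))⁻¹ = (p (g • v))⁻¹ * (φ g * (p v * (p (h • v))⁻¹) * (φ g)⁻¹) := by
      rw [← e]; group
    rw [e2]; group
  · intro w hw g hg
    have e := eqv g w hw
    rw [hg] at e
    have e2 : (p (g • v))⁻¹ = (p w)⁻¹ * (φ g * (p v * (p w)⁻¹) * (φ g)⁻¹)⁻¹ := by
      rw [← e]; group
    simp only [MonoidHom.mk'_apply]
    rw [e2]; group
  · intro g
    simp only [MonoidHom.mk'_apply]
    have : ∀ o, IsV 𝓔 o → p v * (p o)⁻¹ ∈ N := vconn hE hv _ (by simp) (by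
      intro A hA h
      rw [hp A hA]
      have := N.mul_mem h (N.inv_mem (hτN _ (hE.compl A hA)))
      convert this using 1; group)
    simpa using this _ (isV_smul hE hv g)

theorem fixfree (hE : NF F 𝓔) (tf : ∀ f ∈ F, f ≠ 1 → ¬ IsOfFinOrder f) {f : G} (hf : f ∈ F)
    (hf1 : f ≠ 1) {o} (ho : IsV 𝓔 o) : f • o ≠ o := by
  intro hfix
  obtain ⟨B, hB, hsB⟩ := hE.sep 1 f hf hf1
  obtain ⟨B, hB, hsB, hBo⟩ : ∃ B ∈ 𝓔, VF.sep B (pt 1 f) ∧ B ∈ o := by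
    by_cases h : B ∈ o
    · exact ⟨B, hB, hsB, h⟩
    · refine ⟨Bᶜ, hE.compl B hB, sep_compl.2 hsB, ?_⟩
      by_contra h2; exact h ((isV_compl hE ho hB).2 h2)
  have hfix' : f⁻¹ • o = o := by rw [inv_smul_eq_iff]; exact hfix.symm
  have pw : ∀ n : ℕ, f ^ n • o = o ∧ f⁻¹ ^ n • o = o := by
    intro n
    induction n with
    | zero => simp
    | succ n ih => rw [pow_succ, pow_succ, mul_smul, mul_smul, hfix, hfix']; exact ih
  obtain ⟨A, hA, rfl⟩ := ho
  obtain ⟨a, ha⟩ := hE.nonempty A hA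
  obtain ⟨b, hb⟩ := hE.nonempty _ (hE.compl A hA)
  have hor : ∀ g : G, g • tv 𝓔 A = tv 𝓔 A → g⁻¹ * a ∈ B ∨ g⁻¹ * b ∈ B := by
    intro g hg
    have : g • B ∈ tv 𝓔 A := hg ▸ Set.smul_mem_smul_set hBo
    rcases this.2 with h | h
    · left; exact mem_gsmul.1 (h ha)
    · right; exact mem_gsmul.1 (h.subset hb)
  have hAI := hE.ai B hB
  have hfo := tf f hf hf1
  have main : ∀ f : G, ¬ IsOfFinOrder f → (∀ n : ℕ, f ^ n * a ∈ B ∨ f ^ n * b ∈ B) →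
      B ∈ lim (fun n => 1 * f ^ n) := by
    intro f hfo h
    by_contra hn
    have h1 := (hAI.lim (pow_inj hfo 1) a).not.2 hn
    have h2 := (hAI.lim (pow_inj hfo 1) b).not.2 hn
    rw [mem_lim, ← Ultrafilter.eventually_not] at h1 h2
    obtain ⟨n, hn1, hn2⟩ := (h1.and h2).exists
    rw [one_mul] at hn1 hn2
    rcases h n with h | h
    · exact hn1 h
    · exact hn2 h
  apply hsB
  have m1 := main f hfo (fun n => by
    have := hor _ (pw n).2
    simpa using this)
  have m2 := main f⁻¹ (by rwa [isOfFinOrder_inv_iff]) (fun n => by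
    have := hor _ (pw n).1
    simpa using this)
  exact ⟨fun _ => m2, fun _ => m1⟩

theorem leave (hE : NF F 𝓔) (tf : ∀ f ∈ F, f ≠ 1 → ¬ IsOfFinOrder f) (hF : F.Normal)
    {A : Set G} (hA : A ∈ 𝓔) :
    ∃ D, Mn (tv 𝓔 A) D ∧ D ≠ A ∧ ∃ g : G, D = g • A ∨ D = g • Aᶜ := by
  have main : ∀ g f : G, f ∈ F → f ≠ 1 → A ∈ lim (fun n => g * f ^ n) →
      A ∉ lim (fun n => g * f⁻¹ ^ n) → ∃ D, Mn (tv 𝓔 A) D ∧ D ≠ A ∧ VF.sep D (pt g f) := by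
    intro g f hf hf1 h1 h2
    by_contra hcon
    push Not at hcon
    have hall : ∀ D, Mn (tv 𝓔 A) D → D ∈ lim (fun n => g * f ^ n) := by
      intro D hD
      by_contra hn
      have hne : A ≠ D := by rintro rfl; exact hn h1
      have hsub := mn_two hE (isV_tv hA) (mn_tv hE hA) hD hne
      refine hcon D hD hne.symm ?_
      intro hiff
      apply hn
      apply hiff.2
      have : Aᶜ ∈ lim (fun n => g * f⁻¹ ^ n) := Ultrafilter.compl_mem_iff_notMem.2 h2
      exact Filter.mem_of_superset this hsub.subset
    have hchar : ∀ B ∈ 𝓔, (B ∈ tv 𝓔 A ↔ B ∈ lim (fun n => g * f ^ n)) := by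
      have h1 : ∀ B ∈ tv 𝓔 A, B ∈ lim (fun n => g * f ^ n) := by
        intro B hB
        obtain ⟨D, hD, hDB⟩ := exists_mn hE (isV_tv hA) hB
        exact Filter.mem_of_superset (hall D hD) hDB
      intro B hB
      refine ⟨h1 B, fun h => ?_⟩
      by_contra hn
      have : Bᶜ ∈ tv 𝓔 A := by by_contra h2; exact hn ((tv_compl hE hA hB).2 h2)
      exact Ultrafilter.compl_mem_iff_notMem.1 (h1 _ this) h
    have hinv : (g * f * g⁻¹)⁻¹ • tv 𝓔 A = tv 𝓔 A := by
      refine isV_ext hE (isV_smul hE (isV_tv hA) _) (isV_tv hA) ?_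
      intro B hB
      have hBE : B ∈ 𝓔 := isV_sub (isV_smul hE (isV_tv hA) _) hB
      rw [hchar B hBE]
      rw [Set.mem_smul_set_iff_inv_smul_mem, inv_inv, hchar _ (hE.smul B hBE _)] at hB
      rw [mem_lim] at hB
      rw [← (hE.ai B hBE).lim (pow_inj (tf f hf hf1) g) f⁻¹, mem_lim]
      filter_upwards [hB] with n hn
      rw [mem_gsmul] at hn
      convert hn using 1
      have : f⁻¹ * f ^ n = f ^ n * f⁻¹ := ((Commute.refl f).inv_left.pow_right n).eq
      calc g * f ^ n * f⁻¹ = g * (f ^ n * f⁻¹) := by group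
        _ = g * (f⁻¹ * f ^ n) := by rw [this]
        _ = _ := by group
    refine fixfree hE tf (f := (g * f * g⁻¹)⁻¹) (F.inv_mem (hF.conj_mem f hf g)) ?_ (isV_tv hA) hinv
    rw [ne_eq, inv_eq_one, conj_eq_one_iff]; exact hf1
  obtain ⟨g, f, hf, hf1, hmin⟩ := hE.minl A hA
  obtain ⟨D0, hD0, hs0⟩ := hE.sep g f hf hf1
  obtain ⟨h, hh⟩ := hmin D0 hD0 hs0
  have hsA : VF.sep A (pt (h⁻¹ * g) f) := by
    rw [← sep_smul h, gp_pt, mul_inv_cancel_left]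
    rcases hh with rfl | rfl
    · exact hs0
    · exact sep_compl.1 hs0
  have fin : ∀ D, D ∈ 𝓔 → VF.sep D (pt (h⁻¹ * g) f) → ∃ g : G, D = g • A ∨ D = g • Aᶜ := by
    intro D hD hs
    rw [← sep_smul h, gp_pt, mul_inv_cancel_left] at hs
    obtain ⟨y, hy⟩ := hmin _ (hE.smul D hD h) hs
    refine ⟨h⁻¹ * y, ?_⟩
    rcases hy with hy | hy
    · left; rw [mul_smul, ← hy]; simp
    · right; rw [mul_smul, gsmul_compl, ← hy]; simp
  by_cases hA1 : A ∈ lim (fun n => (h⁻¹ * g) * f ^ n)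
  · have hA2 : A ∉ lim (fun n => (h⁻¹ * g) * f⁻¹ ^ n) := by
      intro h2; exact hsA ⟨fun _ => h2, fun _ => hA1⟩
    obtain ⟨D, d1, d2, d3⟩ := main _ f hf hf1 hA1 hA2
    exact ⟨D, d1, d2, fin D (isV_sub (isV_tv hA) d1.1) d3⟩
  · have hA2 : A ∈ lim (fun n => (h⁻¹ * g) * f⁻¹ ^ n) := by
      by_contra h2; exact hsA ⟨fun h => absurd h hA1, fun h => absurd h h2⟩
    obtain ⟨D, d1, d2, d3⟩ := main _ f⁻¹ (F.inv_mem hf) (by simpa using hf1) hA2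
      (by rw [inv_inv]; exact hA1)
    refine ⟨D, d1, d2, fin D (isV_sub (isV_tv hA) d1.1) ?_⟩
    simp only [VF.sep, pt, inv_inv] at d3 ⊢
    tauto

end Tree
end VF

/-! ### Part 6 -/

set_option linter.unusedVariables false
set_option linter.unusedSectionVars false
namespace VF
open Set
open scoped Pointwise

universe u
abbrev Z2 := Multiplicative (ZMod 2)

/-- Free groups are residually finite, permutation form. -/
theorem free_resfin {α : Type u} (w : FreeGroup α) (hw : w ≠ 1) :
    ∃ (S : Type u) (_ : Fintype S) (ρ : FreeGroup α →* Equiv.Perm S), ρ w ≠ 1 := by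
  classical
  let S : Finset (FreeGroup α) := (w.toWord.tails.map FreeGroup.mk).toFinset
  have hstep : ∀ a : α, ∃ σ : Equiv.Perm S, ∀ s : S, ∀ h : FreeGroup.of a * s.1 ∈ S,
      σ s = ⟨FreeGroup.of a * s.1, h⟩ := by
    intro a
    let p : S → Prop := fun s => FreeGroup.of a * s.1 ∈ S
    let q : S → Prop := fun s => (FreeGroup.of a)⁻¹ * s.1 ∈ S
    let e : {s : S // p s} ≃ {s : S // q s} :=
      { toFun := fun s => ⟨⟨FreeGroup.of a * s.1.1, s.2⟩, by
          change (FreeGroup.of a)⁻¹ * (FreeGroup.of a * s.1.1) ∈ S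
          rw [inv_mul_cancel_left]; exact s.1.2⟩
        invFun := fun s => ⟨⟨(FreeGroup.of a)⁻¹ * s.1.1, s.2⟩, by
          change (FreeGroup.of a) * ((FreeGroup.of a)⁻¹ * s.1.1) ∈ S
          rw [mul_inv_cancel_left]; exact s.1.2⟩
        left_inv := fun s => by ext; simp
        right_inv := fun s => by ext; simp }
    refine ⟨e.extendSubtype, fun s h => ?_⟩
    rw [Equiv.extendSubtype_apply_of_mem e s h]
    rfl
  choose σ hσ using hstep
  have h1 : (1 : FreeGroup α) ∈ S := by
    simp only [S, List.mem_toFinset, List.mem_map, List.mem_tails]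
    exact ⟨[], List.nil_suffix, rfl⟩
  have key : ∀ L : List (α × Bool), L <:+ w.toWord →
      ((FreeGroup.lift σ (FreeGroup.mk L)) ⟨1, h1⟩).1 = FreeGroup.mk L := by
    intro L
    induction L with
    | nil => intro _; simp [← FreeGroup.one_eq_mk]
    | cons x L ih =>
      intro hL
      have he := ih ((List.suffix_cons x L).trans hL)
      have hmem : FreeGroup.mk (x :: L) ∈ S := by
        simp only [S, List.mem_toFinset, List.mem_map, List.mem_tails]
        exact ⟨_, hL, rfl⟩
      obtain ⟨a, b⟩ := x
      have hsp : FreeGroup.mk ((a, b) :: L) = FreeGroup.mk [(a, b)] * FreeGroup.mk L := by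
        rw [FreeGroup.mul_mk]; rfl
      rw [hsp] at hmem ⊢
      rw [map_mul, Equiv.Perm.mul_apply]
      set t := FreeGroup.lift σ (FreeGroup.mk L) ⟨1, h1⟩ with ht
      rw [← he] at hmem ⊢
      cases b with
      | true =>
        have : FreeGroup.lift σ (FreeGroup.mk [(a, true)]) = σ a := FreeGroup.lift_apply_of
        rw [this, hσ a t hmem]
        rfl
      | false =>
        have h3 : FreeGroup.mk [(a, false)] = (FreeGroup.of a)⁻¹ := rfl
        have : FreeGroup.lift σ (FreeGroup.mk [(a, false)]) = (σ a)⁻¹ := by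
          rw [h3, map_inv, FreeGroup.lift_apply_of]
        rw [this, h3]
        rw [h3] at hmem
        have h5 := hσ a ⟨_, hmem⟩ (by rw [mul_inv_cancel_left]; exact t.2)
        have h6 : σ a ⟨_, hmem⟩ = t := by rw [h5]; ext1; simp
        have h7 : (σ a)⁻¹ t = ⟨_, hmem⟩ := by rw [Equiv.Perm.inv_eq_iff_eq]; exact h6.symm
        rw [h7]
  refine ⟨S, inferInstance, FreeGroup.lift σ, fun h => ?_⟩
  have he := key w.toWord (List.suffix_refl _)
  rw [FreeGroup.mk_toWord, h] at he
  exact hw he.symm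

theorem free_hopf {α : Type*} [Finite α] (f : FreeGroup α →* FreeGroup α)
    (hf : Function.Surjective f) : Function.Injective f := by
  rw [injective_iff_map_eq_one]
  intro w hw
  by_contra hne
  obtain ⟨S, _, ρ, hρ⟩ := free_resfin w hne
  classical
  have : Finite (FreeGroup α →* Equiv.Perm S) := Finite.of_equiv _ FreeGroup.lift
  have hinj : Function.Injective (fun θ : FreeGroup α →* Equiv.Perm S => θ.comp f) := by
    intro a b hab
    ext1
    rename_i x
    obtain ⟨y, hy⟩ := hf (FreeGroup.of x)
    rw [← hy]
    exact DFunLike.congr_fun hab y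
  obtain ⟨θ, hθ⟩ := (Finite.injective_iff_surjective.1 hinj) ρ
  apply hρ
  rw [← hθ]
  simp [hw]

theorem free_inj {α : Type*} [Finite α] (θ : FreeGroup α →* FreeGroup α)
    (h : ∀ χ : FreeGroup α →* Z2, χ.comp θ = χ) : Function.Injective θ := by
  classical
  let β := IsFreeGroup.Generators θ.range
  let E : FreeGroup β ≃* θ.range := IsFreeGroup.mulEquiv θ.range
  let r : FreeGroup α →* FreeGroup β := E.symm.toMonoidHom.comp θ.rangeRestrict
  have hr : Function.Surjective r := E.symm.surjective.comp θ.rangeRestrict_surjective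
  have : Group.FG (FreeGroup α) := inferInstance
  have hfg : Group.FG (FreeGroup β) := Group.fg_of_surjective hr
  have : Finite β := freeGroup_fg_finite hfg
  have hbij : Function.Bijective (fun χ : FreeGroup β →* Z2 => χ.comp r) := by
    constructor
    · intro a b hab
      ext1
      rename_i x
      obtain ⟨y, hy⟩ := hr (FreeGroup.of x)
      rw [← hy]
      exact DFunLike.congr_fun hab y
    · intro χ
      refine ⟨(χ.comp θ.range.subtype).comp E.toMonoidHom, ?_⟩
      ext x
      simp only [MonoidHom.comp_apply, r, MulEquiv.coe_toMonoidHom, MulEquiv.apply_symm_apply]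
      exact DFunLike.congr_fun (h χ) (FreeGroup.of x)
  have hc : Nat.card (β → Z2) = Nat.card (α → Z2) :=
    Nat.card_congr ((FreeGroup.lift.trans (Equiv.ofBijective _ hbij)).trans FreeGroup.lift.symm)
  have hz : Nat.card Z2 = 2 := by simp [Z2]
  rw [Nat.card_fun, Nat.card_fun, hz] at hc
  have hc2 : Nat.card β = Nat.card α := Nat.pow_right_injective le_rfl hc
  let q : β ≃ α := (Finite.card_eq.1 hc2).some
  have := free_hopf ((FreeGroup.freeGroupCongr q).toMonoidHom.comp r)
    ((FreeGroup.freeGroupCongr q).surjective.comp hr)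
  have hri : Function.Injective r := Function.Injective.of_comp (f := FreeGroup.freeGroupCongr q) this
  have h2 : Function.Injective θ.rangeRestrict := Function.Injective.of_comp (f := E.symm) hri
  intro a b hab
  exact h2 (Subtype.ext hab)

theorem inj_near {G : Type*} [Group G] [Group.FG G] {α : Type*} (F : Subgroup G) [hF : F.Normal]
    [F.FiniteIndex] (e : F ≃* FreeGroup α) :
    ∃ N : Subgroup G, N.Normal ∧ N.FiniteIndex ∧ N ≤ F ∧
      ∀ ψ : G →* G, (∀ g, ψ g * g⁻¹ ∈ N) → Function.Injective ψ := by
  classical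
  have : Group.FG F := by
    exact Subgroup.fg_of_index_ne_zero F
  have hfg : Group.FG (FreeGroup α) := Group.fg_of_surjective (f := e.toMonoidHom) e.surjective
  have : Finite α := freeGroup_fg_finite hfg
  have : Finite (F →* Z2) := by
    have : Finite (FreeGroup α →* Z2) := Finite.of_equiv _ FreeGroup.lift
    refine Finite.of_injective (β := FreeGroup α →* Z2) (fun χ => χ.comp e.symm.toMonoidHom) ?_
    intro a b hab
    ext x
    have := DFunLike.congr_fun hab (e x)
    simpa using this
  let K : Subgroup F := ⨅ χ : F →* Z2, χ.ker
  have hKi : K.FiniteIndex := by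
    refine Subgroup.finiteIndex_iInf fun χ => ?_
    infer_instance
  have hmem : ∀ x : G, x ∈ K.map F.subtype ↔ ∃ h : x ∈ F, ∀ χ : F →* Z2, χ ⟨x, h⟩ = 1 := by
    intro x
    simp only [Subgroup.mem_map, K, Subgroup.mem_iInf, MonoidHom.mem_ker]
    constructor
    · rintro ⟨y, hy, rfl⟩; exact ⟨y.2, hy⟩
    · rintro ⟨h, hy⟩; exact ⟨⟨x, h⟩, hy, rfl⟩
  refine ⟨K.map F.subtype, ⟨?_⟩, ?_, ?_, ?_⟩
  · intro x hx g
    rw [hmem] at hx ⊢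
    obtain ⟨h, hx⟩ := hx
    refine ⟨hF.conj_mem x h g, fun χ => ?_⟩
    exact hx (χ.comp (MulAut.conjNormal g).toMonoidHom)
  · constructor
    rw [Subgroup.index_map_subtype]
    exact mul_ne_zero hKi.index_ne_zero Subgroup.FiniteIndex.index_ne_zero
  · intro x hx
    exact ((hmem x).1 hx).1
  · intro ψ hψ
    have hle : ∀ x ∈ F, ψ x ∈ F := by
      intro x hx
      have := F.mul_mem ((hmem _).1 (hψ x)).1 hx
      simpa using this
    let θ : F →* F := (ψ.comp F.subtype).codRestrict F (fun x => hle x x.2)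
    have hθ : ∀ (χ : F →* Z2) x, χ (θ x) = χ x := by
      intro χ x
      obtain ⟨h, hx⟩ := (hmem _).1 (hψ x)
      have := hx χ
      have h2 : (⟨ψ x * (x : G)⁻¹, h⟩ : F) = θ x * x⁻¹ := rfl
      rw [h2, map_mul, map_inv, mul_inv_eq_one] at this
      exact this
    have hi := free_inj ((e.toMonoidHom.comp θ).comp e.symm.toMonoidHom) (by
      intro χ
      ext x
      have := hθ (χ.comp e.toMonoidHom) (e.symm (FreeGroup.of x))
      simpa using this)
    rw [injective_iff_map_eq_one]
    intro g hg
    have hgF : g ∈ F := by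
      have := ((hmem _).1 (hψ g)).1
      rw [hg, one_mul] at this
      exact F.inv_mem_iff.1 this
    have h1 : θ ⟨g, hgF⟩ = 1 := Subtype.ext hg
    have h2 : e ⟨g, hgF⟩ = 1 := hi (by simp [h1])
    have h3 : (⟨g, hgF⟩ : F) = 1 := by simpa using h2
    exact congrArg Subtype.val h3
end VF

/-! ### Part 7 -/

set_option linter.unusedVariables false
set_option linter.unusedSectionVars false
namespace VF
open Set
open scoped Pointwise

section Claim
variable {G : Type*} [Group G] {F N : Subgroup G} {𝓔 : Set (Set G)}

theorem inj_quot {H : Subgroup G} (h : ∀ x ∈ H, x ∈ N → x = 1) :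
    Function.Injective (fun x : H => (QuotientGroup.mk (x : G) : G ⧸ N)) := by
  intro x y hxy
  have := QuotientGroup.eq.1 hxy
  have h2 := h _ (H.mul_mem (H.inv_mem x.2) y.2) this
  exact Subtype.ext (inv_mul_eq_one.1 h2)

theorem fin_of_triv [N.FiniteIndex] {H : Subgroup G} (h : ∀ x ∈ H, x ∈ N → x = 1) :
    (H : Set G).Finite := by
  have : Finite (G ⧸ N) := Subgroup.finite_quotient_of_finiteIndex
  have := Finite.of_injective _ (inj_quot h)
  exact this

theorem card_of_triv [N.FiniteIndex] {H : Subgroup G} (h : ∀ x ∈ H, x ∈ N → x = 1) :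
    Nat.card H ≤ N.index := by
  have : Finite (G ⧸ N) := Subgroup.finite_quotient_of_finiteIndex
  exact Nat.card_le_card_of_injective _ (inj_quot h)

theorem exists_cent [N.FiniteIndex] {H : Subgroup G} (h : ¬ (H : Set G).Finite) :
    ∃ x ∈ H, x ∈ N ∧ x ≠ 1 := by
  by_contra hn
  push Not at hn
  exact h (fin_of_triv (N := N) hn)

theorem out_seq (ho : OutFinite G) (ψ : ℕ → G →* G) (hψ : ∀ m, Function.Bijective (ψ m)) :
    ∃ I : Set ℕ, I.Infinite ∧ ∃ m0 ∈ I, ∀ m ∈ I, ∃ x, ∀ g, ψ m g = x * ψ m0 g * x⁻¹ := by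
  let Ψ : ℕ → MulAut G := fun m => MulEquiv.ofBijective (ψ m) (hψ m)
  have : Finite (MulAut G ⧸ (MulAut.conj : G →* MulAut G).range) :=
    @Subgroup.finite_quotient_of_finiteIndex _ _ _ ho
  obtain ⟨q, hq⟩ := Finite.exists_infinite_fiber
    (fun m => (QuotientGroup.mk (Ψ m) : MulAut G ⧸ (MulAut.conj : G →* MulAut G).range))
  rw [Set.infinite_coe_iff] at hq
  obtain ⟨m0, hm0⟩ := hq.nonempty
  refine ⟨_, hq, m0, hm0, fun m hm => ?_⟩
  have h1 := QuotientGroup.eq.1 (hm0.trans hm.symm)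
  obtain ⟨y, hy⟩ := h1
  refine ⟨ψ m0 y, fun g => ?_⟩
  have h2 : Ψ m = Ψ m0 * MulAut.conj y := by rw [hy]; group
  have h3 : Ψ m g = Ψ m0 (y * g * y⁻¹) := by rw [h2]; rfl
  have h4 : ψ m g = ψ m0 (y * g * y⁻¹) := h3
  rw [h4]; simp

/-- Twists along an edge orbit. -/
theorem twist {K : Type*} [Group K] (hE : NF F 𝓔) (φ : G →* K) {A : Set G} (hA : A ∈ 𝓔) (s : K)
    (hs : ∀ g : G, g • A = A → φ g * s = s * φ g) (M : Subgroup K) (hM : M.Normal) (hsM : s ∈ M)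
    {v} (hv : IsV 𝓔 v) :
    ∃ (σ : Set G → K) (p : Set (Set G) → K) (ψ : G →* K),
      (∀ g : G, σ (g • A) = φ g * s * (φ g)⁻¹) ∧ (∀ B, (¬ ∃ g : G, B = g • A) → σ B = 1) ∧
      IsPot 𝓔 (fun B => (σ Bᶜ)⁻¹ * σ B) p ∧
      (∀ g, ψ g = p v * (p (g • v))⁻¹ * φ g) ∧
      (∀ w, IsV 𝓔 w → ∀ g : G, g • w = w →
        ψ g = (p v * (p w)⁻¹) * φ g * (p v * (p w)⁻¹)⁻¹) ∧
      (∀ g, ψ g * (φ g)⁻¹ ∈ M) := by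
  classical
  let σ : Set G → K := fun B => if h : ∃ g : G, B = g • A then
    φ h.choose * s * (φ h.choose)⁻¹ else 1
  have h1 : ∀ g : G, σ (g • A) = φ g * s * (φ g)⁻¹ := by
    intro g
    have h : ∃ k : G, g • A = k • A := ⟨g, rfl⟩
    have e : σ (g • A) = φ h.choose * s * (φ h.choose)⁻¹ := dif_pos h
    have hc := h.choose_spec
    rw [e]
    generalize h.choose = k at hc ⊢
    have := hs (g⁻¹ * k) (by rw [mul_smul, ← hc, inv_smul_smul])
    rw [map_mul, map_inv] at this
    have h3 : φ k * s = φ g * s * (φ g)⁻¹ * φ k := by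
      have h4 : φ k * s = φ g * ((φ g)⁻¹ * φ k * s) := by group
      rw [h4, this]; group
    rw [h3]; group
  have h2 : ∀ B, (¬ ∃ g : G, B = g • A) → σ B = 1 := fun B hB => dif_neg hB
  have h3 : ∀ (g : G) B, σ (g • B) = φ g * σ B * (φ g)⁻¹ := by
    intro g B
    by_cases h : ∃ k : G, B = k • A
    · obtain ⟨k, rfl⟩ := h
      rw [← mul_smul, h1, h1, map_mul]; group
    · rw [h2 B h, h2]
      · group
      · rintro ⟨k, hk⟩
        exact h ⟨g⁻¹ * k, by rw [mul_smul, ← hk, inv_smul_smul]⟩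
  have h4 : ∀ B, σ B ∈ M := by
    intro B
    by_cases h : ∃ k : G, B = k • A
    · obtain ⟨k, rfl⟩ := h
      rw [h1]; exact hM.conj_mem s hsM _
    · rw [h2 B h]; exact M.one_mem
  obtain ⟨p, ψ, hp⟩ := exists_twist hE (τ := fun B => (σ Bᶜ)⁻¹ * σ B)
    (fun B hB => by simp) φ (fun B hB g => by
      rw [← gsmul_compl, h3, h3]; group) hv M hM
    (fun B hB => M.mul_mem (M.inv_mem (h4 _)) (h4 _))
  exact ⟨σ, p, ψ, h1, h2, hp⟩

theorem pot_edge {K : Type*} [Group K] (hE : NF F 𝓔) {σ : Set G → K} {p : Set (Set G) → K}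
    (hp : IsPot 𝓔 (fun B => (σ Bᶜ)⁻¹ * σ B) p) {A : Set G} (hA : A ∈ 𝓔) :
    p (tv 𝓔 A) * (p (tv 𝓔 Aᶜ))⁻¹ = (σ A)⁻¹ * σ Aᶜ := by
  rw [hp A hA]; simp

/-- the twist in the HNN situation -/
theorem twist_hnn {K : Type*} [Group K] (hE : NF F 𝓔) (φ : G →* K) {A : Set G} (hA : A ∈ 𝓔) (s : K)
    (hs : ∀ g : G, g • A = A → φ g * s = s * φ g) (M : Subgroup K) (hM : M.Normal) (hsM : s ∈ M)
    (hinv : ¬ ∃ g : G, Aᶜ = g • A) {h : G} (hh : h • tv 𝓔 Aᶜ = tv 𝓔 A) :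
    ∃ ψ : G →* K, ψ h = s * φ h ∧ (∀ g, ψ g * (φ g)⁻¹ ∈ M) := by
  obtain ⟨σ, p, ψ, h1, h2, hp, h3, -, h4⟩ :=
    twist hE φ hA s hs M hM hsM (isV_tv (hE.compl A hA))
  refine ⟨ψ, ?_, h4⟩
  have e := pot_edge hE hp hA
  have e1 := h1 1
  rw [one_smul, map_one, one_mul, inv_one, mul_one] at e1
  rw [h2 _ hinv, e1, mul_one] at e
  rw [h3, hh]
  congr 1
  rw [← inv_inj, mul_inv_rev, inv_inv, e]

structure Cx (F N : Subgroup G) (𝓔 : Set (Set G)) : Prop where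
  nf : NF F 𝓔
  tf : ∀ f ∈ F, f ≠ 1 → ¬ IsOfFinOrder f
  fn : F.Normal
  ff : F.FiniteIndex
  nn : N.Normal
  nfi : N.FiniteIndex
  nle : N ≤ F
  tw : ∀ ψ : G →* G, (∀ g, ψ g * g⁻¹ ∈ N) → Function.Bijective ψ
  out : OutFinite G

theorem pow_cent {C : Subgroup G} (hC : (C : Set G).Finite) [N.FiniteIndex] {h : G}
    (hh : ∀ x ∈ C, h * x * h⁻¹ ∈ C) :
    ∃ j : ℕ, 0 < j ∧ h ^ j ∈ N ∧ ∀ x ∈ C, x * h ^ j = h ^ j * x := by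
  have : Finite (G ⧸ N) := Subgroup.finite_quotient_of_finiteIndex
  have : Finite C := hC
  have hp : ∀ n : ℕ, ∀ x ∈ C, h ^ n * x * (h ^ n)⁻¹ ∈ C := by
    intro n
    induction n with
    | zero => intro x hx; simpa using hx
    | succ n ih =>
      intro x hx
      have := hh _ (ih x hx)
      convert this using 1
      rw [pow_succ']; group
  let f : ℕ → (C → C) × (G ⧸ N) := fun n =>
    (fun x => ⟨h ^ n * x * (h ^ n)⁻¹, hp n x x.2⟩, QuotientGroup.mk (h ^ n))
  obtain ⟨m, n, hmn, hf⟩ : ∃ m n, m < n ∧ f m = f n := by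
    obtain ⟨a, b, hab, he⟩ := Finite.exists_ne_map_eq_of_infinite f
    rcases lt_or_gt_of_ne hab with h | h
    · exact ⟨a, b, h, he⟩
    · exact ⟨b, a, h, he.symm⟩
  have hd : h ^ (n - m) = (h ^ m)⁻¹ * h ^ n := by
    rw [eq_inv_mul_iff_mul_eq, ← pow_add]; congr 1; omega
  refine ⟨n - m, by omega, ?_, fun x hx => ?_⟩
  · rw [hd]
    exact QuotientGroup.eq.1 (congrArg Prod.snd hf)
  · have e := congrArg Subtype.val (congrFun (congrArg Prod.fst hf) ⟨x, hx⟩)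
    simp only [f] at e
    rw [hd]
    have e2 : x * (h ^ m)⁻¹ = (h ^ m)⁻¹ * (h ^ m * x * (h ^ m)⁻¹) := by group
    rw [← mul_assoc, e2, e]; group

theorem stab_le (hE : NF F 𝓔) {A : Set G} {g : G} (h : g • A = A) : g • tv 𝓔 A = tv 𝓔 A := by
  rw [smul_tv hE, h]

theorem infpow {c : G} (hc : ¬ IsOfFinOrder c) {m n : ℤ} (h : c ^ m = c ^ n) : m = n :=
  injective_zpow_iff_not_isOfFinOrder.2 hc h

theorem lemR (X : Cx F N 𝓔) {A : Set G} (hA : A ∈ 𝓔) :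
    ∃ g : G, g • tv 𝓔 A = tv 𝓔 A ∧ g • A ≠ A := by
  have hE := X.nf
  have := X.nfi
  by_contra hV
  push Not at hV
  obtain ⟨D, hD, hDA, h, hh⟩ := leave hE X.tf X.fn hA
  have hDv : tv 𝓔 A = tv 𝓔 D := eq_tv hE (isV_tv hA) hD
  have h1 : ∀ g : G, D ≠ g • A := by
    rintro g rfl
    apply hDA
    apply hV
    rw [smul_tv hE, hDv]
  rcases hh with hh | hh
  · exact h1 h hh
  have hinv : ¬ ∃ g : G, Aᶜ = g • A := by
    rintro ⟨g, hg⟩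
    exact h1 (h * g) (by rw [hh, hg, mul_smul])
  have hw : h • tv 𝓔 Aᶜ = tv 𝓔 A := by rw [smul_tv hE, ← hh, hDv]
  have hC : ((MulAction.stabilizer G A : Subgroup G) : Set G).Finite := hE.stab A hA
  obtain ⟨j, hj, hjN, hjc⟩ := pow_cent (N := N) hC (h := h) (by
    intro x hx
    rw [MulAction.mem_stabilizer_iff] at hx ⊢
    apply hV
    have hx' : x • Aᶜ = Aᶜ := by rw [gsmul_compl, hx]
    have := stab_le hE hx'
    rw [mul_smul, mul_smul, ← hw, inv_smul_smul, this])
  have hψ : ∀ m : ℕ, ∃ ψ : G →* G, ψ h = (h ^ j) ^ m * h ∧ Function.Bijective ψ := by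
    intro m
    obtain ⟨ψ, e, hψ⟩ := twist_hnn hE (MonoidHom.id G) hA ((h ^ j) ^ m) (by
      intro g hg
      have : Commute g (h ^ j) := hjc g hg
      exact (this.pow_right m).eq) N X.nn (N.pow_mem hjN m) hinv hw
    exact ⟨ψ, e, X.tw ψ hψ⟩
  choose ψ hψ hb using hψ
  obtain ⟨χ, hχ, -⟩ := twist_hnn hE (1 : G →* Multiplicative ℤ) hA (Multiplicative.ofAdd 1)
    (fun g _ => mul_comm _ _) ⊤ inferInstance trivial hinv hw
  rw [MonoidHom.one_apply, mul_one] at hχ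
  obtain ⟨I, hI, m0, hm0, hx⟩ := out_seq X.out ψ hb
  obtain ⟨m, hm, hne⟩ := hI.exists_notMem_finset {m0}
  obtain ⟨x, hx⟩ := hx m hm
  have e := congrArg χ (hx h)
  rw [hψ, hψ] at e
  simp only [map_mul, map_pow, map_inv, hχ] at e
  rw [mul_comm (χ x), mul_inv_cancel_right] at e
  have e2 := mul_right_cancel e
  have e3 := congrArg Multiplicative.toAdd e2
  simp only [toAdd_pow, toAdd_ofAdd] at e3
  simp at e3
  rcases e3 with e3 | e3
  · exact hne (by simpa using e3)
  · omega

theorem vfin (X : Cx F N 𝓔) {o} (ho : IsV 𝓔 o) {g : G} (hg : g • o = o) (hF : g ∈ F) : g = 1 := by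
  by_contra h
  exact fixfree X.nf X.tf hF h ho hg

/-- Every edge stabilizer has finite centralizer. -/
theorem edge_big (X : Cx F N 𝓔) {A : Set G} (hA : A ∈ 𝓔) :
    (Subgroup.centralizer (MulAction.stabilizer G A : Set G) : Set G).Finite := by
  have hE := X.nf
  have := X.nfi
  have := X.ff
  by_contra hcon
  have triv : ∀ B ∈ 𝓔, ∀ x ∈ MulAction.stabilizer G B, x ∈ F → x = 1 := fun B hB x hx hxF =>
    vfin X (isV_tv hB) (stab_le hE hx) hxF
  obtain ⟨A, ⟨hA, hsm⟩, hmax⟩ := exists_min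
    {B | B ∈ 𝓔 ∧ ¬ (Subgroup.centralizer (MulAction.stabilizer G B : Set G) : Set G).Finite}
    ⟨A, hA, hcon⟩ (fun B => F.index - Nat.card (MulAction.stabilizer G B))
  have bigV : ∀ A, A ∈ 𝓔 → (∀ D ∈ 𝓔, ¬ (Subgroup.centralizer (MulAction.stabilizer G D : Set G) :
      Set G).Finite → Nat.card (MulAction.stabilizer G D) ≤ Nat.card (MulAction.stabilizer G A)) →
      (Subgroup.centralizer (MulAction.stabilizer G (tv 𝓔 A) : Set G) : Set G).Finite := by
    intro A hA hm
    by_contra hn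
    obtain ⟨z, hz, hzF, hz1⟩ := exists_cent (N := F) hn
    have hv := isV_tv hA
    have hzv := fixfree hE X.tf hzF hz1 hv
    obtain ⟨D, hD, hDn⟩ := exists_first hE hv (isV_smul hE hv z) (Ne.symm hzv)
    have hDE := isV_sub hv hD.1
    have heq : MulAction.stabilizer G D = MulAction.stabilizer G (tv 𝓔 A) := by
      apply le_antisymm
      · intro g hg
        rw [MulAction.mem_stabilizer_iff] at hg ⊢
        rw [eq_tv hE hv hD]
        exact stab_le hE hg
      · intro g hg
        have hc := Subgroup.mem_centralizer_iff.1 hz g hg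
        rw [MulAction.mem_stabilizer_iff] at hg ⊢
        have h1 := mn_smul hD g
        rw [hg] at h1
        refine first_unique hE hv (isV_smul hE hv z) h1 (fun h => hDn ?_) hD hDn
        rw [Set.mem_smul_set_iff_inv_smul_mem, ← mul_smul] at h
        have h2 : z⁻¹ * g = g * z⁻¹ := by
          rw [inv_mul_eq_iff_eq_mul, ← mul_assoc, ← hc]; group
        rw [h2, mul_smul] at h
        have h3 : g⁻¹ • tv 𝓔 A = tv 𝓔 A := by rw [inv_smul_eq_iff, hg]
        have h4 : z⁻¹ • D ∈ g⁻¹ • tv 𝓔 A := by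
          rw [Set.mem_smul_set_iff_inv_smul_mem, inv_inv]; exact h
        rw [h3] at h4
        rw [Set.mem_smul_set_iff_inv_smul_mem]; exact h4
    have hle := hm D hDE (by rw [heq]; exact hn)
    obtain ⟨g, hg1, hg2⟩ := lemR X hA
    rw [heq] at hle
    have hVf : ((MulAction.stabilizer G (tv 𝓔 A) : Subgroup G) : Set G).Finite :=
      fin_of_triv (N := F) (fun x hx hxF => vfin X hv hx hxF)
    have hlt : (MulAction.stabilizer G A : Set G) ⊂ (MulAction.stabilizer G (tv 𝓔 A) : Set G) := by
      refine ⟨fun x hx => stab_le hE hx, fun h => hg2 (h hg1)⟩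
    have := Set.ncard_lt_ncard hlt hVf
    rw [← Nat.card_coe_set_eq, ← Nat.card_coe_set_eq] at this
    exact absurd hle (not_le.2 this)
  have hmA : ∀ D ∈ 𝓔, ¬ (Subgroup.centralizer (MulAction.stabilizer G D : Set G) :
      Set G).Finite → Nat.card (MulAction.stabilizer G D) ≤ Nat.card (MulAction.stabilizer G A) := by
    intro D hD hDs
    have h1 := hmax D ⟨hD, hDs⟩
    have h2 := card_of_triv (N := F) (triv D hD)
    have h3 := card_of_triv (N := F) (triv A hA)
    omega
  have hst : MulAction.stabilizer G Aᶜ = MulAction.stabilizer G A := by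
    ext g
    rw [MulAction.mem_stabilizer_iff, MulAction.mem_stabilizer_iff, gsmul_compl, compl_inj_iff]
  have hV := bigV A hA hmA
  have hW := bigV Aᶜ (hE.compl A hA) (by rw [hst]; exact hmA)
  obtain ⟨c, hc, hcN, hc1⟩ := exists_cent (N := N) hsm
  have hcinf := X.tf c (X.nle hcN) hc1
  have htw := fun m : ℕ => twist hE (MonoidHom.id G) hA (c ^ m) (by
      intro g hg
      have : Commute g c := Subgroup.mem_centralizer_iff.1 hc g hg
      exact (this.pow_right m).eq) N X.nn (N.pow_mem hcN m) (isV_tv hA)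
  choose σ p ψ h1 h2 h3 h4 h5 h6 using htw
  obtain ⟨I, hI, m0, hm0, hx⟩ := out_seq X.out ψ (fun m => X.tw _ (h6 m))
  let d : ℕ → G := fun m => p m (tv 𝓔 A) * (p m (tv 𝓔 Aᶜ))⁻¹
  have hd : ∀ m, d m = (σ m A)⁻¹ * σ m Aᶜ := fun m => pot_edge hE (h3 m) hA
  let T : Set G := (Subgroup.centralizer (MulAction.stabilizer G (tv 𝓔 A) : Set G) : Set G) *
    ({d m0} : Set G) * (Subgroup.centralizer (MulAction.stabilizer G (tv 𝓔 Aᶜ) : Set G) : Set G)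
  have hT : T.Finite := (hV.mul (Set.finite_singleton _)).mul hW
  have hmaps : Set.MapsTo d I T := by
    intro m hm
    obtain ⟨x, hx⟩ := hx m hm
    have hxV : x ∈ Subgroup.centralizer (MulAction.stabilizer G (tv 𝓔 A) : Set G) := by
      rw [Subgroup.mem_centralizer_iff]
      intro g hg
      have e1 := h5 m _ (isV_tv hA) g hg
      have e2 := h5 m0 _ (isV_tv hA) g hg
      have e3 := hx g
      rw [e1, e2] at e3
      simp only [mul_inv_cancel, one_mul, inv_one, mul_one, MonoidHom.id_apply] at e3
      nth_rewrite 1 [e3]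
      group
    have hyW : (d m0)⁻¹ * x⁻¹ * d m ∈
        Subgroup.centralizer (MulAction.stabilizer G (tv 𝓔 Aᶜ) : Set G) := by
      rw [Subgroup.mem_centralizer_iff]
      intro g hg
      have e1 : ψ m g = d m * g * (d m)⁻¹ := h5 m _ (isV_tv (hE.compl A hA)) g hg
      have e2 : ψ m0 g = d m0 * g * (d m0)⁻¹ := h5 m0 _ (isV_tv (hE.compl A hA)) g hg
      have e3 := hx g
      rw [e1, e2] at e3
      have e4 : d m * g = x * (d m0 * g * (d m0)⁻¹) * x⁻¹ * d m := by rw [← e3]; group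
      rw [mul_assoc _ (d m) g, e4]; group
    refine ⟨x * d m0, ⟨x, hxV, d m0, rfl, rfl⟩, _, hyW, ?_⟩
    dsimp only
    group
  obtain ⟨m, hm, m', hm', hne, hdd⟩ := hI.exists_ne_map_eq_of_mapsTo hmaps hT
  have hσA : ∀ m, σ m A = c ^ m := by
    intro m
    have := h1 m 1
    simpa using this
  rw [hd, hd, hσA, hσA] at hdd
  by_cases hinv : ∃ g : G, Aᶜ = g • A
  · obtain ⟨h, hh⟩ := hinv
    rw [hh, h1, h1] at hdd
    simp only [MonoidHom.id_apply] at hdd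
    have hcm : h * c ^ ((m : ℤ) - m') = c ^ ((m : ℤ) - m') * h := by
      rw [zpow_sub, zpow_natCast, zpow_natCast]
      have e1 : h * c ^ m = c ^ m * ((c ^ m')⁻¹ * (h * c ^ m' * h⁻¹)) * h := by
        rw [← hdd]; group
      rw [← mul_assoc, e1]; group
    set j : ℤ := (m : ℤ) - m' with hj
    have hj0 : j ≠ 0 := by
      intro h0; apply hne; omega
    have hB : c ^ j • A ∈ 𝓔 := hE.smul A hA _
    have hhA : h • A = Aᶜ := hh.symm
    have hhAc : h • Aᶜ = A := by rw [gsmul_compl, hhA, _root_.compl_compl]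
    have hhB : h • (c ^ j • A) = (c ^ j • A)ᶜ := by
      rw [← mul_smul, hcm, mul_smul, hhA, gsmul_compl]
    have hhBc : h • (c ^ j • A)ᶜ = c ^ j • A := by rw [gsmul_compl, hhB, _root_.compl_compl]
    have hsub : ∀ S T : Set G, S ⊆ T → h • S ⊆ h • T := fun S T h => Set.smul_set_mono h
    have hor : c ^ j • A = A ∨ c ^ j • A = Aᶜ := by
      rcases hE.nested A hA _ hB with h1 | h1 | h1 | h1
      · left
        have := hsub _ _ h1
        rw [hhA, hhB, compl_subset_compl] at this
        exact subset_antisymm this h1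
      · right
        have := hsub _ _ h1
        rw [hhA, hhBc] at this
        exact subset_antisymm (subset_compl_comm.1 h1) this
      · right
        have := hsub _ _ h1
        rw [hhAc, hhB] at this
        exact subset_antisymm (subset_compl_comm.1 this) h1
      · left
        have := hsub _ _ h1
        rw [hhAc, hhBc] at this
        exact subset_antisymm (compl_subset_compl.1 h1) this
    have hfix : c ^ (j + j) • A = A := by
      rw [zpow_add, mul_smul]
      rcases hor with h | h
      · rw [h, h]
      · rw [h, gsmul_compl, h, _root_.compl_compl]
    have h0 := triv A hA _ hfix (F.zpow_mem (X.nle hcN) _)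
    have := infpow hcinf (h0.trans (zpow_zero c).symm)
    omega
  · rw [h2 m _ hinv, h2 m' _ hinv, mul_one, mul_one, inv_inj] at hdd
    have := infpow hcinf (m := m) (n := m') (by rw [zpow_natCast, zpow_natCast, hdd])
    exact hne (by exact_mod_cast this)

end Claim
end VF

/-! ### Part 8 -/

set_option linter.unusedVariables false
set_option linter.unusedSectionVars false
namespace VF
open Set
open scoped Pointwise

section Fix
variable {G : Type*} [Group G] {F N : Subgroup G} {𝓔 : Set (Set G)}

/-- Setwise stabilizer of the pair `{A, Aᶜ}`. -/
def Mst (A : Set G) : Subgroup G where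
  carrier := {g | g • A = A ∨ g • A = Aᶜ}
  one_mem' := Or.inl (one_smul _ _)
  mul_mem' := by
    rintro a b (ha | ha) (hb | hb)
    · left; rw [mul_smul, hb, ha]
    · right; rw [mul_smul, hb, gsmul_compl, ha]
    · right; rw [mul_smul, hb, ha]
    · left; rw [mul_smul, hb, gsmul_compl, ha, _root_.compl_compl]
  inv_mem' := by
    rintro a (ha | ha)
    · left; rw [inv_smul_eq_iff, ha]
    · right; rw [inv_smul_eq_iff, gsmul_compl, ha, _root_.compl_compl]

theorem mem_Mst {A : Set G} {g : G} : g ∈ Mst A ↔ g • A = A ∨ g • A = Aᶜ := Iff.rfl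

theorem stab_mono {k : G} (hk : IsOfFinOrder k) {B : Set G} (h : B ⊆ k • B) : k • B = B := by
  obtain ⟨n, hn, hkn⟩ := (isOfFinOrder_iff_pow_eq_one).1 hk
  have hp : ∀ i : ℕ, B ⊆ k ^ i • B := by
    intro i
    induction i with
    | zero => simp
    | succ i ih =>
      rw [pow_succ', mul_smul]
      exact h.trans (Set.smul_set_mono ih)
  refine subset_antisymm ?_ h
  have h1 := Set.smul_set_mono (a := k) (hp (n - 1))
  rw [← mul_smul, ← pow_succ'] at h1
  have : n - 1 + 1 = n := by omega
  rwa [this, hkn, one_smul] at h1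

theorem nested_cases (hE : NF F 𝓔) {A B : Set G} (hA : A ∈ 𝓔) (hB : B ∈ 𝓔) :
    A ⊆ B ∨ A ⊆ Bᶜ ∨ Aᶜ ⊆ B ∨ B ⊆ A := by
  rcases hE.nested A hA B hB with h | h | h | h
  · exact Or.inl h
  · exact Or.inr (Or.inl h)
  · exact Or.inr (Or.inr (Or.inl h))
  · exact Or.inr (Or.inr (Or.inr (compl_subset_compl.1 h)))

/-- A finite subgroup fixes a vertex or stabilizes an edge. -/
theorem fixpt (hE : NF F 𝓔) (hne : 𝓔.Nonempty) (K : Subgroup G) (hK : (K : Set G).Finite) :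
    (∃ A ∈ 𝓔, K ≤ MulAction.stabilizer G (tv 𝓔 A)) ∨ (∃ A ∈ 𝓔, K ≤ Mst A) := by
  classical
  have hfo : ∀ k ∈ K, IsOfFinOrder k := by
    intro k hk
    have : Finite K := hK
    have := isOfFinOrder_of_finite (⟨k, hk⟩ : K)
    exact Submonoid.isOfFinOrder_coe.2 this
  let tr : Set G → Set G := fun B => B ∩ K
  have trf : ∀ B, (tr B).Finite := fun B => hK.subset inter_subset_right
  have trk : ∀ k ∈ K, ∀ B, tr (k • B) = k • tr B := by
    intro k hk B
    simp only [tr, Set.smul_set_inter]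
    congr 1
    ext x
    rw [mem_gsmul]
    simp only [SetLike.mem_coe]
    exact (K.mul_mem_cancel_left (K.inv_mem hk)).symm
  have trc : ∀ B, tr Bᶜ = (K : Set G) \ tr B := by
    intro B; ext x; simp only [tr, mem_inter_iff, mem_compl_iff, mem_sdiff, SetLike.mem_coe]; tauto
  have trm : ∀ {B C : Set G}, B ⊆ C → tr B ⊆ tr C := fun h => inter_subset_inter_left _ h
  let n : Set G → ℕ := fun B => (tr B).ncard
  have nk : ∀ k ∈ K, ∀ B, n (k • B) = n B := by
    intro k hk B
    simp only [n]
    rw [trk k hk]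
    exact Set.ncard_smul_set k (tr B)
  have nc : ∀ B, n B + n Bᶜ = (K : Set G).ncard := by
    intro B
    simp only [n]
    rw [trc, add_comm]
    exact Set.ncard_sdiff_add_ncard_of_subset inter_subset_right hK
  have nm : ∀ {B C : Set G}, B ⊆ C → n B ≤ n C := fun h => Set.ncard_le_ncard (trm h) (trf _)
  have hKpos : 0 < (K : Set G).ncard := (Set.ncard_pos hK).2 ⟨1, K.one_mem⟩
  set q := (K : Set G).ncard with hq
  by_cases tie : ∃ B ∈ 𝓔, 2 * n B = q
  · -- ties
    obtain ⟨B0, hB0, hn0⟩ := tie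
    set T := tr B0 with hT
    have hTn : T.ncard = n B0 := rfl
    obtain ⟨x, hx⟩ : T.Nonempty := by
      have h0 : 0 < T.ncard := by omega
      exact (Set.ncard_pos (trf _)).1 h0
    obtain ⟨y, hy⟩ : ((K : Set G) \ T).Nonempty := by
      have h1 := nc B0
      rw [← trc]
      rw [← Set.ncard_pos (trf _)]
      change 0 < n B0ᶜ
      omega
    -- edges with trace `T`
    let 𝒯 : Set (Set G) := {B | B ∈ 𝓔 ∧ tr B = T}
    have hTT : ∀ B, B ∈ 𝒯 → ∀ C, C ∈ 𝒯 → B ⊆ C ∨ C ⊆ B := by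
      rintro B ⟨hB, hBt⟩ C ⟨hC, hCt⟩
      rcases nested_cases hE hB hC with h | h | h | h
      · exact Or.inl h
      · exfalso
        have := trm h
        rw [trc, hBt, hCt] at this
        exact (this hx).2 hx
      · exfalso
        have := trm h
        rw [trc, hBt, hCt] at this
        exact hy.2 (this hy)
      · exact Or.inr h
    have hfin : 𝒯.Finite := by
      refine (hE.interval x y).subset ?_
      rintro B ⟨hB, hBt⟩
      refine ⟨hB, ?_, ?_⟩
      · rw [← hBt] at hx; exact hx.1
      · intro h; exact hy.2 (by rw [← hBt]; exact ⟨h, hy.1⟩)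
    have htrace : ∀ k ∈ K, ∀ B, B ∈ 𝒯 → k • T = T ∨ k • T = (K : Set G) \ T := by
      rintro k hk B ⟨hB, hBt⟩
      have e : tr (k • B) = k • T := by rw [trk k hk, hBt]
      have hc : (k • T).ncard = T.ncard := Set.ncard_smul_set k T
      have hT2 : ((K : Set G) \ T).ncard = T.ncard := by
        have h1 := nc B0
        have h2 : n B0ᶜ = ((K : Set G) \ T).ncard := by rw [← trc]
        omega
      have hTf : T.Finite := trf _
      rcases nested_cases hE (hE.smul B hB k) hB with h | h | h | h
      · left
        have := trm h
        rw [e, hBt] at this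
        exact Set.eq_of_subset_of_ncard_le this hc.ge hTf
      · right
        have := trm h
        rw [e, trc, hBt] at this
        exact Set.eq_of_subset_of_ncard_le this (by omega) (hK.subset sdiff_subset)
      · right
        have := trm h
        rw [trc, e, hBt] at this
        have h3 : (K : Set G) \ k • T = T := by
          refine Set.eq_of_subset_of_ncard_le this ?_ hTf
          have h4 : k • T ⊆ (K : Set G) := by rw [← e]; exact inter_subset_right
          have h5 := Set.ncard_sdiff_add_ncard_of_subset h4 hK
          omega
        have h4 : k • T ⊆ (K : Set G) := by rw [← e]; exact inter_subset_right
        have h6 := Set.sdiff_sdiff_cancel_left h4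
        rw [h3] at h6
        exact h6.symm
      · left
        have := trm h
        rw [e, hBt] at this
        exact (Set.eq_of_subset_of_ncard_le this hc.le (by rw [← e]; exact trf _)).symm
    have hK1 : ∀ k ∈ K, k • T = T → ∀ B, B ∈ 𝒯 → k • B = B := by
      rintro k hk hkT B ⟨hB, hBt⟩
      have hkB : k • B ∈ 𝒯 := ⟨hE.smul B hB k, by rw [trk k hk, hBt, hkT]⟩
      rcases hTT B ⟨hB, hBt⟩ _ hkB with h | h
      · exact stab_mono (hfo k hk) h
      · have : k⁻¹ • B = B := by
          apply stab_mono ((hfo k hk).inv)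
          rw [← Set.smul_set_subset_iff_subset_inv_smul_set]; exact h
        rw [inv_smul_eq_iff] at this
        exact this.symm
    have hB0T : B0 ∈ 𝒯 := ⟨hB0, rfl⟩
    by_cases hall : ∀ k ∈ K, k • T = T
    · right
      exact ⟨B0, hB0, fun k hk => Or.inl (hK1 k hk (hall k hk) B0 hB0T)⟩
    push Not at hall
    obtain ⟨k0, hk0, hk0T⟩ := hall
    have hk0T' : k0 • T = (K : Set G) \ T := (htrace k0 hk0 B0 hB0T).resolve_left hk0T
    have hTK : T ⊆ (K : Set G) := inter_subset_right
    have hswap : ∀ k ∈ K, k • T ≠ T → ∀ B, B ∈ 𝒯 → k • B = k0 • B := by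
      intro k hk hkT B hB
      have h1 : k • T = (K : Set G) \ T := (htrace k hk B0 hB0T).resolve_left hkT
      have h2 : (k0⁻¹ * k) • T = T := by rw [mul_smul, h1, ← hk0T', inv_smul_smul]
      have h3 := hK1 _ (K.mul_mem (K.inv_mem hk0) hk) h2 B hB
      rw [mul_smul, inv_smul_eq_iff] at h3
      exact h3
    let f : Set G → Set G := fun B => (k0 • B)ᶜ
    have hf : ∀ B, B ∈ 𝒯 → f B ∈ 𝒯 := by
      rintro B ⟨hB, hBt⟩
      refine ⟨hE.compl _ (hE.smul B hB _), ?_⟩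
      simp only [f]
      rw [trc, trk k0 hk0, hBt, hk0T', Set.sdiff_sdiff_cancel_left hTK]
    have hfm : ∀ {B C : Set G}, B ⊆ C → f C ⊆ f B := fun h =>
      compl_subset_compl.2 (Set.smul_set_mono h)
    have hff : ∀ B, B ∈ 𝒯 → f (f B) = B := by
      intro B hB
      simp only [f]
      rw [gsmul_compl, _root_.compl_compl, ← mul_smul]
      apply hK1 _ (K.mul_mem hk0 hk0) _ B hB
      have e : (K : Set G) = tr univ := by simp [tr]
      have e2 : k0 • (K : Set G) = K := by
        rw [e, ← trk k0 hk0, Set.smul_set_univ]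
      rw [mul_smul, hk0T', Set.smul_set_sdiff, e2, hk0T', Set.sdiff_sdiff_cancel_left hTK]
    obtain ⟨C0, hC0, hC0f⟩ : ∃ C, C ∈ 𝒯 ∧ C ⊆ f C := by
      rcases hTT B0 hB0T _ (hf B0 hB0T) with h | h
      · exact ⟨B0, hB0T, h⟩
      · exact ⟨f B0, hf _ hB0T, hfm h⟩
    obtain ⟨D, ⟨hD, hDf⟩, hDmax⟩ : ∃ D, (D ∈ 𝒯 ∧ D ⊆ f D) ∧
        ∀ C, C ∈ 𝒯 → C ⊆ f C → D ⊆ C → C = D := by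
      have hs : ({C | C ∈ 𝒯 ∧ C ⊆ f C}).Finite := hfin.subset (fun C h => h.1)
      obtain ⟨D, hD⟩ := hs.exists_maximal ⟨C0, hC0, hC0f⟩
      exact ⟨D, hD.prop, fun C h1 h2 h3 => hD.eq_of_ge ⟨h1, h2⟩ h3⟩
    by_cases hDD : f D = D
    · right
      refine ⟨D, hD.1, fun k hk => ?_⟩
      by_cases hkT : k • T = T
      · exact Or.inl (hK1 k hk hkT D hD)
      · right
        rw [hswap k hk hkT D hD]
        have : (f D)ᶜ = Dᶜ := by rw [hDD]
        simpa [f] using this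
    · left
      have hD' := hf D hD
      have hss : D ⊂ f D := hDf.ssubset_of_ne (Ne.symm hDD)
      have hbetween : ∀ C ∈ 𝓔, D ⊆ C → C ⊂ f D → C = D := by
        intro C hC h1 h2
        have hCT : C ∈ 𝒯 := ⟨hC, subset_antisymm (by rw [← hD'.2]; exact trm h2.subset)
          (by rw [← hD.2]; exact trm h1)⟩
        rcases hTT C hCT _ (hf C hCT) with h | h
        · exact hDmax C hCT h h1
        · exfalso
          have h3 : D ⊆ f C := by
            have := hfm h2.subset
            rwa [hff D hD] at this
          have h4 := hDmax _ (hf C hCT) (hfm h) h3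
          have h5 := congrArg f h4
          rw [hff C hCT] at h5
          exact h2.ne h5
      have hvv : tv 𝓔 (f D) = tv 𝓔 Dᶜ := by
        apply eq_tv hE (isV_tv hD'.1)
        refine ⟨⟨hE.compl D hD.1, Or.inr (compl_lt_compl_iff_lt.2 hss)⟩, ?_⟩
        rintro B ⟨hB, h | h⟩ hBD
        · exfalso
          exact not_sub_both hE hD.1 (hDf.trans h) (subset_compl_comm.1 hBD |>.trans subset_rfl)
        · have h1 := hbetween Bᶜ (hE.compl B hB) (subset_compl_comm.1 hBD) (by
            have h9 : Bᶜ < (f D)ᶜᶜ := compl_lt_compl_iff_lt.2 h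
            rwa [_root_.compl_compl] at h9)
          rw [← h1, _root_.compl_compl]
      refine ⟨f D, hD'.1, fun k hk => ?_⟩
      rw [MulAction.mem_stabilizer_iff]
      by_cases hkT : k • T = T
      · exact stab_le hE (hK1 k hk hkT _ hD')
      · rw [smul_tv hE, hswap k hk hkT _ hD', hvv]
        congr 1
        have := hff D hD
        have h2 : (f (f D))ᶜ = Dᶜ := by rw [this]
        simpa [f] using h2
  · -- no ties
    left
    push Not at tie
    obtain ⟨B1, hB1, hn1⟩ : ∃ B ∈ 𝓔, q < 2 * n B := by
      obtain ⟨B, hB⟩ := hne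
      have h1 := nc B
      have h2 := tie B hB
      rcases lt_or_gt_of_ne h2 with h | h
      · exact ⟨Bᶜ, hE.compl B hB, by omega⟩
      · exact ⟨B, hB, h⟩
    obtain ⟨y, hy⟩ := hE.nonempty _ (hE.compl B1 hB1)
    have hs : ({C | C ∈ 𝓔 ∧ q < 2 * n C ∧ C ⊆ B1}).Finite := by
      refine (hK.biUnion (fun x _ => hE.interval x y)).subset ?_
      rintro C ⟨hC, hCn, hCB⟩
      obtain ⟨x, hx⟩ : (tr C).Nonempty := by
        rw [← Set.ncard_pos (trf _)]
        change 0 < n C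
        omega
      exact mem_biUnion hx.2 ⟨hC, hx.1, fun h => hy (hCB h)⟩
    obtain ⟨B, hB⟩ := hs.exists_minimal ⟨B1, hB1, hn1, subset_rfl⟩
    have hBE := hB.prop.1
    have hBn := hB.prop.2.1
    have hmin : ∀ C ∈ 𝓔, q < 2 * n C → C ⊆ B → C = B := fun C h1 h2 h3 =>
      (hB.eq_of_le ⟨h1, h2, h3.trans hB.prop.2.2⟩ h3)
    refine ⟨B, hBE, fun k hk => ?_⟩
    rw [MulAction.mem_stabilizer_iff, smul_tv hE]
    have hkE := hE.smul B hBE k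
    have hkn : n (k • B) = n B := nk k hk B
    have hkmin : ∀ C ∈ 𝓔, q < 2 * n C → C ⊆ k • B → C = k • B := by
      intro C h1 h2 h3
      have := hmin (k⁻¹ • C) (hE.smul C h1 _) (by rw [nk _ (K.inv_mem hk)]; exact h2)
        (by rw [Set.smul_set_subset_iff_subset_inv_smul_set, inv_inv]; exact h3)
      rw [inv_smul_eq_iff] at this
      exact this
    rcases nested_cases hE hBE hkE with h | h | h | h
    · rw [← hkmin B hBE hBn h]
    · exfalso
      have h1 := nm h
      have h2 := nc (k • B)
      omega
    · symm
      have hss : Bᶜ ⊂ k • B := h.ssubset_of_ne (by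
        intro he
        have h2 := nc B
        rw [he] at h2
        omega)
      apply eq_tv hE (isV_tv hBE)
      refine ⟨⟨hkE, Or.inr hss⟩, ?_⟩
      rintro C ⟨hC, h1 | h1⟩ hCk
      · have h2 := nm h1
        exact hkmin C hC (by omega) hCk
      · by_cases hCn : q < 2 * n C
        · exact hkmin C hC hCn hCk
        · exfalso
          have h2 := nc C
          have h3 := tie C hC
          have h4 := hmin Cᶜ (hE.compl C hC) (by omega) (by
            rw [compl_subset_comm]; exact h1.subset)
          rw [← h4, _root_.compl_compl] at h1
          exact h1.ne rfl
    · rw [hmin (k • B) hkE (by omega) h]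

end Fix
end VF

/-! ### Part 9 -/

set_option linter.unusedVariables false
set_option linter.unusedSectionVars false
namespace VF
open Set
open scoped Pointwise

section Fin
variable {G : Type*} [Group G] {F N : Subgroup G} {𝓔 : Set (Set G)}

/-- A subgroup with finite centralizer. -/
def Big (C : Subgroup G) : Prop := (Subgroup.centralizer (C : Set G) : Set G).Finite

/-- Finiteness of a subgroup. -/
def Fn (C : Subgroup G) : Prop := (C : Set G).Finite

/-- Conjugate subgroup. -/
def cj (g : G) (C : Subgroup G) : Subgroup G := C.map (MulAut.conj g).toMonoidHom

theorem mem_cj {g x : G} {C : Subgroup G} : x ∈ cj g C ↔ g⁻¹ * x * g ∈ C := by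
  simp only [cj, Subgroup.mem_map, MulEquiv.coe_toMonoidHom, MulAut.conj_apply]
  constructor
  · rintro ⟨y, hy, rfl⟩
    convert hy using 1; group
  · intro h; exact ⟨_, h, by group⟩

theorem cj_one (C : Subgroup G) : cj 1 C = C := by ext x; simp [mem_cj]

theorem cj_mul (g h : G) (C : Subgroup G) : cj (g * h) C = cj g (cj h C) := by
  ext x; simp [mem_cj, mul_assoc]

theorem cj_inv_cj (g : G) (C : Subgroup G) : cj g⁻¹ (cj g C) = C := by
  rw [← cj_mul, inv_mul_cancel, cj_one]

theorem cj_cj_inv (g : G) (C : Subgroup G) : cj g (cj g⁻¹ C) = C := by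
  rw [← cj_mul, mul_inv_cancel, cj_one]

theorem cj_inf (g : G) (C D : Subgroup G) : cj g (C ⊓ D) = cj g C ⊓ cj g D := by
  ext x; simp [mem_cj]

theorem cj_mono (g : G) {C D : Subgroup G} (h : C ≤ D) : cj g C ≤ cj g D :=
  fun x hx => mem_cj.2 (h (mem_cj.1 hx))

theorem cj_map {H : Type*} [Group H] (φ : G →* H) (g : G) (C : Subgroup G) :
    (cj g C).map φ = cj (φ g) (C.map φ) := by
  ext x
  simp only [mem_cj, Subgroup.mem_map]
  constructor
  · rintro ⟨y, hy, rfl⟩; exact ⟨_, hy, by simp⟩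
  · rintro ⟨y, hy, e⟩
    refine ⟨g * y * g⁻¹, by convert hy using 1; group, ?_⟩
    rw [map_mul, map_mul, e, map_inv]; group

theorem cj_of_mem {g : G} {C : Subgroup G} (h : g ∈ C) : cj g C = C := by
  ext x
  rw [mem_cj, C.mul_mem_cancel_right h, C.mul_mem_cancel_left (C.inv_mem h)]

theorem fn_cj {g : G} {C : Subgroup G} (h : Fn C) : Fn (cj g C) := by
  unfold Fn cj
  rw [Subgroup.coe_map]; exact Set.Finite.image _ h

theorem fn_map {H : Type*} [Group H] (φ : G →* H) {C : Subgroup G} (h : Fn C) : Fn (C.map φ) := by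
  unfold Fn
  rw [Subgroup.coe_map]; exact Set.Finite.image _ h

theorem fn_mono {C D : Subgroup G} (h : C ≤ D) (hD : Fn D) : Fn C := Set.Finite.subset hD h

theorem big_mono {C D : Subgroup G} (h : C ≤ D) (hC : Big C) : Big D :=
  Set.Finite.subset hC (Subgroup.centralizer_le h)

theorem big_cj' {g : G} {C : Subgroup G} (h : Big C) : Big (cj g C) := by
  refine (Set.Finite.image (fun x => g * x * g⁻¹) h).subset ?_
  intro x hx
  refine ⟨g⁻¹ * x * g, ?_, by group⟩
  rw [SetLike.mem_coe, Subgroup.mem_centralizer_iff] at hx ⊢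
  intro y hy
  have := hx (g * y * g⁻¹) (by
    rw [SetLike.mem_coe, mem_cj]
    have e : g⁻¹ * (g * y * g⁻¹) * g = y := by group
    rw [e]; exact hy)
  have e : y * (g⁻¹ * x * g) = g⁻¹ * (g * y * g⁻¹ * x) * g := by group
  rw [e, this]; group

theorem big_cj {g : G} {C : Subgroup G} : Big (cj g C) ↔ Big C :=
  ⟨fun h => by rw [← cj_inv_cj g C]; exact big_cj' h, big_cj'⟩

theorem fn_card_cj (g : G) (C : Subgroup G) : Nat.card (cj g C) = Nat.card C :=
  Subgroup.card_map_of_injective (MulAut.conj g).injective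

/-- finitely many elements conjugate a big finite subgroup into a given finite subgroup -/
theorem tr_fin {C R : Subgroup G} (hC : Fn C) (hb : Big C) (hR : Fn R) :
    {g : G | cj g C ≤ R}.Finite := by
  have : Finite C := hC
  have : Finite R := hR
  let f : {g : G | cj g C ≤ R} → (C → R) := fun g x => ⟨g.1 * x * g.1⁻¹, g.2 (by
    rw [mem_cj]; convert x.2 using 1; group)⟩
  rw [← Set.finite_coe_iff]
  suffices fib : ∀ y, (f ⁻¹' {y}).Finite by
    by_contra h
    have := not_finite_iff_infinite.1 h
    obtain ⟨y, hy⟩ := Finite.exists_infinite_fiber f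
    exact (Set.infinite_coe_iff.1 hy) (fib y)
  intro y
  by_cases hy : ∃ g0, f g0 = y
  · obtain ⟨g0, rfl⟩ := hy
    refine Set.Finite.of_finite_image (f := fun g => g0.1⁻¹ * g.1) (Set.Finite.subset hb ?_) ?_
    · rintro _ ⟨g, hg, rfl⟩
      rw [SetLike.mem_coe, Subgroup.mem_centralizer_iff]
      intro x hx
      have e := congrArg Subtype.val (congrFun hg ⟨x, hx⟩)
      simp only [f] at e
      have e2 : g.1 * x = g0.1 * x * g0.1⁻¹ * g.1 := by rw [← e]; group
      dsimp only
      rw [mul_assoc _ g.1 x, e2]; group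
    · intro a _ b _ hab
      exact Subtype.ext (mul_left_cancel hab)
  · convert Set.finite_empty
    ext g
    simp only [mem_preimage, mem_singleton_iff, mem_empty_iff_false, iff_false]
    exact fun h => hy ⟨g, h⟩

/-- The abstract facts on finite subgroups used in the final argument. -/
structure Hyp (G : Type*) [Group G] : Prop where
  h1 : ∃ 𝓡 : Set (Subgroup G), 𝓡.Finite ∧ (∀ R ∈ 𝓡, Fn R) ∧ ∀ C, Fn C → ∃ R ∈ 𝓡, ∃ g, C = cj g R
  bdd : ∃ n : ℕ, ∀ C : Subgroup G, Fn C → Nat.card C ≤ n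
  h2b : ∀ P : Subgroup G, Fn P → (∀ C : Subgroup G, Fn C → Nat.card C ≤ Nat.card P) → Big P
  h2 : ∀ P : Subgroup G, Fn P → (∀ C : Subgroup G, Fn C → Nat.card C ≤ Nat.card P) → ∀ g,
    Relation.ReflTransGen (fun A B => Fn A ∧ Fn B ∧ Big (A ⊓ B)) P (cj g P)
  h3 : ∀ C : Subgroup G, Fn C → ¬ Big C → ∃ d : G, d ≠ 1 ∧ ∀ φ : G →* G, φ d ≠ 1 → ¬ Big (C.map φ)

theorem fn_V (X : Cx F N 𝓔) {o} (ho : IsV 𝓔 o) : Fn (MulAction.stabilizer G o) := by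
  have := X.ff
  exact fin_of_triv (N := F) (fun x hx hxF => vfin X ho hx hxF)

theorem fn_M (X : Cx F N 𝓔) {A : Set G} (hA : A ∈ 𝓔) : Fn (Mst A) := by
  have := X.ff
  refine fin_of_triv (N := F) (fun x hx hxF => ?_)
  have h : (x * x) • A = A := by
    rw [mul_smul]
    rcases hx with h | h
    · rw [h, h]
    · rw [h, gsmul_compl, h, _root_.compl_compl]
  have h1 := vfin X (isV_tv hA) (stab_le X.nf h) (F.mul_mem hxF hxF)
  by_contra hne
  apply X.tf x hxF hne
  rw [isOfFinOrder_iff_pow_eq_one]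
  exact ⟨2, by norm_num, by rw [pow_two, h1]⟩

/-- The nodes: vertex stabilizers and edge stabilizers. -/
def Node (𝓔 : Set (Set G)) (P : Subgroup G) : Prop :=
  (∃ A ∈ 𝓔, P = MulAction.stabilizer G (tv 𝓔 A)) ∨ (∃ A ∈ 𝓔, P = Mst A)

def Lk (A B : Subgroup G) : Prop := Fn A ∧ Fn B ∧ Big (A ⊓ B)

theorem lk_symm {A B : Subgroup G} (h : Lk A B) : Lk B A := ⟨h.2.1, h.1, by rw [inf_comm]; exact h.2.2⟩

theorem node_conn (X : Cx F N 𝓔) {P Q : Subgroup G} (hP : Node 𝓔 P) (hQ : Node 𝓔 Q) :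
    Relation.ReflTransGen Lk P Q := by
  have hE := X.nf
  have hbig : ∀ {A : Set G} {S : Subgroup G}, A ∈ 𝓔 → MulAction.stabilizer G A ≤ S → Big S :=
    fun hA h => big_mono h (edge_big X hA)
  have hl : ∀ A ∈ 𝓔, MulAction.stabilizer G A ≤ MulAction.stabilizer G (tv 𝓔 A) :=
    fun A hA g hg => stab_le hE hg
  have hl' : ∀ A ∈ 𝓔, MulAction.stabilizer G A ≤ MulAction.stabilizer G (tv 𝓔 Aᶜ) := by
    intro A hA g hg
    apply stab_le hE
    rw [gsmul_compl, hg]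
  have hsymm : ∀ {A B : Subgroup G}, Relation.ReflTransGen Lk A B → Relation.ReflTransGen Lk B A :=
    fun h => by
      induction h with
      | refl => exact .refl
      | tail _ h2 ih => exact Relation.ReflTransGen.head (lk_symm h2) ih
  have key : ∀ P, Node 𝓔 P → ∃ A ∈ 𝓔, Relation.ReflTransGen Lk P (MulAction.stabilizer G (tv 𝓔 A)) := by
    rintro P (⟨A, hA, rfl⟩ | ⟨A, hA, rfl⟩)
    · exact ⟨A, hA, .refl⟩
    · refine ⟨A, hA, .single ⟨fn_M X hA, fn_V X (isV_tv hA), hbig hA (le_inf ?_ (hl A hA))⟩⟩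
      exact fun g hg => Or.inl hg
  obtain ⟨A, hA, h1⟩ := key P hP
  obtain ⟨B, hB, h2⟩ := key Q hQ
  refine h1.trans (Relation.ReflTransGen.trans ?_ (hsymm h2))
  refine vconn hE (isV_tv hA)
    (fun o => Relation.ReflTransGen Lk (MulAction.stabilizer G (tv 𝓔 A)) (MulAction.stabilizer G o))
    .refl ?_ _ (isV_tv hB)
  intro D hD h
  exact h.tail ⟨fn_V X (isV_tv (hE.compl D hD)), fn_V X (isV_tv hD),
    hbig hD (le_inf (hl' D hD) (hl D hD))⟩

theorem node_big (X : Cx F N 𝓔) {P : Subgroup G} (hP : Node 𝓔 P) : Big P := by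
  have hE := X.nf
  rcases hP with ⟨A, hA, rfl⟩ | ⟨A, hA, rfl⟩
  · exact big_mono (fun g hg => stab_le hE hg) (edge_big X hA)
  · exact big_mono (fun g hg => Or.inl hg) (edge_big X hA)

theorem max_node (X : Cx F N 𝓔) (hne : 𝓔.Nonempty) {P : Subgroup G} (hP : Fn P)
    (hm : ∀ C : Subgroup G, Fn C → Nat.card C ≤ Nat.card P) : Node 𝓔 P := by
  have key : ∀ Q : Subgroup G, Fn Q → P ≤ Q → P = Q := by
    intro Q hQ hPQ
    have : Finite Q := hQ
    exact Subgroup.eq_of_le_of_card_ge hPQ (hm Q hQ)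
  rcases fixpt X.nf hne P hP with ⟨A, hA, h⟩ | ⟨A, hA, h⟩
  · exact Or.inl ⟨A, hA, key _ (fn_V X (isV_tv hA)) h⟩
  · exact Or.inr ⟨A, hA, key _ (fn_M X hA) h⟩

theorem cx_hyp (X : Cx F N 𝓔) (hne : 𝓔.Nonempty) : Hyp G := by
  have hE := X.nf
  have := X.ff
  have hfn := X.fn
  have htriv : ∀ C : Subgroup G, Fn C → ∀ x ∈ C, x ∈ F → x = 1 := by
    intro C hC x hx hxF
    by_contra h
    apply X.tf x hxF h
    have : Finite C := hC
    exact Submonoid.isOfFinOrder_coe.2 (isOfFinOrder_of_finite (⟨x, hx⟩ : C))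
  constructor
  · obtain ⟨R, hR, hRo⟩ := hE.orbits
    refine ⟨⋃ a ∈ {a | a ∈ R ∧ a ∈ 𝓔}, ({C | C ≤ MulAction.stabilizer G (tv 𝓔 a)} ∪ {C | C ≤ Mst a}), ?_, ?_, ?_⟩
    · have hsub : ∀ S : Subgroup G, Fn S → {C : Subgroup G | C ≤ S}.Finite := by
        intro S hS
        refine Set.Finite.of_finite_image (f := fun C : Subgroup G => (C : Set G))
          ((Set.Finite.finite_subsets hS).subset ?_) SetLike.coe_injective.injOn
        rintro _ ⟨C, hC, rfl⟩
        exact hC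
      refine Set.Finite.biUnion (hR.subset fun a h => h.1) ?_
      rintro a ⟨-, ha⟩
      exact (hsub _ (fn_V X (isV_tv ha))).union (hsub _ (fn_M X ha))
    · intro C hC
      simp only [mem_iUnion] at hC
      obtain ⟨a, ⟨-, ha⟩, h | h⟩ := hC
      · exact fn_mono h (fn_V X (isV_tv ha))
      · exact fn_mono h (fn_M X ha)
    · intro C hC
      rcases fixpt hE hne C hC with ⟨A, hA, h⟩ | ⟨A, hA, h⟩
      all_goals
        obtain ⟨a, ha, g, rfl⟩ := hRo A hA
        have haE : a ∈ 𝓔 := by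
          have := hE.smul _ hA g⁻¹
          rwa [inv_smul_smul] at this
        refine ⟨cj g⁻¹ C, ?_, g, (cj_cj_inv g C).symm⟩
        simp only [mem_iUnion]
        refine ⟨a, ⟨ha, haE⟩, ?_⟩
      · left
        intro x hx
        have := h (mem_cj.1 hx)
        rw [MulAction.mem_stabilizer_iff, ← smul_tv hE, inv_inv, ← mul_smul, mul_assoc, mul_assoc,
          inv_mul_cancel, mul_one, mul_smul, smul_left_cancel_iff] at this
        exact this
      · right
        intro x hx
        have := h (mem_cj.1 hx)
        rw [mem_Mst, inv_inv, ← mul_smul, mul_assoc, mul_assoc,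
          inv_mul_cancel, mul_one, mul_smul, smul_left_cancel_iff, ← gsmul_compl,
          smul_left_cancel_iff] at this
        exact this
  · exact ⟨F.index, fun C hC => card_of_triv (htriv C hC)⟩
  · intro P hP hm
    exact node_big X (max_node X hne hP hm)
  · intro P hP hm g
    refine node_conn X (max_node X hne hP hm) (max_node X hne (fn_cj hP) ?_)
    intro C hC
    rw [fn_card_cj]; exact hm C hC
  · intro C hC hb
    obtain ⟨c, hc, hcF, hc1⟩ := exists_cent (N := F) hb
    have hcinf := X.tf c hcF hc1
    have hidx : F.index ≠ 0 := Subgroup.FiniteIndex.index_ne_zero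
    refine ⟨c ^ F.index, ?_, ?_⟩
    · intro h
      exact hcinf (isOfFinOrder_iff_pow_eq_one.2 ⟨_, Nat.pos_of_ne_zero hidx, h⟩)
    · intro φ hφ hbig
      have hinf : ¬ IsOfFinOrder (φ c) := by
        intro h
        apply hφ
        rw [map_pow]
        by_contra h1
        exact X.tf _ (F.pow_index_mem (φ c)) h1 h.pow
      have hmem : φ c ∈ Subgroup.centralizer (C.map φ : Set G) := by
        rw [Subgroup.mem_centralizer_iff]
        rintro _ ⟨y, hy, rfl⟩
        rw [← map_mul, ← map_mul, Subgroup.mem_centralizer_iff.1 hc y hy]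
      have : Finite (Subgroup.centralizer (C.map φ : Set G)) := hbig
      exact hinf (Submonoid.isOfFinOrder_coe.2 (isOfFinOrder_of_finite
        (⟨φ c, hmem⟩ : Subgroup.centralizer (C.map φ : Set G))))

end Fin
end VF

/-! ### Part 10 -/

set_option linter.unusedVariables false
set_option linter.unusedSectionVars false
namespace VF
open Set

section Final
variable {G : Type*} [Group G]

theorem exists_idem {M : Type*} [Monoid M] (T : Set M) (hT : T.Finite) (hne : T.Nonempty)
    (hm : ∀ a ∈ T, ∀ b ∈ T, a * b ∈ T) : ∃ m ∈ T, m * m = m := by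
  obtain ⟨a, ha⟩ := hne
  have hp : ∀ n : ℕ, a ^ (n + 1) ∈ T := by
    intro n
    induction n with
    | zero => simpa using ha
    | succ n ih => rw [pow_succ]; exact hm _ ih _ ha
  have : Finite T := hT
  obtain ⟨i, j, hij, he⟩ : ∃ i j : ℕ, i < j ∧ a ^ (i + 1) = a ^ (j + 1) := by
    obtain ⟨x, y, hxy, he⟩ := Finite.exists_ne_map_eq_of_infinite (fun n : ℕ => (⟨_, hp n⟩ : T))
    have he' := congrArg Subtype.val he
    rcases lt_or_gt_of_ne hxy with h | h
    · exact ⟨x, y, h, he'⟩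
    · exact ⟨y, x, h, he'.symm⟩
  obtain ⟨d, rfl⟩ : ∃ d, j = i + d := ⟨j - i, by omega⟩
  have hd : 0 < d := by omega
  have h1 : ∀ k : ℕ, a ^ (i + 1 + d * k) = a ^ (i + 1) := by
    intro k
    induction k with
    | zero => simp
    | succ k ih =>
      have : i + 1 + d * (k + 1) = (i + d + 1) + d * k := by ring
      rw [this, pow_add, ← he, ← pow_add, ih]
  refine ⟨a ^ (d * (i + 1)), ?_, ?_⟩
  · have : d * (i + 1) = (d * (i + 1) - 1) + 1 := by
      have : 0 < d * (i + 1) := by positivity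
      omega
    rw [this]; exact hp _
  · have hle : i + 1 ≤ d * (i + 1) := Nat.le_mul_of_pos_left _ hd
    obtain ⟨r, hr⟩ := Nat.exists_eq_add_of_le hle
    rw [← pow_add]
    have : d * (i + 1) + d * (i + 1) = (i + 1 + d * (i + 1)) + r := by omega
    rw [this, pow_add, h1, ← pow_add, ← hr]

theorem stable (Q : (G →* G) → Prop) (hQ : ∀ φ ψ, Q φ → Q ψ → Q (ψ.comp φ))
    {M : Type*} [Monoid M] [Finite M] (t : (G →* G) → M)
    (ht : ∀ φ ψ, Q φ → Q ψ → t (ψ.comp φ) = t ψ * t φ)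
    (hav : ∀ S : Finset G, 1 ∉ S → ∃ φ, Q φ ∧ ∀ s ∈ S, φ s ≠ 1) :
    ∃ m, m * m = m ∧ ∀ S : Finset G, 1 ∉ S → ∃ φ, Q φ ∧ (∀ s ∈ S, φ s ≠ 1) ∧ t φ = m := by
  classical
  have := Fintype.ofFinite M
  obtain ⟨m, hm, hmm⟩ := exists_idem
    {m : M | ∀ S : Finset G, 1 ∉ S → ∃ φ, Q φ ∧ (∀ s ∈ S, φ s ≠ 1) ∧ t φ = m}
    (Set.toFinite _) (by
      by_contra hn
      have hn' : ∀ m : M, ∃ S : Finset G, 1 ∉ S ∧ ∀ φ, Q φ → (∀ s ∈ S, φ s ≠ 1) → t φ ≠ m := by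
        intro m
        by_contra h
        push Not at h
        exact hn ⟨m, h⟩
      choose S hS1 hS using hn'
      obtain ⟨φ, hφ, hs⟩ := hav (Finset.univ.biUnion S) (by simpa using hS1)
      exact hS (t φ) φ hφ (fun s h => hs s (Finset.mem_biUnion.2 ⟨_, Finset.mem_univ _, h⟩)) rfl) (by
      intro a ha b hb S hS
      obtain ⟨φ, h1, h2, h3⟩ := hb S hS
      obtain ⟨ψ, h4, h5, h6⟩ := ha (S.image φ) (by
        intro h
        obtain ⟨s, hs, e⟩ := Finset.mem_image.1 h
        exact h2 s hs e)
      exact ⟨ψ.comp φ, hQ _ _ h1 h4, fun s hs => h5 _ (Finset.mem_image_of_mem _ hs), by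
        rw [ht _ _ h1 h4, h3, h6]⟩)
  exact ⟨m, hmm, hm⟩

theorem types (Y : Hyp G)
    (hav : ∀ S : Finset G, 1 ∉ S → ∃ φ : G →* G, ¬ Function.Injective φ ∧ ∀ s ∈ S, φ s ≠ 1) :
    ∃ Q : (G →* G) → Prop, (∀ φ, Q φ → ¬ Function.Injective φ) ∧
      (∀ φ ψ, Q φ → Q ψ → Q (ψ.comp φ)) ∧
      (∀ φ g, Q φ → Q ((MulAut.conj g).toMonoidHom.comp φ)) ∧
      (∀ S : Finset G, 1 ∉ S → ∃ φ, Q φ ∧ ∀ s ∈ S, φ s ≠ 1) ∧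
      (∀ φ ψ, Q φ → Q ψ → ∀ C, Fn C → ∃ g, C.map φ = cj g (C.map ψ)) := by
  let st : Setoid {C : Subgroup G // Fn C} :=
    { r := fun C D => ∃ g, C.1 = cj g D.1
      iseqv := ⟨fun C => ⟨1, (cj_one _).symm⟩, fun {C D} ⟨g, h⟩ => ⟨g⁻¹, by rw [h, cj_inv_cj]⟩,
        fun {A B C} ⟨g, h⟩ ⟨k, h'⟩ => ⟨g * k, by rw [h, h', cj_mul]⟩⟩ }
  obtain ⟨𝓡, hfin, hRF, hR⟩ := Y.h1
  have : Finite 𝓡 := hfin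
  have : Finite (Quotient st) := by
    refine Finite.of_surjective (fun R : 𝓡 => (Quotient.mk st ⟨R.1, hRF _ R.2⟩)) ?_
    intro x
    induction x using Quotient.inductionOn with
    | h C =>
      obtain ⟨R, hR, g, hg⟩ := hR C.1 C.2
      refine ⟨⟨R, hR⟩, Quotient.sound ⟨g⁻¹, ?_⟩⟩
      rw [hg, cj_inv_cj]
  have : Finite (Function.End (Quotient st)) := inferInstanceAs (Finite (Quotient st → Quotient st))
  let t : (G →* G) → Function.End (Quotient st) := fun φ =>
    Quotient.map (fun C => ⟨C.1.map φ, fn_map φ C.2⟩) (by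
      rintro C D ⟨g, h⟩
      refine ⟨φ g, ?_⟩
      dsimp only
      rw [h, cj_map])
  obtain ⟨m, hmm, hm⟩ := stable (fun φ => ¬ Function.Injective φ) (by
      intro φ ψ h1 h2 h3
      exact h1 (Function.Injective.of_comp (f := ψ) h3)) t (by
      intro φ ψ h1 h2
      funext x
      induction x using Quotient.inductionOn with
      | h C =>
        change Quotient.mk st _ = Quotient.mk st _
        congr 1
        exact Subtype.ext (Subgroup.map_map _ _ _).symm) hav
  have hmap : ∀ φ ψ, t φ = t ψ → ∀ C, Fn C → ∃ g, C.map φ = cj g (C.map ψ) := by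
    intro φ ψ h C hC
    have := congrFun h (Quotient.mk st ⟨C, hC⟩)
    exact Quotient.exact this
  have hcomp : ∀ φ ψ : G →* G, t (ψ.comp φ) = t ψ * t φ := by
    intro φ ψ
    funext x
    induction x using Quotient.inductionOn with
    | h C =>
      change Quotient.mk st _ = Quotient.mk st _
      congr 1
      exact Subtype.ext (Subgroup.map_map _ _ _).symm
  refine ⟨fun φ => ¬ Function.Injective φ ∧ t φ = m, fun φ h => h.1, ?_, ?_, ?_, ?_⟩
  · rintro φ ψ ⟨h1, h2⟩ ⟨h3, h4⟩
    refine ⟨fun h => h1 (Function.Injective.of_comp (f := ψ) h), ?_⟩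
    rw [hcomp, h2, h4, hmm]
  · rintro φ g ⟨h1, h2⟩
    refine ⟨fun h => h1 (Function.Injective.of_comp (f := (MulAut.conj g)) h), ?_⟩
    rw [← h2]
    funext x
    induction x using Quotient.inductionOn with
    | h C =>
      refine Quotient.sound ⟨g, ?_⟩
      dsimp only
      rw [← Subgroup.map_map]; rfl
  · intro S hS
    obtain ⟨φ, h1, h2, h3⟩ := hm S hS
    exact ⟨φ, ⟨h1, h3⟩, h2⟩
  · rintro φ ψ ⟨-, h1⟩ ⟨-, h2⟩ C hC
    exact hmap φ ψ (h1.trans h2.symm) C hC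

theorem sub_fin {S : Subgroup G} (hS : Fn S) : {C : Subgroup G | C ≤ S}.Finite := by
  refine Set.Finite.of_finite_image (f := fun C : Subgroup G => (C : Set G))
    ((Set.Finite.finite_subsets hS).subset ?_) SetLike.coe_injective.injOn
  rintro _ ⟨C, hC, rfl⟩
  exact hC

theorem loc_fin (Y : Hyp G) {A : Subgroup G} (hA : Fn A) :
    {B : Subgroup G | Fn B ∧ Big (A ⊓ B)}.Finite := by
  obtain ⟨𝓡, hfin, hRF, hR⟩ := Y.h1
  have h1 : (⋃ C ∈ {C : Subgroup G | C ≤ A ∧ Big C}, ⋃ R ∈ 𝓡,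
      (fun x => cj x⁻¹ R) '' {x : G | cj x C ≤ R}).Finite := by
    refine Set.Finite.biUnion ((sub_fin hA).subset fun C h => h.1) ?_
    rintro C ⟨hC, hb⟩
    refine Set.Finite.biUnion hfin ?_
    intro R hR
    exact (tr_fin (fn_mono hC hA) hb (hRF R hR)).image _
  refine h1.subset ?_
  rintro B ⟨hB, hb⟩
  obtain ⟨R, hRR, g, rfl⟩ := hR B hB
  simp only [mem_iUnion]
  refine ⟨_, ⟨inf_le_left, hb⟩, R, hRR, g⁻¹, ?_, by simp⟩
  have := cj_mono g⁻¹ (inf_le_right : A ⊓ cj g R ≤ cj g R)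
  rwa [cj_inv_cj] at this

theorem final (hfg : Group.FG G) (hco : CoHopfian G) (Y : Hyp G) : StronglyCoHopfian G := by
  classical
  by_contra hcon
  have hav : ∀ S : Finset G, 1 ∉ S →
      ∃ φ : G →* G, ¬ Function.Injective φ ∧ ∀ s ∈ S, φ s ≠ 1 := by
    intro S hS
    by_contra hn
    push Not at hn
    refine hcon ⟨S, hS, fun φ hφ => ?_⟩
    by_cases hi : Function.Injective φ
    · exact ⟨hi, hco φ hi⟩
    · obtain ⟨s, hs, e⟩ := hn φ hi
      exact absurd e (hφ s hs)
  obtain ⟨Q, hQi, hQc, hQg, hQa, hQt⟩ := types Y hav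
  obtain ⟨θ, hθ, -⟩ := hQa ∅ (by simp)
  -- the notion of eventually big subgroup
  let EB : Subgroup G → Prop := fun C => Big (C.map θ)
  have eb_mono : ∀ {C D : Subgroup G}, C ≤ D → EB C → EB D :=
    fun h hC => big_mono (Subgroup.map_mono h) hC
  have eb_cj : ∀ g C, EB C → EB (cj g C) := by
    intro g C h
    change Big _
    rw [cj_map]; exact big_cj' h
  have eb_map : ∀ φ, Q φ → ∀ C, Fn C → (EB (C.map φ) ↔ EB C) := by
    intro φ hφ C hC
    obtain ⟨g, hg⟩ := hQt (θ.comp φ) θ (hQc _ _ hφ hθ) hθ C hC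
    change Big _ ↔ Big _
    rw [Subgroup.map_map, hg, big_cj]
  have eb_iff : ∀ φ, Q φ → ∀ C, Fn C → (EB C ↔ Big (C.map φ)) := by
    intro φ hφ C hC
    obtain ⟨g, hg⟩ := hQt θ φ hθ hφ C hC
    change Big _ ↔ Big _
    rw [hg, big_cj]
  have eb_big : ∀ C, Fn C → EB C → Big C := by
    intro C hC h
    by_contra hb
    obtain ⟨d, hd, hd2⟩ := Y.h3 C hC hb
    obtain ⟨φ, hφ, hs⟩ := hQa {d} (by simpa using hd.symm)
    exact hd2 φ (hs d (by simp)) ((eb_iff φ hφ C hC).1 h)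
  -- a finite subgroup of maximal order
  obtain ⟨n0, hn0⟩ := Y.bdd
  obtain ⟨P0, hP0, hP0m⟩ := exists_min {C : Subgroup G | Fn C}
    ⟨⊥, by change (((⊥ : Subgroup G) : Set G)).Finite; simp⟩ (fun C => n0 - Nat.card C)
  have hP0m' : ∀ C : Subgroup G, Fn C → Nat.card C ≤ Nat.card P0 := by
    intro C hC
    have h1 := hP0m C hC
    have h2 := hn0 C hC
    have h3 := hn0 P0 hP0
    omega
  obtain ⟨φ0, hφ0, hφ0s⟩ := hQa ((Set.Finite.toFinset hP0).erase 1) (by simp)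
  have hinj0 : ∀ x ∈ P0, φ0 x = 1 → x = 1 := by
    intro x hx h
    by_contra hne
    exact hφ0s x (Finset.mem_erase.2 ⟨hne, (Set.Finite.mem_toFinset _).2 hx⟩) h
  obtain ⟨P, hPdef⟩ : ∃ P, P = P0.map φ0 := ⟨_, rfl⟩
  have hP : Fn P := hPdef ▸ fn_map φ0 hP0
  have hPc : Nat.card P = Nat.card P0 := by
    rw [hPdef]
    refine (Nat.card_congr (Equiv.ofBijective (fun x : P0 =>
      (⟨φ0 x, Subgroup.mem_map_of_mem φ0 x.2⟩ : P0.map φ0)) ⟨?_, ?_⟩)).symm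
    · intro a b hab
      have e := congrArg Subtype.val hab
      have e2 : φ0 a = φ0 b := e
      have e3 : φ0 ((a : G)⁻¹ * b) = 1 := by rw [map_mul, map_inv, e2, inv_mul_cancel]
      exact Subtype.ext (inv_mul_eq_one.1 (hinj0 _ (P0.mul_mem (P0.inv_mem a.2) b.2) e3))
    · rintro ⟨_, y, hy, rfl⟩
      exact ⟨⟨y, hy⟩, rfl⟩
  have hPm : ∀ C : Subgroup G, Fn C → Nat.card C ≤ Nat.card P := by rw [hPc]; exact hP0m'
  have hPb : Big P := Y.h2b P hP hPm
  have hPφ : ∀ φ, Q φ → ∃ g, P.map φ = cj g P := by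
    intro φ hφ
    obtain ⟨g, hg⟩ := hQt (φ.comp φ0) φ0 (hQc _ _ hφ0 hφ) hφ0 P0 hP0
    exact ⟨g, by rw [hPdef, Subgroup.map_map, hg]⟩
  -- the graph
  let E : Subgroup G → Subgroup G → Prop := fun A B => Fn A ∧ Fn B ∧ EB (A ⊓ B)
  let RT := Relation.ReflTransGen E
  have e_symm : ∀ {A B}, RT A B → RT B A := by
    intro A B h
    induction h with
    | refl => exact .refl
    | tail _ h2 ih =>
      exact Relation.ReflTransGen.head ⟨h2.2.1, h2.1, by rw [inf_comm]; exact h2.2.2⟩ ih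
  have e_cj : ∀ g {A B}, RT A B → RT (cj g A) (cj g B) := by
    intro g A B h
    induction h with
    | refl => exact .refl
    | tail _ h2 ih =>
      refine ih.tail ⟨fn_cj h2.1, fn_cj h2.2.1, ?_⟩
      rw [← cj_inf]; exact eb_cj g _ h2.2.2
  let H : Subgroup G :=
    { carrier := {h | RT P (cj h P)}
      one_mem' := by
        change RT P (cj 1 P)
        rw [cj_one]
      mul_mem' := by
        intro a b ha hb
        change RT P (cj (a * b) P)
        rw [cj_mul]
        exact Relation.ReflTransGen.trans ha (e_cj a hb)
      inv_mem' := by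
        intro a ha
        change RT P (cj a⁻¹ P)
        have := e_cj a⁻¹ ha
        rw [cj_inv_cj] at this
        exact e_symm this }
  have memH : ∀ h, h ∈ H ↔ RT P (cj h P) := fun h => Iff.rfl
  have hKH : ∀ A, RT P A → A ≤ H := by
    intro A hA a ha
    rw [memH]
    have := e_cj a hA
    rw [cj_of_mem ha] at this
    exact hA.trans (e_symm this)
  have hKF : ∀ A, RT P A → Fn A := by
    intro A hA
    cases hA with
    | refl => exact hP
    | tail _ h => exact h.2.1
  -- normalized endomorphisms
  let Q' : (G →* G) → Prop := fun φ => Q φ ∧ P.map φ = P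
  have hQ'c : ∀ φ ψ, Q' φ → Q' ψ → Q' (ψ.comp φ) := by
    rintro φ ψ ⟨h1, h2⟩ ⟨h3, h4⟩
    exact ⟨hQc _ _ h1 h3, by rw [← Subgroup.map_map, h2, h4]⟩
  have hQ'a : ∀ S : Finset G, 1 ∉ S → ∃ φ, Q' φ ∧ ∀ s ∈ S, φ s ≠ 1 := by
    intro S hS
    obtain ⟨φ, hφ, hs⟩ := hQa S hS
    obtain ⟨g, hg⟩ := hPφ φ hφ
    refine ⟨(MulAut.conj g⁻¹).toMonoidHom.comp φ, ⟨hQg _ _ hφ, ?_⟩, fun s h => ?_⟩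
    · rw [← Subgroup.map_map, hg]
      exact cj_inv_cj g P
    · intro e
      apply hs s h
      have : (MulAut.conj g⁻¹) (φ s) = 1 := e
      exact (MulAut.conj g⁻¹).injective (this.trans (map_one _).symm)
  have hRTφ : ∀ φ, Q' φ → ∀ {A B}, RT A B → RT (A.map φ) (B.map φ) := by
    intro φ hφ A B h
    induction h with
    | refl => exact .refl
    | tail _ h2 ih =>
      refine ih.tail ⟨fn_map φ h2.1, fn_map φ h2.2.1, ?_⟩
      exact eb_mono (Subgroup.map_inf_le _ _ φ) ((eb_map φ hφ.1 _ (fn_mono inf_le_left h2.1)).2 h2.2.2)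
  have hBfin : ∀ B, RT P B → ((fun φ : G →* G => B.map φ) '' {φ | Q' φ}).Finite := by
    intro B hB
    induction hB with
    | refl =>
      refine (Set.finite_singleton P).subset ?_
      rintro _ ⟨φ, hφ, rfl⟩
      exact hφ.2
    | tail _ h2 ih =>
      refine (ih.biUnion (t := fun A' => {B' | Fn A' ∧ Fn B' ∧ Big (A' ⊓ B')}) ?_).subset ?_
      · rintro A' ⟨φ, hφ, rfl⟩
        exact (loc_fin Y (fn_map φ h2.1)).subset fun B' h => h.2
      · rintro _ ⟨φ, hφ, rfl⟩
        refine mem_biUnion ⟨φ, hφ, rfl⟩ ⟨fn_map φ h2.1, fn_map φ h2.2.1, ?_⟩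
        refine eb_big _ (fn_mono inf_le_left (fn_map φ h2.1)) ?_
        exact eb_mono (Subgroup.map_inf_le _ _ φ)
          ((eb_map φ hφ.1 _ (fn_mono inf_le_left h2.1)).2 h2.2.2)
  have hhfin : ∀ h ∈ H, ((fun φ : G →* G => φ h) '' {φ | Q' φ}).Finite := by
    intro h hh
    refine ((hBfin _ hh).biUnion (t := fun B => {x | Fn B ∧ cj x P ≤ B}) ?_).subset ?_
    · rintro _ ⟨φ, hφ, rfl⟩
      refine (tr_fin hP hPb (fn_map φ (fn_cj (g := h) hP))).subset fun x hx => hx.2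
    · rintro _ ⟨φ, hφ, rfl⟩
      refine mem_biUnion (x := (cj h P).map φ) ⟨φ, hφ, rfl⟩ ⟨fn_map φ (fn_cj hP), ?_⟩
      rw [cj_map, hφ.2]
  -- normalized endomorphisms fixing a given finite subset of `H`
  have fixW : ∀ W : Set G, W.Finite → W ⊆ H → ∃ φ, Q' φ ∧ ∀ w ∈ W, φ w = w := by
    intro W hW hWH
    let W' : Set G := W ∪ ⋃ h ∈ W, (fun φ : G →* G => φ h) '' {φ | Q' φ}
    have hW' : W'.Finite := hW.union (hW.biUnion fun h hh => hhfin h (hWH hh))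
    have hmaps : ∀ φ, Q' φ → ∀ w ∈ W', φ w ∈ W' := by
      rintro φ hφ w (hw | hw)
      · exact Or.inr (mem_biUnion hw ⟨φ, hφ, rfl⟩)
      · simp only [mem_iUnion] at hw
        obtain ⟨h, hh, ψ, hψ, rfl⟩ := hw
        exact Or.inr (mem_biUnion hh ⟨φ.comp ψ, hQ'c _ _ hψ hφ, rfl⟩)
    have : Finite W' := hW'
    have : Finite (Function.End W') := inferInstanceAs (Finite (W' → W'))
    let t : (G →* G) → Function.End W' := fun φ w =>
      if h : φ w ∈ W' then ⟨φ w, h⟩ else w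
    have tval : ∀ φ, Q' φ → ∀ w : W', (t φ w : G) = φ w := by
      intro φ hφ w
      simp only [t]
      rw [dif_pos (hmaps φ hφ w w.2)]
    obtain ⟨m, hmm, hm⟩ := stable Q' hQ'c t (by
      intro φ ψ h1 h2
      funext w
      apply Subtype.ext
      rw [tval _ (hQ'c _ _ h1 h2)]
      change _ = (t ψ (t φ w) : G)
      rw [tval ψ h2, tval φ h1]; rfl) hQ'a
    obtain ⟨φ, h1, h2, h3⟩ := hm (((hW'.inv.mul hW').toFinset).erase 1) (by simp)
    refine ⟨φ, h1, fun w hw => ?_⟩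
    have hw' : w ∈ W' := Or.inl hw
    have e1 := congrFun hmm ⟨w, hw'⟩
    rw [← h3] at e1
    have e2 : (t φ (t φ ⟨w, hw'⟩) : G) = t φ ⟨w, hw'⟩ := congrArg Subtype.val e1
    rw [tval φ h1, tval φ h1] at e2
    by_contra hne
    refine h2 (w⁻¹ * φ w) ?_ (by rw [map_mul, map_inv, e2, inv_mul_cancel])
    rw [Finset.mem_erase]
    refine ⟨fun h => hne (inv_mul_eq_one.1 h).symm, ?_⟩
    rw [Set.Finite.mem_toFinset]
    exact Set.mul_mem_mul (Set.inv_mem_inv.2 hw') (hmaps φ h1 w hw')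
  have step : ∀ A B, RT P A → Fn A → Fn B → Big (A ⊓ B) → RT P B := by
    intro A B hA hAF hBF hb
    obtain ⟨φ, hφ, hfix⟩ := fixW (A : Set G) hAF (hKH A hA)
    refine hA.tail ⟨hAF, hBF, ?_⟩
    rw [eb_iff φ hφ.1 _ (fn_mono inf_le_left hAF)]
    have : (A ⊓ B).map φ = A ⊓ B := by
      ext x
      constructor
      · rintro ⟨y, hy, rfl⟩
        rw [hfix y hy.1]; exact hy
      · intro hx
        exact ⟨x, hx, hfix x hx.1⟩
    rw [this]; exact hb
  have hall : ∀ g, g ∈ H := by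
    intro g
    rw [memH]
    have := Y.h2 P hP hPm g
    generalize cj g P = B at this ⊢
    induction this with
    | refl => exact .refl
    | tail _ h2 ih => exact step _ _ ih h2.1 h2.2.1 h2.2.2
  obtain ⟨T, hT⟩ := hfg.out
  obtain ⟨φ, hφ, hfix⟩ := fixW (T : Set G) T.finite_toSet (fun g _ => hall g)
  have hid : φ = MonoidHom.id G := MonoidHom.eq_of_eqOn_dense hT (fun x hx => hfix x hx)
  apply hQi φ hφ.1
  rw [hid]
  exact fun a b h => h

end Final
end VF

/-! ### Part 11 -/

namespace VF
open Set

theorem main_assembly {G : Type*} [Group G] (hfg : Group.FG G) (hvf : VirtuallyFree G)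
    (hco : CoHopfian G) (hout : OutFinite G) : StronglyCoHopfian G := by
  classical
  obtain ⟨H, hHfi, ⟨hHf⟩⟩ := hvf
  obtain ⟨F, hF⟩ : ∃ F, F = H.normalCore := ⟨_, rfl⟩
  have hFn : F.Normal := by rw [hF]; infer_instance
  have hFf : F.FiniteIndex := by rw [hF]; infer_instance
  have hFH : F ≤ H := by rw [hF]; exact H.normalCore_le
  have hK : IsFreeGroup (F.subgroupOf H) := inferInstance
  have e : F ≃* FreeGroup (IsFreeGroup.Generators (F.subgroupOf H)) :=
    (Subgroup.subgroupOfEquivOfLe hFH).symm.trans (IsFreeGroup.toFreeGroup _)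
  have tf : ∀ f ∈ F, f ≠ 1 → ¬ IsOfFinOrder f := by
    intro f hf hne hfin
    have h1 : IsOfFinOrder (⟨f, hf⟩ : F) := by
      exact (F.subtype_injective.isOfFinOrder_iff (f := F.subtype)).1 hfin
    have h2 : IsOfFinOrder (e ⟨f, hf⟩) := MonoidHom.isOfFinOrder e.toMonoidHom h1
    rw [isOfFinOrder_iff_eq_one] at h2
    have h3 : (⟨f, hf⟩ : F) = 1 := e.injective (h2.trans (map_one e).symm)
    exact hne (congrArg Subtype.val h3)
  by_cases hbot : ∃ f ∈ F, f ≠ 1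
  · obtain ⟨f, hf, hf1⟩ := hbot
    obtain ⟨N, hNn, hNf, hNF, hinj⟩ := inj_near F e
    obtain ⟨E, hE⟩ := exists_NF F e tf
    have X : Cx F N E :=
      { nf := hE, tf := tf, fn := hFn, ff := hFf, nn := hNn, nfi := hNf, nle := hNF
        tw := fun ψ h => ⟨hinj ψ h, hco ψ (hinj ψ h)⟩
        out := hout }
    obtain ⟨A, hA, _⟩ := hE.sep 1 f hf hf1
    exact final hfg hco (cx_hyp X ⟨A, hA⟩)
  · have hb : F = ⊥ := by
      rw [eq_bot_iff]
      intro x hx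
      by_contra h
      exact hbot ⟨x, hx, h⟩
    have hfin : Finite G := by
      rw [hb] at hFf
      have h := hFf.index_ne_zero
      rw [Subgroup.index_bot] at h
      exact Nat.finite_of_card_ne_zero h
    have := Fintype.ofFinite G
    refine ⟨Finset.univ.erase 1, by simp, fun φ h => ?_⟩
    have hi : Function.Injective φ := by
      rw [injective_iff_map_eq_one]
      intro a ha
      by_contra hne
      exact h a (by simp [hne]) ha
    exact ⟨hi, hco φ hi⟩

end VF

/-- A finitely generated co-Hopfian virtually free group with finite outer
automorphism group is strongly co-Hopfian. -/
theorem coHopfian_outFinite_stronglyCoHopfian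
    (G : Type*) [Group G] (hfg : Group.FG G) (hvf : VirtuallyFree G)
    (hco : CoHopfian G) (hout : OutFinite G) :
    StronglyCoHopfian G := by
  exact VF.main_assembly hfg hvf hco hout
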